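/- arXiv:2103.12008 — 2 statements merged into one kernel-verified Lean document; each statement's English description precedes it below -/
import Mathlib

section
/- If at least one of the rings S[ω], S[μ] is not integrally closed, then the integral closure R of S in K = L(ω,μ) is a free S-module (of rank p²). -/
/-- A height one prime ideal of a commutative ring. -/
def IsHeightOnePrime {S : Type*} [CommRing S] (P : Ideal S) : Prop :=
  ∃ hP : P.IsPrime, Order.height (⟨P, hP⟩ : PrimeSpectrum S) = 1

/-- `c ∈ S` is square free if `P S_P = c S_P` for every height one prime `P` containing `c`. -/
def PaperSquarefree {S : Type*} [CommRing S] (c : S) : Prop :=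
  ∀ (P : Ideal S) (hP : P.IsPrime), Order.height (⟨P, hP⟩ : PrimeSpectrum S) = 1 → c ∈ P →
    haveI := hP
    Ideal.map (algebraMap S (Localization.AtPrime P)) P =
      Ideal.span {algebraMap S (Localization.AtPrime P) c}

/-- Two elements satisfy `𝒜₁` if no height one prime contains both of them. -/
def SatisfiesA1 {S : Type*} [CommRing S] (f g : S) : Prop :=
  ∀ P : Ideal S, IsHeightOnePrime P → ¬(f ∈ P ∧ g ∈ P)

/-- The depth of a module over a local ring: the supremum of the lengths of
regular sequences on `M` contained in the maximal ideal. -/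
noncomputable def modDepth (S : Type*) [CommRing S] [IsLocalRing S]
    (M : Type*) [AddCommGroup M] [Module S M] : ℕ∞ :=
  sSup {n : ℕ∞ | ∃ rs : List S, (rs.length : ℕ∞) = n ∧
    (∀ r ∈ rs, r ∈ IsLocalRing.maximalIdeal S) ∧ RingTheory.Sequence.IsRegular M rs}

/-- A commutative ring is Cohen-Macaulay if each of its localizations at a prime
has depth equal to its Krull dimension. -/
def IsCMRing (R : Type*) [CommRing R] : Prop :=
  ∀ (Q : Ideal R) (hQ : Q.IsPrime),
    haveI := hQ
    (modDepth (Localization.AtPrime Q) (Localization.AtPrime Q) : WithBot ℕ∞) =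
      ringKrullDim (Localization.AtPrime Q)

/-- The `n`-th symbolic power of a prime ideal `P`, i.e. `Pⁿ A_P ∩ A`. -/
noncomputable def symbPow {A : Type*} [CommRing A] (P : Ideal A) (hP : P.IsPrime) (n : ℕ) :
    Ideal A :=
  haveI := hP
  Ideal.comap (algebraMap A (Localization.AtPrime P))
    (Ideal.map (algebraMap A (Localization.AtPrime P)) (P ^ n))

/-- `ω`, as an element of the subalgebra `A = S[ω,μ]`. -/
noncomputable def omegaA {S : Type*} [CommRing S] {K : Type*} [Field K] [Algebra S K]
    (ω μ : K) : Algebra.adjoin S ({ω, μ} : Set K) :=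
  ⟨ω, Algebra.subset_adjoin (Set.mem_insert _ _)⟩

/-- `μ`, as an element of the subalgebra `A = S[ω,μ]`. -/
noncomputable def muA {S : Type*} [CommRing S] {K : Type*} [Field K] [Algebra S K]
    (ω μ : K) : Algebra.adjoin S ({ω, μ} : Set K) :=
  ⟨μ, Algebra.subset_adjoin (Set.mem_insert_of_mem _ rfl)⟩

/-- The ideal `P = (p, ω−h₁, μ−h₂)` of `A = S[ω,μ]`. -/
noncomputable def Pid {S : Type*} [CommRing S] {K : Type*} [Field K] [Algebra S K]
    (p : ℕ) (ω μ : K) (h₁ h₂ : S) : Ideal (Algebra.adjoin S ({ω, μ} : Set K)) :=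
  Ideal.span {(p : Algebra.adjoin S ({ω, μ} : Set K)),
    omegaA ω μ - algebraMap S _ h₁, muA ω μ - algebraMap S _ h₂}

/-- The colon module `(A :_K N) = {x ∈ K : x·N ⊆ A}`, as an `S`-submodule of `K`. -/
noncomputable def colonSubmodule (S : Type*) [CommRing S] (K : Type*) [Field K] [Algebra S K]
    (A : Subalgebra S K) (N : Set K) : Submodule S K where
  carrier := {x : K | ∀ z ∈ N, x * z ∈ A}
  add_mem' := fun hx hy z hz => by
    simpa [add_mul] using add_mem (hx z hz) (hy z hz)
  zero_mem' := fun z hz => by simpa using A.zero_mem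
  smul_mem' := fun c x hx z hz => by
    rw [Algebra.smul_def, mul_assoc]
    exact mul_mem (A.algebraMap_mem c) (hx z hz)

/-- `M` admits a free resolution `0 → Sⁿ → Sᵐ → M → 0`; for a finitely generated
module over a Noetherian local ring this says exactly `pd_S(M) ≤ 1`. -/
def HasFreeResLengthLE1 (S : Type*) [CommRing S] (M : Type*) [AddCommGroup M] [Module S M] :
    Prop :=
  ∃ (n m : ℕ) (φ : (Fin n → S) →ₗ[S] (Fin m → S)) (ψ : (Fin m → S) →ₗ[S] M),
    Function.Injective φ ∧ Function.Surjective ψ ∧ LinearMap.range φ = LinearMap.ker ψ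

/-- The ideal `Q` contains an `S`-regular sequence of length three, i.e. `Q` has grade
(at least) three. -/
def ContainsRegSeq3 (S : Type*) [CommRing S] (Q : Ideal S) : Prop :=
  ∃ rs : List S, rs.length = 3 ∧ (∀ r ∈ rs, r ∈ Q) ∧ RingTheory.Sequence.IsRegular S rs


namespace Stmt0Aux

open Finset

theorem height_one_of {S : Type*} [CommRing S] [IsDomain S] [IsNoetherianRing S]
    (P : Ideal S) (hP : P.IsPrime) (q : S) (hq : q ∈ P) (hq0 : q ≠ 0)
    (hmin : ∀ Q : Ideal S, Q.IsPrime → q ∈ Q → Q ≤ P → P ≤ Q) :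
    Order.height (⟨P, hP⟩ : PrimeSpectrum S) = 1 := by
  have h1 : P ∈ (Ideal.span {q}).minimalPrimes := by
    refine ⟨⟨hP, by simpa [Ideal.span_le] using hq⟩, ?_⟩
    rintro Q ⟨hQ, hQq⟩ hQP
    exact hmin Q hQ (hQq (Ideal.mem_span_singleton_self q)) hQP
  have h2 := Ideal.height_le_one_of_isPrincipal_of_mem_minimalPrimes (Ideal.span {q}) P h1
  have h3 : P.height = Order.height (⟨P, hP⟩ : PrimeSpectrum S) :=
    (PrimeSpectrum.height_eq_orderHeight ⟨P, hP⟩)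
  rw [← h3]
  refine le_antisymm h2 ?_
  rw [Order.one_le_iff_ne_zero]
  intro h0
  rw [h3, Order.height_eq_zero] at h0
  have hb : (⟨⊥, Ideal.isPrime_bot⟩ : PrimeSpectrum S) ≤ ⟨P, hP⟩ := bot_le (a := P)
  have h4 := h0 hb
  have h5 : P ≤ ⊥ := h4
  exact hq0 (by simpa using h5 hq)

/-- the key structure for normal noetherian domains -/
theorem exists_good_prime {S : Type*} [CommRing S] [IsDomain S] [IsNoetherianRing S]
    [IsIntegrallyClosed S]
    {L : Type*} [Field L] [Algebra S L] [IsFractionRing S L] (d : L)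
    (hd : ¬ ∃ r, algebraMap S L r = d) :
    ∃ (P : Ideal S) (hP : P.IsPrime) (q e r : S), q ∈ P ∧ e ∉ P ∧ q ≠ 0 ∧
      algebraMap S L q * (algebraMap S L r * d) = algebraMap S L e ∧
      Order.height (⟨P, hP⟩ : PrimeSpectrum S) = 1 := by
  classical
  let I : S → Ideal S := fun r =>
    (LinearMap.range (Algebra.linearMap S L)).comap (LinearMap.toSpanSingleton S L (r • d))
  have hI : ∀ r s, s ∈ I r ↔ ∃ y, algebraMap S L y = algebraMap S L s * (algebraMap S L r * d) := by
    intro r s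
    simp only [I, Submodule.mem_comap, LinearMap.toSpanSingleton_apply, LinearMap.mem_range,
      Algebra.linearMap_apply, Algebra.smul_def]
  let T : Set (Ideal S) := {J | ∃ r, (¬ ∃ y, algebraMap S L y = algebraMap S L r * d) ∧ J = I r}
  have hT : T.Nonempty := ⟨I 1, 1, by simpa using hd, rfl⟩
  obtain ⟨P, ⟨r, hr, hPr⟩, hmax⟩ :=
    (set_has_maximal_iff_noetherian (R := S) (M := S)).mpr inferInstance T hT
  change Ideal S at P
  have hP : P.IsPrime := by
    constructor
    · intro h
      apply hr
      have : (1 : S) ∈ I r := by rw [← hPr, h]; trivial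
      obtain ⟨y, hy⟩ := (hI _ _).1 this
      exact ⟨y, by simpa using hy⟩
    · intro x y hxy
      by_contra hcon
      push Not at hcon
      obtain ⟨hx, hy⟩ := hcon
      have h1 : I (y * r) ∈ T := by
        refine ⟨y * r, ?_, rfl⟩
        rintro ⟨z, hz⟩
        apply hy
        rw [hPr, hI]
        exact ⟨z, by rw [hz, map_mul]; ring⟩
      have h2 : P ≤ I (y * r) := by
        intro s hs
        rw [hPr, hI] at hs
        obtain ⟨z, hz⟩ := hs
        rw [hI]
        exact ⟨y * z, by rw [map_mul, hz, map_mul]; ring⟩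
      have h3 : x ∈ I (y * r) := by
        rw [hPr, hI] at hxy
        obtain ⟨z, hz⟩ := hxy
        rw [hI]
        exact ⟨z, by rw [hz, map_mul, map_mul]; ring⟩
      rcases h2.lt_or_eq with h | h
      · exact hmax _ h1 h
      · exact hx (h ▸ h3)
  have hmem : ∀ s ∈ P, ∃ y, algebraMap S L y = algebraMap S L s * (algebraMap S L r * d) := by
    intro s hs; rw [hPr, hI] at hs; exact hs
  have hinj := IsFractionRing.injective S L
  have hPne : P ≠ ⊥ := by
    obtain ⟨n, m, hm, hnm⟩ := IsFractionRing.div_surjective (A := S) d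
    intro h
    have hm0 : m ≠ 0 := nonZeroDivisors.ne_zero hm
    have : m ∈ P := by
      rw [hPr, hI]
      refine ⟨r * n, ?_⟩
      have : algebraMap S L m ≠ 0 := by
        rw [Ne, map_eq_zero_iff _ hinj]; exact hm0
      rw [← hnm, map_mul]
      field_simp
    rw [h] at this
    exact hm0 (by simpa using this)
  have hex : ∃ q ∈ P, ∃ e, e ∉ P ∧ algebraMap S L e = algebraMap S L q * (algebraMap S L r * d) := by
    by_contra hcon
    push Not at hcon
    have hint : IsIntegral S (algebraMap S L r * d) := by
      refine isIntegral_of_smul_mem_submodule (M := L)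
        (Submodule.map (Algebra.linearMap S L) P) ?_ ?_ _ ?_
      · intro h
        apply hPne
        rw [eq_bot_iff]
        intro s hs
        have h1 : algebraMap S L s ∈ Submodule.map (Algebra.linearMap S L) P := ⟨s, hs, rfl⟩
        rw [h, Submodule.mem_bot, map_eq_zero_iff _ hinj] at h1
        exact h1
      · exact Submodule.FG.map _ ((isNoetherianRing_iff_ideal_fg S).1 inferInstance P)
      · rintro _ ⟨s, hs, rfl⟩
        obtain ⟨y, hy⟩ := hmem s hs
        refine ⟨y, ?_, ?_⟩
        · by_contra hyP
          exact hcon s hs y hyP hy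
        · simp only [Algebra.linearMap_apply, smul_eq_mul, hy]; ring
    exact hr (IsIntegrallyClosed.isIntegral_iff.1 hint)
  obtain ⟨q, hq, e, he, heq⟩ := hex
  have hq0 : q ≠ 0 := by
    rintro rfl
    rw [map_zero, zero_mul, map_eq_zero_iff _ hinj] at heq
    exact he (heq ▸ P.zero_mem)
  refine ⟨P, hP, q, e, r, hq, he, hq0, heq.symm, ?_⟩
  refine height_one_of P hP q hq hq0 ?_
  intro Q hQ hqQ hQP x hx
  obtain ⟨y, hy⟩ := hmem x hx
  have : e * x = q * y := by
    apply hinj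
    rw [map_mul, map_mul, heq, hy]; ring
  have h2 : e * x ∈ Q := this ▸ Q.mul_mem_right _ hqQ
  exact (hQ.mem_or_mem h2).resolve_left (fun h => he (hQP h))

theorem sqfree_use {S : Type*} [CommRing S] [IsDomain S] {c : S} (hc : PaperSquarefree c)
    (P : Ideal S) (hP : P.IsPrime) (hh : Order.height (⟨P, hP⟩ : PrimeSpectrum S) = 1)
    (hcP : c ∈ P) (q : S) (hq : q ∈ P) : ∃ u y, u ∉ P ∧ u * q = c * y := by
  have h := hc P hP hh hcP
  have h1 : algebraMap S (Localization.AtPrime P) q ∈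
      Ideal.span {algebraMap S (Localization.AtPrime P) c} := by
    rw [← h]; exact Ideal.mem_map_of_mem _ hq
  obtain ⟨z, hz⟩ := Ideal.mem_span_singleton'.1 h1
  obtain ⟨⟨y, u⟩, hyu⟩ := IsLocalization.surj P.primeCompl z
  refine ⟨u, y, u.2, ?_⟩
  have hinj : Function.Injective (algebraMap S (Localization.AtPrime P)) :=
    IsLocalization.injective _ P.primeCompl_le_nonZeroDivisors
  apply hinj
  simp only at hyu
  rw [map_mul, map_mul, ← hz, ← hyu]; ring

theorem not_sq_dvd {S : Type*} [CommRing S] [IsDomain S] [IsNoetherianRing S] {f π : S}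
    (hπ : Prime π) (hf : IsUnit f ∨ PaperSquarefree f) : ¬ π ^ 2 ∣ f := by
  rintro ⟨c, hc⟩
  rcases hf with hf | hf
  · have : π ∣ f := ⟨π * c, by rw [hc]; ring⟩
    exact hπ.not_isUnit (isUnit_of_dvd_unit this hf)
  · have hP : (Ideal.span {π}).IsPrime := (Ideal.span_singleton_prime hπ.ne_zero).2 hπ
    have hh := height_one_of _ hP π (Ideal.mem_span_singleton_self π) hπ.ne_zero
      (fun Q _ h _ => by simpa [Ideal.span_le] using h)
    obtain ⟨u, y, hu, huy⟩ := sqfree_use hf _ hP hh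
      (Ideal.mem_span_singleton.2 ⟨π * c, by rw [hc]; ring⟩) π (Ideal.mem_span_singleton_self π)
    apply hu
    rw [Ideal.mem_span_singleton]
    refine ⟨c * y, ?_⟩
    apply mul_right_cancel₀ hπ.ne_zero
    rw [huy, hc]; ring

theorem den_free {S : Type*} [CommRing S] [IsDomain S] [IsNoetherianRing S]
    [IsIntegrallyClosed S]
    {L : Type*} [Field L] [Algebra S L] [IsFractionRing S L] {p : ℕ} (hp0 : 0 < p) {f g : S}
    (hfg : (¬IsUnit f ∧ ¬IsUnit g ∧ PaperSquarefree f ∧ PaperSquarefree g ∧ SatisfiesA1 f g) ∨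
      (IsUnit f ∧ IsUnit g ∧ (∀ x : S, x ^ p ≠ f) ∧ (∀ x : S, x ^ p ≠ g)))
    (d : L) (i j : ℕ) (hi : i < p) (hj : j < p) (w : S)
    (hw : d ^ p * algebraMap S L f ^ i * algebraMap S L g ^ j = algebraMap S L w) :
    ∃ r, algebraMap S L r = d := by
  by_contra hd
  have hinj := IsFractionRing.injective S L
  obtain ⟨P, hP, q, e, r, hq, he, hq0, heq, hh⟩ := exists_good_prime d hd
  have key : e ^ p * f ^ i * g ^ j = q ^ p * r ^ p * w := by
    apply hinj
    simp only [map_mul, map_pow]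
    rw [← heq, ← hw]; ring
  have hqp : ∀ z, q ^ p * z ∈ P := fun z =>
    P.mul_mem_right _ (P.pow_mem_of_mem hq p hp0)
  have hep : e ^ p ∉ P := fun h => he (hP.mem_of_pow_mem _ h)
  have neither : ¬ (f ∉ P ∧ g ∉ P) := by
    rintro ⟨hf, hg⟩
    have : e ^ p * f ^ i * g ^ j ∈ P := by rw [key, mul_assoc]; exact hqp _
    rcases hP.mem_or_mem this with h | h
    · rcases hP.mem_or_mem h with h | h
      · exact hep h
      · exact hf (hP.mem_of_pow_mem _ h)
    · exact hg (hP.mem_of_pow_mem _ h)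
  have one : ∀ (f g : S) (i j : ℕ), i < p → PaperSquarefree f → f ∈ P → g ∉ P →
      e ^ p * f ^ i * g ^ j = q ^ p * r ^ p * w → False := by
    intro f g i j hi hsf hf hg key
    obtain ⟨u, y, hu, huy⟩ := sqfree_use hsf P hP hh hf q hq
    have hf0 : f ≠ 0 := by
      rintro rfl
      rw [zero_mul] at huy
      rcases mul_eq_zero.1 huy with h | h
      · exact hu (h ▸ P.zero_mem)
      · exact hq0 h
    have : u ^ p * e ^ p * g ^ j = f ^ (p - i) * (y ^ p * r ^ p * w) := by
      apply mul_left_cancel₀ (pow_ne_zero i hf0)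
      calc f ^ i * (u ^ p * e ^ p * g ^ j) = u ^ p * (e ^ p * f ^ i * g ^ j) := by ring
        _ = (u * q) ^ p * (r ^ p * w) := by rw [key]; ring
        _ = f ^ p * (y ^ p * r ^ p * w) := by rw [huy]; ring
        _ = f ^ (i + (p - i)) * (y ^ p * r ^ p * w) := by congr 2; omega
        _ = _ := by rw [pow_add]; ring
    have h2 : u ^ p * e ^ p * g ^ j ∈ P := by
      rw [this]
      exact P.mul_mem_right _ (P.pow_mem_of_mem hf _ (by omega))
    rcases hP.mem_or_mem h2 with h | h
    · rcases hP.mem_or_mem h with h | h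
      · exact hu (hP.mem_of_pow_mem _ h)
      · exact hep h
    · exact hg (hP.mem_of_pow_mem _ h)
  rcases hfg with ⟨-, -, hsf, hsg, hA⟩ | ⟨hf, hg, -, -⟩
  · have hA' := hA P ⟨hP, hh⟩
    by_cases hf : f ∈ P
    · have hg : g ∉ P := fun h => hA' ⟨hf, h⟩
      exact one f g i j hi hsf hf hg key
    · by_cases hg : g ∈ P
      · exact one g f j i hj hsg hg hf (by rw [← key]; ring)
      · exact neither ⟨hf, hg⟩
  · exact neither ⟨fun h => hP.ne_top (P.eq_top_of_isUnit_mem h hf),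
      fun h => hP.ne_top (P.eq_top_of_isUnit_mem h hg)⟩

theorem span_pow_top {L K : Type*} [Field L] [Field K] [Algebra L K] {p : ℕ} (hp : 0 < p)
    {x y : K} {F G : L} (hx : x ^ p = algebraMap L K F) (hy : y ^ p = algebraMap L K G)
    (hgen : Algebra.adjoin L ({x, y} : Set K) = ⊤) :
    (⊤ : Submodule L K) ≤
      Submodule.span L (Set.range fun ij : Fin p × Fin p => x ^ (ij.1 : ℕ) * y ^ (ij.2 : ℕ)) := by
  have h1 : (⊤ : Submodule L K) = Subalgebra.toSubmodule (Algebra.adjoin L ({x, y} : Set K)) := by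
    rw [hgen]; rfl
  rw [h1, Algebra.adjoin_eq_span, Submodule.span_le]
  intro z hz
  obtain ⟨m, n, rfl⟩ := (Submonoid.mem_closure_pair _ _ _).1 hz
  have e : x ^ m * y ^ n = (F ^ (m / p) * G ^ (n / p)) • (x ^ (m % p) * y ^ (n % p)) := by
    conv_lhs => rw [← Nat.div_add_mod m p, ← Nat.div_add_mod n p]
    rw [Algebra.smul_def, map_mul, map_pow, map_pow, ← hx, ← hy, pow_add, pow_add, pow_mul, pow_mul]
    ring
  rw [SetLike.mem_coe, e]
  exact Submodule.smul_mem _ _ (Submodule.subset_span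
    ⟨(⟨m % p, Nat.mod_lt _ hp⟩, ⟨n % p, Nat.mod_lt _ hp⟩), rfl⟩)

theorem shift_mem_span {R K : Type*} [CommRing R] [Field K] [Algebra R K] {p : ℕ}
    (t s : K) (h₁ h₂ : R) (i j : Fin p) :
    (t + algebraMap R K h₁) ^ (i : ℕ) * (s + algebraMap R K h₂) ^ (j : ℕ) ∈
      Submodule.span R (Set.range fun ij : Fin p × Fin p => t ^ (ij.1 : ℕ) * s ^ (ij.2 : ℕ)) := by
  rw [add_pow, add_pow, Finset.sum_mul_sum]
  refine Submodule.sum_mem _ fun k hk => Submodule.sum_mem _ fun l hl => ?_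
  have hk' := Finset.mem_range.1 hk
  have hl' := Finset.mem_range.1 hl
  have e : t ^ k * algebraMap R K h₁ ^ ((i : ℕ) - k) * ((i : ℕ).choose k : K) *
      (s ^ l * algebraMap R K h₂ ^ ((j : ℕ) - l) * ((j : ℕ).choose l : K)) =
      (h₁ ^ ((i : ℕ) - k) * ((i : ℕ).choose k : R) * (h₂ ^ ((j : ℕ) - l) * ((j : ℕ).choose l : R))) •
        (t ^ k * s ^ l) := by
    rw [Algebra.smul_def]
    simp only [map_mul, map_pow, map_natCast]
    ring
  rw [e]
  exact Submodule.smul_mem _ _ (Submodule.subset_span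
    ⟨(⟨k, by omega⟩, ⟨l, by omega⟩), rfl⟩)

section Trace

variable {S : Type*} [CommRing S] [IsDomain S] [IsNoetherianRing S] [IsIntegrallyClosed S]
    {L : Type*} [Field L] [CharZero L] [Algebra S L] [IsFractionRing S L]
    {K : Type*} [Field K] [Algebra L K] [Algebra S K] [IsScalarTower S L K]

theorem zpow_eq_smul {p : ℕ} (hp : 0 < p) {x y : K} {F G : L} (hx : x ^ p = algebraMap L K F)
    (hy : y ^ p = algebraMap L K G) (hx0 : x ≠ 0) (hy0 : y ≠ 0) (m n : ℤ) :
    ∃ (c : L) (k l : Fin p), x ^ m * y ^ n = c • (x ^ (k : ℕ) * y ^ (l : ℕ)) ∧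
      ((k : ℕ) : ℤ) = m % p ∧ ((l : ℕ) : ℤ) = n % p := by
  have hpz : (0 : ℤ) < p := by exact_mod_cast hp
  have aux : ∀ m : ℤ, ∃ k : Fin p, ((k : ℕ) : ℤ) = m % p := by
    intro m
    have h1 := Int.emod_nonneg m hpz.ne'
    have h2 := Int.emod_lt_of_pos m hpz
    refine ⟨⟨(m % p).toNat, by omega⟩, by simp [h1]⟩
  obtain ⟨k, hk⟩ := aux m
  obtain ⟨l, hl⟩ := aux n
  refine ⟨F ^ (m / p) * G ^ (n / p), k, l, ?_, hk, hl⟩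
  have e1 : ∀ (x : K) (F : L) (m : ℤ) (k : Fin p), x ≠ 0 → x ^ p = algebraMap L K F →
      ((k : ℕ) : ℤ) = m % p → x ^ m = algebraMap L K (F ^ (m / p)) * x ^ (k : ℕ) := by
    intro x F m k hx0 hx hk
    rw [map_zpow₀, ← hx, ← zpow_natCast x (k : ℕ), hk, ← zpow_natCast x p, ← zpow_mul,
      ← zpow_add₀ hx0, Int.mul_ediv_add_emod]
  rw [e1 x F m k hx0 hx hk, e1 y G n l hy0 hy hl, Algebra.smul_def, map_mul]
  ring

theorem trace_div {p : ℕ} (hp : 0 < p) {x y : K} {F G : L} (hx : x ^ p = algebraMap L K F)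
    (hy : y ^ p = algebraMap L K G) (hx0 : x ≠ 0) (hy0 : y ≠ 0)
    (B : Module.Basis (Fin p × Fin p) L K)
    (hB : ∀ ij, B ij = x ^ (ij.1 : ℕ) * y ^ (ij.2 : ℕ)) (a b : Fin p × Fin p) (hab : a ≠ b) :
    Algebra.trace L K (B a / B b) = 0 := by
  classical
  rw [Algebra.trace_eq_matrix_trace B, Matrix.trace]
  refine Finset.sum_eq_zero fun c _ => ?_
  rw [Matrix.diag_apply, Algebra.leftMulMatrix_eq_repr_mul]
  obtain ⟨r, k, l, hr, hk, hl⟩ := zpow_eq_smul hp hx hy hx0 hy0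
    ((a.1 : ℕ) - (b.1 : ℕ) + (c.1 : ℕ) : ℤ) ((a.2 : ℕ) - (b.2 : ℕ) + (c.2 : ℕ) : ℤ)
  have e : B a / B b * B c = r • B (k, l) := by
    rw [hB (k, l), ← hr, hB, hB, hB, zpow_add₀ hx0, zpow_sub₀ hx0, zpow_add₀ hy0, zpow_sub₀ hy0]
    simp only [zpow_natCast]
    field_simp
  rw [e, map_smul, Finsupp.smul_apply, B.repr_self, Finsupp.single_apply, if_neg, smul_zero]
  rintro rfl
  apply hab
  have aux : ∀ a b k : Fin p, ((k : ℕ) : ℤ) = ((a : ℕ) - (b : ℕ) + (k : ℕ) : ℤ) % p → a = b := by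
    intro a b k h
    have h1 : ((p : ℕ) : ℤ) ∣ (a : ℕ) - (b : ℕ) := by
      refine ⟨((a : ℕ) - (b : ℕ) + (k : ℕ) : ℤ) / p, ?_⟩
      have := Int.mul_ediv_add_emod ((a : ℕ) - (b : ℕ) + (k : ℕ) : ℤ) p
      linarith
    obtain ⟨z, hz⟩ := h1
    have ha := a.2
    have hb := b.2
    have : z = 0 := by
      by_contra hz0
      rcases lt_or_gt_of_ne hz0 with h | h
      · nlinarith
      · nlinarith
    rw [this] at hz
    ext; omega
  exact Prod.ext (aux _ _ _ hk) (aux _ _ _ hl)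

theorem trace_repr {p : ℕ} (hp : 0 < p) {x y : K} {F G : L} (hx : x ^ p = algebraMap L K F)
    (hy : y ^ p = algebraMap L K G) (hx0 : x ≠ 0) (hy0 : y ≠ 0)
    (hdeg : Module.finrank L K = p ^ 2)
    (B : Module.Basis (Fin p × Fin p) L K)
    (hB : ∀ ij, B ij = x ^ (ij.1 : ℕ) * y ^ (ij.2 : ℕ)) (z : K) (b : Fin p × Fin p) :
    Algebra.trace L K (z / B b) = (p : L) ^ 2 * B.repr z b := by
  classical
  conv_lhs => rw [← B.sum_repr z]
  rw [Finset.sum_div, map_sum, Finset.sum_eq_single b]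
  · have : (B.repr z b • B b) / B b = algebraMap L K (B.repr z b) := by
      rw [Algebra.smul_def, mul_div_assoc, div_self (B.ne_zero b), mul_one]
    rw [this, Algebra.trace_algebraMap, hdeg, nsmul_eq_mul]
    push_cast; ring
  · intro a _ hab
    rw [smul_div_assoc, map_smul, trace_div hp hx hy hx0 hy0 B hB a b hab, smul_zero]
  · simp

theorem coeff_bound {p : ℕ} (hp0 : 0 < p) {f g : S}
    (hfg : (¬IsUnit f ∧ ¬IsUnit g ∧ PaperSquarefree f ∧ PaperSquarefree g ∧ SatisfiesA1 f g) ∨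
      (IsUnit f ∧ IsUnit g ∧ (∀ x : S, x ^ p ≠ f) ∧ (∀ x : S, x ^ p ≠ g)))
    {ω μ : K} (hω : ω ^ p = algebraMap S K f) (hμ : μ ^ p = algebraMap S K g)
    (hω0 : ω ≠ 0) (hμ0 : μ ≠ 0)
    (hdeg : Module.finrank L K = p ^ 2)
    (B : Module.Basis (Fin p × Fin p) L K)
    (hB : ∀ ij, B ij = ω ^ (ij.1 : ℕ) * μ ^ (ij.2 : ℕ)) (x : K) (hx : IsIntegral S x)
    (b : Fin p × Fin p) : ∃ r : S, algebraMap S L r = (p : L) ^ 2 * B.repr x b := by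
  have hωL : ω ^ p = algebraMap L K (algebraMap S L f) := by
    rw [hω, IsScalarTower.algebraMap_apply S L K]
  have hμL : μ ^ p = algebraMap L K (algebraMap S L g) := by
    rw [hμ, IsScalarTower.algebraMap_apply S L K]
  have hfin : FiniteDimensional L K := Module.Finite.of_basis B
  have htr := trace_repr hp0 hωL hμL hω0 hμ0 hdeg B hB x b
  set d := (p : L) ^ 2 * B.repr x b with hd
  let Ω := AlgebraicClosure K
  have hsum := trace_eq_sum_embeddings (K := L) (L := K) Ω (x := x / B b)
  have hint : IsIntegral S (algebraMap L K d * B b) := by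
    have hinj : Function.Injective (IsScalarTower.toAlgHom S K Ω) :=
      (algebraMap K Ω).injective
    rw [← isIntegral_algHom_iff _ hinj]
    have e : IsScalarTower.toAlgHom S K Ω (algebraMap L K d * B b) =
        ∑ σ : K →ₐ[L] Ω, σ x * (algebraMap K Ω (B b) / σ (B b)) := by
      rw [IsScalarTower.coe_toAlgHom', map_mul, ← IsScalarTower.algebraMap_apply L K Ω, ← htr, hsum,
        Finset.sum_mul]
      refine Finset.sum_congr rfl fun σ _ => ?_
      rw [map_div₀]; ring
    rw [e]
    refine IsIntegral.sum _ fun σ _ => ?_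
    refine IsIntegral.mul (hx.map (σ.restrictScalars S)) ?_
    refine IsIntegral.of_pow hp0 ?_
    have e2 : (algebraMap K Ω (B b) / σ (B b)) ^ p = 1 := by
      have h0 : σ (B b) ≠ 0 := by
        exact (map_ne_zero σ).2 (B.ne_zero b)
      have hBp : (B b) ^ p = algebraMap L K
          (algebraMap S L f ^ (b.1 : ℕ) * algebraMap S L g ^ (b.2 : ℕ)) := by
        rw [hB, map_mul, map_pow, map_pow, ← hωL, ← hμL]; ring
      rw [div_pow, div_eq_one_iff_eq (pow_ne_zero _ h0), ← map_pow (algebraMap K Ω), ← map_pow σ,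
        hBp, ← IsScalarTower.algebraMap_apply, AlgHom.commutes]
    rw [e2]
    exact isIntegral_one
  have hint2 := hint.pow p
  have e3 : (algebraMap L K d * B b) ^ p = algebraMap L K
      (d ^ p * algebraMap S L f ^ (b.1 : ℕ) * algebraMap S L g ^ (b.2 : ℕ)) := by
    rw [hB]
    simp only [map_mul, map_pow]
    rw [← hωL, ← hμL]; ring
  rw [e3, isIntegral_algebraMap_iff (algebraMap L K).injective] at hint2
  obtain ⟨w, hw⟩ := IsIntegrallyClosed.isIntegral_iff.1 hint2
  exact den_free hp0 hfg d b.1 b.2 b.1.2 b.2.2 w hw.symm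

end Trace

theorem exists_val {S Ω : Type*} [CommRing S] [IsDomain S] [Field Ω] [Algebra S Ω]
    (hinj : Function.Injective (algebraMap S Ω)) (π : S) (hπ : Prime π) :
    ∃ O : ValuationSubring Ω, (∀ x, IsIntegral S x → O.valuation x ≤ 1) ∧
      ∀ c : S, O.valuation (algebraMap S Ω c) < 1 ↔ π ∣ c := by
  have hP : (Ideal.span {π}).IsPrime := (Ideal.span_singleton_prime hπ.ne_zero).2 hπ
  let P := Ideal.span {π}
  have hu : ∀ y : P.primeCompl, IsUnit (algebraMap S Ω y) := by
    intro y
    rw [isUnit_iff_ne_zero, Ne, map_eq_zero_iff _ hinj]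
    intro h
    exact y.2 (h ▸ P.zero_mem)
  let φ : Localization.AtPrime P →+* Ω := IsLocalization.lift hu
  have hφ : ∀ c : S, φ (algebraMap S _ c) = algebraMap S Ω c := fun c => IsLocalization.lift_eq hu c
  obtain ⟨O, h, hloc⟩ := IsLocalRing.exists_factor_valuationRing φ
  have hS : ∀ c : S, algebraMap S Ω c ∈ O := fun c => hφ c ▸ h _
  refine ⟨O, ?_, ?_⟩
  · intro x hx
    rw [ValuationSubring.valuation_le_one_iff]
    let ψ : S →+* O := (algebraMap S Ω).codRestrict O.toSubring hS
    have hx2 : IsIntegral O x := by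
      obtain ⟨q, hq, hq2⟩ := hx
      refine ⟨q.map ψ, hq.map ψ, ?_⟩
      rw [Polynomial.eval₂_map]
      exact hq2
    obtain ⟨y, hy⟩ := IsIntegrallyClosed.isIntegral_iff.1 hx2
    rw [← hy]
    exact y.2
  · intro c
    have h1 := O.valuation_lt_one_iff ⟨algebraMap S Ω c, hS c⟩
    have e : (φ.codRestrict O.toSubring h) (algebraMap S _ c) = ⟨algebraMap S Ω c, hS c⟩ :=
      Subtype.ext (hφ c)
    have h2 : (⟨algebraMap S Ω c, hS c⟩ : O) ∈ IsLocalRing.maximalIdeal O ↔ π ∣ c := by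
      rw [IsLocalRing.mem_maximalIdeal, mem_nonunits_iff]
      have h3 : IsUnit (⟨algebraMap S Ω c, hS c⟩ : O) ↔
          IsUnit (algebraMap S (Localization.AtPrime P) c) := by
        constructor
        · intro hc
          have := hloc.map_nonunit (algebraMap S (Localization.AtPrime P) c)
          apply this
          rw [e]; exact hc
        · intro hc
          have := hc.map (φ.codRestrict O.toSubring h)
          rw [e] at this; exact this
      rw [h3, IsLocalization.AtPrime.isUnit_to_map_iff (Localization.AtPrime P) P]
      change ¬ ¬ (c ∈ P) ↔ _
      rw [not_not, Ideal.mem_span_singleton]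
    rw [← h2, h1]

section Val

variable {S Ω Γ : Type*} [CommRing S] [Field Ω] [Algebra S Ω] [LinearOrderedCommGroupWithZero Γ]

theorem dvl (v : Valuation Ω Γ) (π : S)
    (hvS : ∀ c : S, v (algebraMap S Ω c) ≤ 1)
    (hvπ : ∀ c : S, v (algebraMap S Ω c) < 1 ↔ π ∣ c)
    {ι : Type*} [Fintype ι] (c : ι → S) (b : ι → Ω) (D : Set ι) (ρ : Γ) (N : ℕ) (e : ι → ℕ)
    (hρ0 : 0 < ρ) (hρ : ρ < 1) (hsum : v (∑ i, algebraMap S Ω (c i) * b i) ≤ ρ ^ N)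
    (hπN : v (algebraMap S Ω π) ≤ ρ ^ N)
    (hb : ∀ i, v (b i) ≤ 1) (hD : ∀ i ∈ D, v (b i) = ρ ^ e i ∧ e i < N)
    (hinj : ∀ i ∈ D, ∀ j ∈ D, e i = e j → i = j)
    (hout : ∀ i, i ∉ D → π ∣ c i ∨ v (b i) ≤ ρ ^ N) : ∀ i ∈ D, π ∣ c i := by
  classical
  by_contra hcon
  push Not at hcon
  obtain ⟨i1, hi1, hi1'⟩ := hcon
  obtain ⟨i0, hi0, hmin⟩ := Finset.exists_min_image (univ.filter fun i => i ∈ D ∧ ¬ π ∣ c i) e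
    ⟨i1, by simp [hi1, hi1']⟩
  simp only [mem_filter, mem_univ, true_and] at hi0 hmin
  have hpw : ∀ m n : ℕ, m < n → ρ ^ n < ρ ^ m := fun m n h => pow_lt_pow_right_of_lt_one₀ hρ0 hρ h
  have hN : ρ ^ N < ρ ^ e i0 := hpw _ _ (hD i0 hi0.1).2
  have hπdvd : ∀ i, π ∣ c i → v (algebraMap S Ω (c i) * b i) ≤ ρ ^ N := by
    rintro i ⟨z, hz⟩
    rw [hz, map_mul, map_mul, map_mul, mul_assoc]
    exact (mul_le_of_le_one_right' (mul_le_one' (hvS z) (hb i))).trans hπN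
  have h0 : v (algebraMap S Ω (c i0) * b i0) = ρ ^ e i0 := by
    have : v (algebraMap S Ω (c i0)) = 1 :=
      le_antisymm (hvS _) (not_lt.1 fun h => hi0.2 ((hvπ _).1 h))
    rw [map_mul, this, one_mul, (hD i0 hi0.1).1]
  have hlt : v (∑ i ∈ univ.erase i0, algebraMap S Ω (c i) * b i) < ρ ^ e i0 := by
    refine Valuation.map_sum_lt _ (pow_pos hρ0 _).ne' ?_
    intro i hi
    have hne : i ≠ i0 := (Finset.mem_erase.1 hi).1
    by_cases hpc : π ∣ c i
    · exact (hπdvd i hpc).trans_lt hN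
    · have hle : v (algebraMap S Ω (c i) * b i) ≤ v (b i) := by
        rw [map_mul]; exact mul_le_of_le_one_left' (hvS _)
      by_cases hiD : i ∈ D
      · refine hle.trans_lt ?_
        rw [(hD i hiD).1]
        apply hpw
        exact lt_of_le_of_ne (hmin i ⟨hiD, hpc⟩) fun h => hne (hinj _ hiD _ hi0.1 h.symm)
      · exact (hle.trans ((hout i hiD).resolve_left hpc)).trans_lt hN
  rw [← Finset.add_sum_erase _ _ (Finset.mem_univ i0), Valuation.map_add_eq_of_lt_left v
    (by rw [h0]; exact hlt), h0] at hsum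
  exact absurd hN (not_lt.2 hsum)

end Val

theorem add_pow_expand {R : Type*} [CommRing R] {p : ℕ} (hp : p.Prime) (t h : R) :
    ∃ q, (t + h) ^ p = t ^ p + h ^ p + p * (t * (h ^ (p - 1) + t * q)) := by
  have h2 := hp.two_le
  have h1 : ∑ k ∈ Ioo 0 p, t ^ (k - 1) * h ^ (p - k - 1) * ((p.choose k / p : ℕ) : R) =
      h ^ (p - 2) +
        t * ∑ k ∈ Ioo 1 p, t ^ (k - 2) * h ^ (p - k - 1) * ((p.choose k / p : ℕ) : R) := by
    have : Ioo 0 p = insert 1 (Ioo 1 p) := by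
      ext k; simp only [mem_Ioo, mem_insert]; omega
    rw [this, Finset.sum_insert (by simp), Finset.mul_sum]
    congr 1
    · simp [Nat.div_self hp.pos, Nat.sub_sub]
    · refine Finset.sum_congr rfl fun k hk => ?_
      have hk' := mem_Ioo.1 hk
      have : k - 1 = (k - 2) + 1 := by omega
      rw [this, pow_succ]
      ring
  refine ⟨h * ∑ k ∈ Ioo 1 p, t ^ (k - 2) * h ^ (p - k - 1) * ((p.choose k / p : ℕ) : R), ?_⟩
  have h3 : h ^ (p - 1) = h * h ^ (p - 2) := by rw [← pow_succ']; congr 1; omega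
  rw [add_pow_prime_eq hp, h1, h3]
  ring

theorem add_pow_expand_int {S Ω : Type*} [CommRing S] [Field Ω] [Algebra S Ω] {p : ℕ}
    (hp : p.Prime) (t h : Ω) (ht : IsIntegral S t) (hh : IsIntegral S h) :
    ∃ q, IsIntegral S q ∧
      (t + h) ^ p = t ^ p + h ^ p + p * (t * (h ^ (p - 1) + t * q)) := by
  obtain ⟨q, hq⟩ := add_pow_expand hp (⟨t, ht⟩ : integralClosure S Ω) ⟨h, hh⟩
  exact ⟨q, q.2, by simpa using congrArg Subtype.val hq⟩

section Roots

variable {S Ω Γ : Type*} [CommRing S] [Field Ω] [Algebra S Ω] [LinearOrderedCommGroupWithZero Γ]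
  {p : ℕ} (hp : p.Prime) (hp3 : 3 ≤ p) (hp0 : (p : Ω) ≠ 0) (v : Valuation Ω Γ)
  (hvi : ∀ x, IsIntegral S x → v x ≤ 1)
  (hvp : ∀ c : S, v (algebraMap S Ω c) < 1 ↔ (p : S) ∣ c)

include hp hp0 hvi hvp

theorem v_p_lt : v (p : Ω) < 1 := by
  have := (hvp (p : S)).2 dvd_rfl
  simpa using this

theorem v_eq_one (c : S) (hc : ¬ (p : S) ∣ c) : v (algebraMap S Ω c) = 1 :=
  le_antisymm (hvi _ isIntegral_algebraMap) (not_lt.1 fun h => hc ((hvp _).1 h))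

theorem root1 (t : Ω) (ht : IsIntegral S t) (h a : S) (ha : ¬ (p : S) ∣ a)
    (he : (t + algebraMap S Ω h) ^ p = algebraMap S Ω (h ^ p + a * p)) :
    v t ^ p = v (p : Ω) := by
  obtain ⟨q, hq, hq2⟩ := add_pow_expand_int hp t _ ht (isIntegral_algebraMap (x := h))
  have hπ := v_p_lt hp hp0 v hvi hvp
  have hπ0 : 0 < v (p : Ω) := zero_lt_iff.2 ((Valuation.ne_zero_iff v).2 hp0)
  set w := algebraMap S Ω h ^ (p - 1) + t * q
  have hw : v w ≤ 1 := hvi _ ((isIntegral_algebraMap.pow _).add (ht.mul hq))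
  have e : t ^ p = p * (algebraMap S Ω a - t * w) := by
    rw [hq2] at he
    simp only [map_add, map_mul, map_pow, map_natCast] at he
    linear_combination he
  have hle : v t ^ p ≤ v (p : Ω) := by
    rw [← map_pow, e, map_mul]
    refine mul_le_of_le_one_right' (hvi _ ?_)
    exact isIntegral_algebraMap.sub (ht.mul ((isIntegral_algebraMap.pow _).add (ht.mul hq)))
  have hlt : v t < 1 := by
    by_contra hcon
    have := one_le_pow_of_one_le' (not_lt.1 hcon) p
    exact absurd (this.trans hle) (not_le.2 hπ)
  have h1 : v (algebraMap S Ω a - t * w) = 1 := by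
    have ha1 := v_eq_one hp hp0 v hvi hvp a ha
    rw [Valuation.map_sub_eq_of_lt_left, ha1]
    rw [ha1, map_mul]
    exact (mul_le_of_le_one_right' hw).trans_lt hlt
  rw [← map_pow, e, map_mul, h1, mul_one]

theorem root2_aux (t : Ω) (ht : IsIntegral S t) (h a : S) (hh : ¬ (p : S) ∣ h)
    (he : (t + algebraMap S Ω h) ^ p = algebraMap S Ω (h ^ p + a * p ^ 2)) :
    ∃ w, v w = 1 ∧ v t < 1 ∧ t ^ p = p * (algebraMap S Ω a * p - t * w) := by
  obtain ⟨q, hq, hq2⟩ := add_pow_expand_int hp t _ ht (isIntegral_algebraMap (x := h))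
  have hπ := v_p_lt hp hp0 v hvi hvp
  set w := algebraMap S Ω h ^ (p - 1) + t * q with hw
  have hwi : IsIntegral S w := (isIntegral_algebraMap.pow _).add (ht.mul hq)
  have e : t ^ p = p * (algebraMap S Ω a * p - t * w) := by
    rw [hq2] at he
    simp only [map_add, map_mul, map_pow, map_natCast] at he
    linear_combination he
  have hlt : v t < 1 := by
    by_contra hcon
    have := one_le_pow_of_one_le' (not_lt.1 hcon) p
    have hle : v t ^ p ≤ v (p : Ω) := by
      rw [← map_pow, e, map_mul]
      refine mul_le_of_le_one_right' (hvi _ ?_)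
      refine (isIntegral_algebraMap.mul ?_).sub (ht.mul hwi)
      simpa using isIntegral_algebraMap (R := S) (A := Ω) (x := (p : S))
    exact absurd (this.trans hle) (not_le.2 hπ)
  refine ⟨w, ?_, hlt, e⟩
  have hh1 : v (algebraMap S Ω h ^ (p - 1)) = 1 := by
    rw [map_pow, v_eq_one hp hp0 v hvi hvp h hh, one_pow]
  rw [hw, Valuation.map_add_eq_of_lt_left, hh1]
  rw [hh1, map_mul]
  exact (mul_le_of_le_one_right' (hvi _ hq)).trans_lt hlt

theorem root2 (t : Ω) (ht : IsIntegral S t) (h a : S) (hh : ¬ (p : S) ∣ h)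
    (he : (t + algebraMap S Ω h) ^ p = algebraMap S Ω (h ^ p + a * p ^ 2)) :
    v t ≤ v (p : Ω) ∨ v t ^ (p - 1) = v (p : Ω) := by
  obtain ⟨w, hw, hlt, e⟩ := root2_aux hp hp0 v hvi hvp t ht h a hh he
  by_cases hc : v t ≤ v (p : Ω)
  · exact Or.inl hc
  right
  rw [not_le] at hc
  have ht0 : v t ≠ 0 := (lt_of_le_of_lt zero_le hc).ne'
  have h1 : v (algebraMap S Ω a * p - t * w) = v t := by
    rw [Valuation.map_sub_eq_of_lt_right, map_mul, hw, mul_one]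
    rw [map_mul, map_mul, hw, mul_one]
    exact (mul_le_of_le_one_left' (hvi _ isIntegral_algebraMap)).trans_lt hc
  have h2 : v t ^ p = v (p : Ω) * v t := by rw [← map_pow, e, map_mul, h1]
  have h3 : v t ^ p = v t ^ (p - 1) * v t := by
    rw [← pow_succ]; congr 1; have := hp.pos; omega
  rw [h3] at h2
  exact mul_right_cancel₀ ht0 h2

theorem root_one (η : Ω) (hη : η ^ p = 1) (hη1 : η ≠ 1) : v (η - 1) ^ (p - 1) = v (p : Ω) := by
  have hηi : IsIntegral S η := IsIntegral.of_pow hp.pos (by rw [hη]; exact isIntegral_one)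
  have h1 : ¬ (p : S) ∣ 1 := by
    rw [← hvp]; simp
  obtain ⟨w, hw, hlt, e⟩ := root2_aux hp hp0 v hvi hvp (η - 1) (hηi.sub isIntegral_one) 1 0 h1
    (by simp [hη])
  have ht0 : v (η - 1) ≠ 0 := (Valuation.ne_zero_iff v).2 (sub_ne_zero.2 hη1)
  have h2 : v (η - 1) ^ p = v (p : Ω) * v (η - 1) := by
    rw [← map_pow, e, map_zero, zero_mul, zero_sub, map_mul, Valuation.map_neg, map_mul, hw, mul_one]
  have h3 : v (η - 1) ^ p = v (η - 1) ^ (p - 1) * v (η - 1) := by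
    rw [← pow_succ]; congr 1; have := hp.pos; omega
  rw [h3] at h2
  exact mul_right_cancel₀ ht0 h2

include hp3

theorem exists_root [IsAlgClosed Ω] {ζ : Ω} (hζ : IsPrimitiveRoot ζ p) (h a : S)
    (hh : ¬ (p : S) ∣ h) :
    ∃ w : Ω, w ^ p = algebraMap S Ω (h ^ p + a * p ^ 2) ∧ v (w - algebraMap S Ω h) ≤ v (p : Ω) := by
  obtain ⟨w, hw⟩ := IsAlgClosed.exists_pow_nat_eq (algebraMap S Ω (h ^ p + a * p ^ 2)) hp.pos
  have hπ := v_p_lt hp hp0 v hvi hvp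
  have hπ0 : 0 < v (p : Ω) := zero_lt_iff.2 ((Valuation.ne_zero_iff v).2 hp0)
  by_contra hcon
  push Not at hcon
  have hall : ∀ η ∈ Polynomial.nthRootsFinset p (1 : Ω),
      v (algebraMap S Ω h - η * w) ^ (p - 1) = v (p : Ω) := by
    intro η hη
    have hη1 : η ^ p = 1 := (Polynomial.mem_nthRootsFinset hp.pos _).1 hη
    have e : (η * w) ^ p = algebraMap S Ω (h ^ p + a * p ^ 2) := by rw [mul_pow, hη1, one_mul, hw]
    have hi : IsIntegral S (η * w) := IsIntegral.of_pow hp.pos (by rw [e]; exact isIntegral_algebraMap)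
    rw [Valuation.map_sub_swap]
    refine (root2 hp hp0 v hvi hvp _ (hi.sub isIntegral_algebraMap) h a hh
      (by rw [sub_add_cancel, e])).resolve_left ?_
    exact not_le.2 (hcon _ e)
  have hprod := congrArg v (hζ.pow_sub_pow_eq_prod_sub_mul (algebraMap S Ω h) w hp.pos)
  rw [hw, map_prod] at hprod
  have h1 : v (algebraMap S Ω h ^ p - algebraMap S Ω (h ^ p + a * p ^ 2)) ≤ v (p : Ω) ^ 2 := by
    have : algebraMap S Ω h ^ p - algebraMap S Ω (h ^ p + a * p ^ 2) =
        - (algebraMap S Ω a * p ^ 2) := by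
      simp only [map_add, map_mul, map_pow, map_natCast]; ring
    rw [this, Valuation.map_neg, map_mul, map_pow]
    exact mul_le_of_le_one_left' (hvi _ isIntegral_algebraMap)
  have h2 : (∏ η ∈ Polynomial.nthRootsFinset p (1 : Ω), v (algebraMap S Ω h - η * w)) ^ (p - 1) =
      v (p : Ω) ^ p := by
    rw [← Finset.prod_pow, Finset.prod_congr rfl hall, Finset.prod_const, hζ.card_nthRootsFinset]
  have h3 := pow_le_pow_left' h1 (p - 1)
  rw [hprod, h2, ← pow_mul] at h3
  have h4 : v (p : Ω) ^ (2 * (p - 1)) < v (p : Ω) ^ p :=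
    pow_lt_pow_right_of_lt_one₀ hπ0 hπ (by omega)
  exact absurd h3 (not_le.2 h4)

theorem p_lt_lam {η : Ω} (hη : η ^ p = 1) (hη1 : η ≠ 1) : v (p : Ω) < v (η - 1) := by
  have h := root_one hp hp0 v hvi hvp η hη hη1
  have hπ := v_p_lt hp hp0 v hvi hvp
  have ht0 : 0 < v (η - 1) := zero_lt_iff.2 ((Valuation.ne_zero_iff v).2 (sub_ne_zero.2 hη1))
  rw [← h] at hπ ⊢
  have hlt : v (η - 1) < 1 := by
    by_contra hcon
    exact absurd (one_le_pow_of_one_le' (not_lt.1 hcon) (p - 1)) (not_le.2 hπ)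
  calc v (η - 1) ^ (p - 1) < v (η - 1) ^ 1 :=
        pow_lt_pow_right_of_lt_one₀ ht0 hlt (by omega)
    _ = _ := pow_one _

theorem exists_root' [IsAlgClosed Ω] {ζ : Ω} (hζ : IsPrimitiveRoot ζ p) (h a : S)
    (hh : ¬ (p : S) ∣ h) :
    ∃ w : Ω, w ^ p = algebraMap S Ω (h ^ p + a * p ^ 2) ∧
      v (w - algebraMap S Ω h) ^ (p - 1) = v (p : Ω) := by
  obtain ⟨w, hw, hw1⟩ := exists_root hp hp3 hp0 v hvi hvp hζ h a hh
  have hζ1 : ζ ≠ 1 := hζ.ne_one (by omega)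
  refine ⟨ζ * w, by rw [mul_pow, hw, hζ.pow_eq_one, one_mul], ?_⟩
  have hπ := v_p_lt hp hp0 v hvi hvp
  have hvw : v w = 1 := by
    have e : w = (w - algebraMap S Ω h) + algebraMap S Ω h := by ring
    have h1 := v_eq_one hp hp0 v hvi hvp h hh
    rw [e, Valuation.map_add_eq_of_lt_right, h1]
    rw [h1]
    exact hw1.trans_lt hπ
  have hl := p_lt_lam hp hp3 hp0 v hvi hvp hζ.pow_eq_one hζ1
  have : v (ζ * w - algebraMap S Ω h) = v (ζ - 1) := by
    have e : ζ * w - algebraMap S Ω h = (ζ - 1) * w + (w - algebraMap S Ω h) := by ring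
    rw [e, Valuation.map_add_eq_of_lt_left, map_mul, hvw, mul_one]
    rw [map_mul, hvw, mul_one]
    exact hw1.trans_lt hl
  rw [this]
  exact root_one hp hp0 v hvi hvp ζ hζ.pow_eq_one hζ1

end Roots

theorem exists_embedding {L K Ω : Type*} [Field L] [CharZero L] [Field K] [Algebra L K] [Field Ω]
    [Algebra L Ω] [IsAlgClosed Ω] {p : ℕ} (hp : 0 < p) {ω μ : K} {F G : L}
    (hω : ω ^ p = algebraMap L K F) (hμ : μ ^ p = algebraMap L K G)
    (hgen : Algebra.adjoin L ({ω, μ} : Set K) = ⊤) (hdeg : Module.finrank L K = p ^ 2)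
    (x y : Ω) (hx : x ^ p = algebraMap L Ω F) (hy : y ^ p = algebraMap L Ω G) :
    ∃ σ : K →ₐ[L] Ω, σ ω = x ∧ σ μ = y := by
  classical
  have : FiniteDimensional L K := Module.finite_of_finrank_pos (by rw [hdeg]; positivity)
  have hcard : Fintype.card (K →ₐ[L] Ω) = p ^ 2 := by rw [AlgHom.card, hdeg]
  let X := (Polynomial.nthRoots p (algebraMap L Ω F)).toFinset
  let Y := (Polynomial.nthRoots p (algebraMap L Ω G)).toFinset
  have memX : ∀ z, z ∈ X ↔ z ^ p = algebraMap L Ω F := by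
    intro z; simp [X, Polynomial.mem_nthRoots hp]
  have memY : ∀ z, z ∈ Y ↔ z ^ p = algebraMap L Ω G := by
    intro z; simp [Y, Polynomial.mem_nthRoots hp]
  have cX : X.card ≤ p := (Multiset.toFinset_card_le _).trans (Polynomial.card_nthRoots _ _)
  have cY : Y.card ≤ p := (Multiset.toFinset_card_le _).trans (Polynomial.card_nthRoots _ _)
  let φ : (K →ₐ[L] Ω) → X × Y := fun σ =>
    (⟨σ ω, (memX _).2 (by rw [← map_pow, hω, AlgHom.commutes])⟩,
     ⟨σ μ, (memY _).2 (by rw [← map_pow, hμ, AlgHom.commutes])⟩)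
  have hφ : Function.Injective φ := by
    intro σ τ h
    refine AlgHom.ext_of_adjoin_eq_top hgen ?_
    have h1 : σ ω = τ ω := congrArg (fun z => (z.1 : Ω)) h
    have h2 : σ μ = τ μ := congrArg (fun z => (z.2 : Ω)) h
    rintro z (rfl | hz)
    · exact h1
    · rw [Set.mem_singleton_iff] at hz; subst hz; exact h2
  have hb : Function.Surjective φ := by
    have : Fintype.card (K →ₐ[L] Ω) = Fintype.card (X × Y) := by
      apply le_antisymm (Fintype.card_le_of_injective φ hφ)
      rw [hcard, Fintype.card_prod, Fintype.card_coe, Fintype.card_coe, sq]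
      exact Nat.mul_le_mul cX cY
    exact ((Fintype.bijective_iff_injective_and_card φ).2 ⟨hφ, this⟩).2
  obtain ⟨σ, hσ⟩ := hb (⟨x, (memX _).2 hx⟩, ⟨y, (memY _).2 hy⟩)
  exact ⟨σ, congrArg (fun z => (z.1 : Ω)) hσ, congrArg (fun z => (z.2 : Ω)) hσ⟩

theorem descent {S K ι : Type*} [CommRing S] [Field K] [Algebra S K] [Fintype ι] (b : ι → K)
    (q : S) (hq : algebraMap S K q ≠ 0)
    (key : ∀ (c : ι → S) (y : K), IsIntegral S y →
      ∑ i, algebraMap S K (c i) * b i = algebraMap S K q * y → ∀ i, q ∣ c i)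
    (n : ℕ) : ∀ (x : K), IsIntegral S x →
      algebraMap S K q ^ n * x ∈ Submodule.span S (Set.range b) →
      x ∈ Submodule.span S (Set.range b) := by
  induction n with
  | zero => intro x _ h; simpa using h
  | succ n ih =>
    intro x hx h
    have hy : IsIntegral S (algebraMap S K q ^ n * x) := (isIntegral_algebraMap.pow n).mul hx
    refine ih x hx ?_
    obtain ⟨c, hc⟩ := (Submodule.mem_span_range_iff_exists_fun S).1 h
    have h2 := key c _ hy (by
      simp only [Algebra.smul_def] at hc
      rw [hc]; ring)
    choose d hd using h2
    refine (Submodule.mem_span_range_iff_exists_fun S).2 ⟨d, ?_⟩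
    apply mul_left_cancel₀ hq
    rw [← mul_assoc, ← pow_succ', ← hc, Finset.mul_sum]
    refine Finset.sum_congr rfl fun i _ => ?_
    rw [hd i, Algebra.smul_def, Algebra.smul_def, map_mul, mul_assoc]

theorem free_of_basis {S K : Type*} [CommRing S] [IsDomain S] [Field K] [Algebra S K] {p : ℕ}
    (b : Fin p × Fin p → K) (hint : ∀ ij, IsIntegral S (b ij)) (hli : LinearIndependent S b)
    (hspan : ∀ x, IsIntegral S x → x ∈ Submodule.span S (Set.range b)) :
    Module.Free S (integralClosure S K) ∧
      Module.finrank S (integralClosure S K) = p ^ 2 := by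
  let b' : Fin p × Fin p → integralClosure S K := fun ij => ⟨b ij, hint ij⟩
  have hcomp : b = (integralClosure S K).val.toLinearMap ∘ b' := by ext ij; rfl
  have hli' : LinearIndependent S b' := by
    rw [hcomp] at hli
    exact LinearIndependent.of_comp _ hli
  have hsp : ⊤ ≤ Submodule.span S (Set.range b') := by
    rintro ⟨x, hx⟩ _
    obtain ⟨c, hc⟩ := (Submodule.mem_span_range_iff_exists_fun S).1 (hspan x hx)
    refine (Submodule.mem_span_range_iff_exists_fun S).2 ⟨c, ?_⟩
    apply Subtype.ext
    refine Eq.trans ?_ hc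
    push_cast
    rfl
  let B := Module.Basis.mk hli' hsp
  refine ⟨Module.Free.of_basis B, ?_⟩
  rw [Module.finrank_eq_card_basis B]
  simp [sq]

section Main

variable {S : Type*} [CommRing S] [IsDomain S] [IsNoetherianRing S] [IsIntegrallyClosed S]
    {L : Type*} [Field L] [CharZero L] [Algebra S L] [IsFractionRing S L]
    {K : Type*} [Field K] [Algebra L K] [Algebra S K] [IsScalarTower S L K]

theorem exists_basis {p : ℕ} (hp : 0 < p) {x y : K} {F G : L} (hx : x ^ p = algebraMap L K F)
    (hy : y ^ p = algebraMap L K G)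
    (hgen : Algebra.adjoin L ({x, y} : Set K) = ⊤) (hdeg : Module.finrank L K = p ^ 2) :
    ∃ B : Module.Basis (Fin p × Fin p) L K, ∀ ij, B ij = x ^ (ij.1 : ℕ) * y ^ (ij.2 : ℕ) := by
  have h := span_pow_top hp hx hy hgen
  refine ⟨basisOfTopLeSpanOfCardEqFinrank _ h (by simp [hdeg, sq]), fun ij => ?_⟩
  simp

theorem mem_span_pow {p : ℕ} (hp : 2 ≤ p) {f g : S} (h₁ h₂ : S)
    (hfg : (¬IsUnit f ∧ ¬IsUnit g ∧ PaperSquarefree f ∧ PaperSquarefree g ∧ SatisfiesA1 f g) ∨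
      (IsUnit f ∧ IsUnit g ∧ (∀ x : S, x ^ p ≠ f) ∧ (∀ x : S, x ^ p ≠ g)))
    {ω μ : K} (hω : ω ^ p = algebraMap S K f) (hμ : μ ^ p = algebraMap S K g)
    (hKgen : Algebra.adjoin L ({ω, μ} : Set K) = ⊤)
    (hdeg : Module.finrank L K = p ^ 2) (x : K) (hx : IsIntegral S x) :
    algebraMap S K p ^ 2 * x ∈ Submodule.span S (Set.range fun ij : Fin p × Fin p =>
      (ω - algebraMap S K h₁) ^ (ij.1 : ℕ) * (μ - algebraMap S K h₂) ^ (ij.2 : ℕ)) ∧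
    (x ∈ Algebra.adjoin L ({ω} : Set K) →
      algebraMap S K p ^ 2 * x ∈ Submodule.span S (Set.range fun i : Fin p =>
      (ω - algebraMap S K h₁) ^ (i : ℕ))) := by
  have hp0 : 0 < p := by omega
  have hωL : ω ^ p = algebraMap L K (algebraMap S L f) := by
    rw [hω, IsScalarTower.algebraMap_apply S L K]
  have hμL : μ ^ p = algebraMap L K (algebraMap S L g) := by
    rw [hμ, IsScalarTower.algebraMap_apply S L K]
  obtain ⟨B, hB⟩ := exists_basis hp0 hωL hμL hKgen hdeg
  have hω0 : ω ≠ 0 := by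
    have := B.ne_zero (⟨1, by omega⟩, ⟨0, by omega⟩)
    rw [hB] at this
    simpa using this
  have hμ0 : μ ≠ 0 := by
    have := B.ne_zero (⟨0, by omega⟩, ⟨1, by omega⟩)
    rw [hB] at this
    simpa using this
  have hc := fun b => coeff_bound hp0 hfg hω hμ hω0 hμ0 hdeg B hB x hx b
  choose r hr using hc
  have hsum : algebraMap S K p ^ 2 * x = ∑ ij, r ij • (ω ^ (ij.1 : ℕ) * μ ^ (ij.2 : ℕ)) := by
    conv_lhs => rw [← B.sum_repr x]
    rw [Finset.mul_sum]
    refine Finset.sum_congr rfl fun ij _ => ?_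
    rw [hB, Algebra.smul_def, Algebra.smul_def, IsScalarTower.algebraMap_apply S L K (r ij), hr,
      map_mul]
    simp
    ring
  constructor
  · rw [hsum]
    refine Submodule.sum_mem _ fun ij _ => Submodule.smul_mem _ _ ?_
    have := shift_mem_span (ω - algebraMap S K h₁) (μ - algebraMap S K h₂) h₁ h₂ ij.1 ij.2
    simpa using this
  · intro hxω
    have hx0 : ∀ ij : Fin p × Fin p, (ij.2 : ℕ) ≠ 0 → B.repr x ij = 0 := by
      intro ij hij
      have hsub : Algebra.adjoin L ({ω} : Set K) ≤ Algebra.adjoin L ({ω} : Set K) := le_rfl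
      have h1 : x ∈ Submodule.span L (Submonoid.closure ({ω} : Set K) : Set K) := by
        rw [← Algebra.adjoin_eq_span]; exact hxω
      refine Submodule.span_induction (p := fun x _ => B.repr x ij = 0) ?_ ?_ ?_ ?_ h1
      · intro z hz
        obtain ⟨m, rfl⟩ := Submonoid.mem_closure_singleton.1 hz
        have e : ω ^ m = (algebraMap S L f ^ (m / p)) •
            B (⟨m % p, Nat.mod_lt _ hp0⟩, ⟨0, hp0⟩) := by
          rw [hB, Algebra.smul_def, map_pow, ← hωL, ← pow_mul]
          simp only [pow_zero, mul_one]
          rw [← pow_add, Nat.div_add_mod]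
        rw [e, map_smul, Finsupp.smul_apply, B.repr_self, Finsupp.single_apply, if_neg, smul_zero]
        intro h
        apply hij
        rw [← h]
      · simp
      · intro u v _ _ hu hv; rw [map_add, Finsupp.add_apply, hu, hv, add_zero]
      · intro c u _ hu; rw [map_smul, Finsupp.smul_apply, hu, smul_zero]
    rw [hsum]
    refine Submodule.sum_mem _ fun ij _ => ?_
    by_cases hij : (ij.2 : ℕ) = 0
    · refine Submodule.smul_mem _ _ ?_
      have := shift_mem_span (ω - algebraMap S K h₁) 0 h₁ 0 ij.1 ij.2
      rw [hij] at this ⊢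
      simp only [sub_add_cancel, pow_zero, mul_one] at this ⊢
      refine Submodule.span_le.2 ?_ this
      rintro _ ⟨kl, rfl⟩
      by_cases hl : (kl.2 : ℕ) = 0
      · simp only [hl, pow_zero, mul_one]
        exact Submodule.subset_span ⟨kl.1, rfl⟩
      · simp [zero_pow hl]
    · have h0 := hr ij
      rw [hx0 ij hij, mul_zero] at h0
      have : r ij = 0 := (IsFractionRing.injective S L) (by rw [h0, map_zero])
      rw [this, zero_smul]
      exact zero_mem _

end Main

section Main

variable {S : Type*} [CommRing S] [IsDomain S] [IsNoetherianRing S] [IsIntegrallyClosed S]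
    {L : Type*} [Field L] [CharZero L] [Algebra S L] [IsFractionRing S L]
    {K : Type*} [Field K] [Algebra L K] [Algebra S K] [IsScalarTower S L K]

theorem inj_SK (S L K : Type*) [CommRing S] [IsDomain S] [Field L] [Algebra S L]
    [IsFractionRing S L] [Field K] [Algebra L K] [Algebra S K] [IsScalarTower S L K] :
    Function.Injective (algebraMap S K) := by
  rw [IsScalarTower.algebraMap_eq S L K]
  exact (algebraMap L K).injective.comp (IsFractionRing.injective S L)

/-- main assembly -/
theorem final_of_key {p : ℕ} (hp : 2 ≤ p) (hpS : Prime ((p : ℕ) : S)) {f g : S} (h₁ h₂ : S)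
    (hfg : (¬IsUnit f ∧ ¬IsUnit g ∧ PaperSquarefree f ∧ PaperSquarefree g ∧ SatisfiesA1 f g) ∨
      (IsUnit f ∧ IsUnit g ∧ (∀ x : S, x ^ p ≠ f) ∧ (∀ x : S, x ^ p ≠ g)))
    {ω μ : K} (hω : ω ^ p = algebraMap S K f) (hμ : μ ^ p = algebraMap S K g)
    (hKgen : Algebra.adjoin L ({ω, μ} : Set K) = ⊤)
    (hdeg : Module.finrank L K = p ^ 2) (k : Fin p × Fin p → ℕ)
    (b : Fin p × Fin p → K)
    (hb : ∀ ij, b ij * algebraMap S K p ^ k ij =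
      (ω - algebraMap S K h₁) ^ (ij.1 : ℕ) * (μ - algebraMap S K h₂) ^ (ij.2 : ℕ))
    (hint : ∀ ij, IsIntegral S (b ij))
    (key : ∀ (c : Fin p × Fin p → S) (y : K), IsIntegral S y →
      ∑ i, algebraMap S K (c i) * b i = algebraMap S K p * y → ∀ i, (p : S) ∣ c i) :
    Module.Free S (integralClosure S K) ∧
      Module.finrank S (integralClosure S K) = p ^ 2 := by
  have hp0 : 0 < p := by omega
  have hinj := inj_SK S L K
  have hpK : algebraMap S K p ≠ 0 := by
    rw [Ne, map_eq_zero_iff _ hinj]; exact hpS.ne_zero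
  have hωL : ω ^ p = algebraMap L K (algebraMap S L f) := by
    rw [hω, IsScalarTower.algebraMap_apply S L K]
  have hμL : μ ^ p = algebraMap L K (algebraMap S L g) := by
    rw [hμ, IsScalarTower.algebraMap_apply S L K]
  refine free_of_basis b hint ?_ ?_
  · apply LinearIndependent.restrict_scalars (K := L) (R := S)
    · intro x y h
      simp only [Algebra.smul_def, mul_one] at h
      exact IsFractionRing.injective S L h
    · refine linearIndependent_of_top_le_span_of_card_eq_finrank ?_ (by simp [hdeg, sq])
      refine (span_pow_top hp0 hωL hμL hKgen).trans (Submodule.span_le.2 ?_)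
      rintro _ ⟨ij, rfl⟩
      have h1 := shift_mem_span (R := L) (ω - algebraMap S K h₁) (μ - algebraMap S K h₂)
        (algebraMap S L h₁) (algebraMap S L h₂) ij.1 ij.2
      rw [← IsScalarTower.algebraMap_apply, ← IsScalarTower.algebraMap_apply] at h1
      simp only [sub_add_cancel] at h1
      refine Submodule.span_le.2 ?_ h1
      rintro _ ⟨kl, rfl⟩
      have : (ω - algebraMap S K h₁) ^ (kl.1 : ℕ) * (μ - algebraMap S K h₂) ^ (kl.2 : ℕ) =
        ((p : L) ^ k kl) • b kl := by
        rw [← hb, Algebra.smul_def]; simp [mul_comm]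
      simp only [this]
      exact Submodule.smul_mem _ _ (Submodule.subset_span ⟨kl, rfl⟩)
  · intro x hx
    refine descent b (p : S) hpK key 2 x hx ?_
    refine Submodule.span_le.2 ?_ (mem_span_pow hp h₁ h₂ hfg hω hμ hKgen hdeg x hx).1
    rintro _ ⟨kl, rfl⟩
    have : (ω - algebraMap S K h₁) ^ (kl.1 : ℕ) * (μ - algebraMap S K h₂) ^ (kl.2 : ℕ) =
        ((p : S) ^ k kl) • b kl := by
        rw [← hb, Algebra.smul_def]; simp [mul_comm]
    simp only [this]
    exact Submodule.smul_mem _ _ (Submodule.subset_span ⟨kl, rfl⟩)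

theorem intClosed_of_main [FiniteDimensional L K] {ω : K} (hωi : IsIntegral S ω)
    (main : ∀ z : K, IsIntegral S z → z ∈ Algebra.adjoin L ({ω} : Set K) →
      z ∈ Algebra.adjoin S ({ω} : Set K)) :
    IsIntegrallyClosed (Algebra.adjoin S ({ω} : Set K)) := by
  set A := Algebra.adjoin S ({ω} : Set K) with hA
  have hAi : ∀ z : K, z ∈ A → IsIntegral S z := by
    intro z hz
    exact (Algebra.adjoin_le (S := integralClosure S K) (Set.singleton_subset_iff.2 hωi)) hz
  have hAE : ∀ z : K, z ∈ A → z ∈ Algebra.adjoin L ({ω} : Set K) := by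
    intro z hz
    induction hz using Algebra.adjoin_induction with
    | mem x hx => exact Algebra.subset_adjoin hx
    | algebraMap r =>
      rw [IsScalarTower.algebraMap_apply S L K]
      exact Subalgebra.algebraMap_mem _ _
    | add x y _ _ hx hy => exact add_mem hx hy
    | mul x y _ _ hx hy => exact mul_mem hx hy
  rw [isIntegrallyClosed_iff (FractionRing A)]
  intro x hx
  let φ : FractionRing A →+* K := IsFractionRing.lift (A := A) (K := FractionRing A)
    (g := algebraMap A K) Subtype.val_injective
  have hφ : ∀ y : A, φ (algebraMap A _ y) = y := fun y => IsFractionRing.lift_algebraMap _ y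
  have hφx : IsIntegral S (φ x) := by
    have h1 : IsIntegral A (φ x) := by
      have := hx.map_of_comp_eq (RingHom.id A) φ (by
        ext y; simp [hφ])
      exact this
    have : Algebra.IsIntegral S A := ⟨fun y => by
      have := hAi y y.2
      rw [← isIntegral_algHom_iff A.val Subtype.val_injective]
      exact this⟩
    exact isIntegral_trans _ h1
  have hφE : φ x ∈ Algebra.adjoin L ({ω} : Set K) := by
    obtain ⟨n, d, hd, rfl⟩ := IsFractionRing.div_surjective (A := A) x
    rw [map_div₀, hφ, hφ, div_eq_mul_inv]
    refine mul_mem (hAE _ n.2) ?_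
    exact Subalgebra.inv_mem_of_algebraic (x := ⟨(d : K), hAE _ d.2⟩) _
      (Algebra.IsAlgebraic.isAlgebraic _)
  refine ⟨⟨φ x, main _ hφx hφE⟩, ?_⟩
  apply φ.injective
  rw [hφ]

theorem intClosed_of_not_dvd {p : ℕ} (hp : p.Prime) (hp3 : 3 ≤ p) (hpS : Prime ((p : ℕ) : S))
    {f g h₁ a : S} (hf : f = h₁ ^ p + a * (p : S)) (ha : ¬ (p : S) ∣ a)
    (hfg : (¬IsUnit f ∧ ¬IsUnit g ∧ PaperSquarefree f ∧ PaperSquarefree g ∧ SatisfiesA1 f g) ∨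
      (IsUnit f ∧ IsUnit g ∧ (∀ x : S, x ^ p ≠ f) ∧ (∀ x : S, x ^ p ≠ g)))
    {ω μ : K} (hω : ω ^ p = algebraMap S K f) (hμ : μ ^ p = algebraMap S K g)
    (hKgen : Algebra.adjoin L ({ω, μ} : Set K) = ⊤)
    (hdeg : Module.finrank L K = p ^ 2) :
    IsIntegrallyClosed (Algebra.adjoin S ({ω} : Set K)) := by
  have hinj := inj_SK S L K
  have hpK : algebraMap S K p ≠ 0 := by
    rw [Ne, map_eq_zero_iff _ hinj]; exact hpS.ne_zero
  have : FiniteDimensional L K := Module.finite_of_finrank_pos (by rw [hdeg]; have := hp.pos; positivity)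
  have hωi : IsIntegral S ω := IsIntegral.of_pow hp.pos (hω ▸ isIntegral_algebraMap)
  let Ω := AlgebraicClosure K
  have hinjΩ : Function.Injective (algebraMap S Ω) := by
    rw [IsScalarTower.algebraMap_eq S K Ω]
    exact (algebraMap K Ω).injective.comp hinj
  obtain ⟨O, hvi, hvp⟩ := exists_val hinjΩ (p : S) hpS
  have hpΩ : (p : Ω) ≠ 0 := by
    intro h
    apply hpS.ne_zero
    apply hinjΩ
    rw [map_natCast, h, map_zero]
  set t := ω - algebraMap S K h₁ with ht
  have hti : IsIntegral S t := hωi.sub isIntegral_algebraMap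
  have htΩ : IsIntegral S (algebraMap K Ω t) := hti.map (IsScalarTower.toAlgHom S K Ω)
  have hv := root1 hp hpΩ O.valuation hvi hvp (algebraMap K Ω t) htΩ h₁ a ha (by
    rw [← hf, IsScalarTower.algebraMap_apply S K Ω, IsScalarTower.algebraMap_apply S K Ω, ← map_add,
      ← map_pow, ← hω, ht, sub_add_cancel])
  have hπ := v_p_lt hp hpΩ O.valuation hvi hvp
  have hπ0 : 0 < O.valuation (p : Ω) := zero_lt_iff.2 ((Valuation.ne_zero_iff _).2 hpΩ)
  set ρ := O.valuation (algebraMap K Ω t) with hρ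
  have hρ1 : ρ < 1 := by
    by_contra hcon
    exact absurd (one_le_pow_of_one_le' (not_lt.1 hcon) p) (not_le.2 (hv ▸ hπ))
  have hρ0 : 0 < ρ := by
    refine zero_lt_iff.2 fun h => ?_
    rw [h, zero_pow hp.ne_zero] at hv
    exact hπ0.ne hv
  have key : ∀ (c : Fin p → S) (y : K), IsIntegral S y →
      ∑ i, algebraMap S K (c i) * t ^ (i : ℕ) = algebraMap S K p * y → ∀ i, (p : S) ∣ c i := by
    intro c y hy hs i
    refine dvl O.valuation (p : S) (fun c => hvi _ isIntegral_algebraMap) hvp c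
      (fun i => algebraMap K Ω t ^ (i : ℕ)) Set.univ ρ p (fun i => (i : ℕ)) hρ0 hρ1 ?_ ?_ ?_ ?_ ?_ ?_ i
      trivial
    · have : ∑ i, algebraMap S Ω (c i) * algebraMap K Ω t ^ (i : ℕ) =
          (p : Ω) * algebraMap K Ω y := by
        have := congrArg (algebraMap K Ω) hs
        simp only [map_sum, map_mul, map_pow, ← IsScalarTower.algebraMap_apply, map_natCast] at this
        exact this
      rw [this, map_mul, hv]
      exact mul_le_of_le_one_right' (hvi _ (hy.map (IsScalarTower.toAlgHom S K Ω)))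
    · rw [map_natCast, hv]
    · intro i; exact hvi _ (htΩ.pow _)
    · intro i _; exact ⟨by rw [map_pow], i.2⟩
    · intro i _ j _ h; exact Fin.ext h
    · intro i hi; exact absurd trivial hi
  set A := Algebra.adjoin S ({ω} : Set K) with hA
  have hωA : ω ∈ A := Algebra.subset_adjoin rfl
  have main : ∀ z : K, IsIntegral S z → z ∈ Algebra.adjoin L ({ω} : Set K) → z ∈ A := by
    intro z hz hzE
    have h1 := descent (fun i : Fin p => t ^ (i : ℕ)) (p : S) hpK key 2 z hz
      ((mem_span_pow hp.two_le h₁ 0 hfg hω hμ hKgen hdeg z hz).2 hzE)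
    have h2 : Submodule.span S (Set.range fun i : Fin p => t ^ (i : ℕ)) ≤
        Subalgebra.toSubmodule A := by
      refine Submodule.span_le.2 ?_
      rintro _ ⟨i, rfl⟩
      exact pow_mem (sub_mem hωA (A.algebraMap_mem _)) _
    exact h2 h1
  exact intClosed_of_main hωi main

end Main

theorem int_of_pow {S K : Type*} [CommRing S] [Field K] [Algebra S K] (P x y : K) (hP : IsIntegral S P)
    (hP0 : P ≠ 0) (hx : IsIntegral S x) {n m N : ℕ} (hn : 0 < n) (hm : m ≤ N)
    (h : y ^ n * P ^ m = P ^ N * x) : IsIntegral S y := by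
  refine IsIntegral.of_pow hn ?_
  have : y ^ n = P ^ (N - m) * x := by
    apply mul_right_cancel₀ (pow_ne_zero m hP0)
    rw [h]
    have : N = (N - m) + m := by omega
    conv_lhs => rw [this, pow_add]
    ring
  rw [this]
  exact (hP.pow _).mul hx

theorem tau_int {S K : Type*} [CommRing S] [Field K] [Algebra S K] {p : ℕ} (hp : p.Prime)
    (hpK : (p : K) ≠ 0) (t : K) (ht : IsIntegral S t) (h a : S)
    (he : (t + algebraMap S K h) ^ p = algebraMap S K (h ^ p + a * p ^ 2)) :
    ∃ τ, IsIntegral S τ ∧ t ^ (p - 1) = p * τ := by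
  obtain ⟨q, hq, hq2⟩ := add_pow_expand_int hp t _ ht (isIntegral_algebraMap (x := h))
  set w := algebraMap S K h ^ (p - 1) + t * q with hw
  have hwi : IsIntegral S w := (isIntegral_algebraMap.pow _).add (ht.mul hq)
  have e : t ^ p = p * (algebraMap S K a * p - t * w) := by
    rw [hq2] at he
    simp only [map_add, map_mul, map_pow, map_natCast] at he
    linear_combination he
  refine ⟨t ^ (p - 1) / p, ?_, by field_simp⟩
  set τ := t ^ (p - 1) / p with hτ
  have h1 : t ^ (p - 1) = p * τ := by rw [hτ]; field_simp
  have h2 : τ ^ 2 + w * τ = t ^ (p - 2) * algebraMap S K a := by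
    have h3 : t ^ (p - 1) * t ^ (p - 1) = t ^ (p - 2) * t ^ p := by
      rw [← pow_add, ← pow_add]; congr 1; have := hp.two_le; omega
    have h4 : t ^ (p - 2) * t = t ^ (p - 1) := by
      rw [← pow_succ]; congr 1; have := hp.two_le; omega
    rw [e] at h3
    have h5 : t ^ (p - 2) * (p * (algebraMap S K a * p - t * w)) =
      p ^ 2 * (t ^ (p - 2) * algebraMap S K a) - p * w * (t ^ (p - 2) * t) := by ring
    rw [h5, h4, h1] at h3
    apply mul_left_cancel₀ (pow_ne_zero 2 hpK)
    linear_combination h3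
  let C := integralClosure S K
  have hi : IsIntegral C τ := by
    refine ⟨Polynomial.X ^ 2 + Polynomial.C (⟨w, hwi⟩ : C) * Polynomial.X -
      Polynomial.C (⟨t ^ (p - 2) * algebraMap S K a, (ht.pow _).mul isIntegral_algebraMap⟩ : C),
      ?_, ?_⟩
    · monicity!
    · simp only [Polynomial.eval₂_sub, Polynomial.eval₂_add, Polynomial.eval₂_mul,
        Polynomial.eval₂_C, Polynomial.eval₂_X, Polynomial.eval₂_X_pow]
      change τ ^ 2 + w * τ - t ^ (p - 2) * algebraMap S K a = 0
      rw [h2, sub_self]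
  exact isIntegral_trans _ hi

theorem sig_int {S K : Type*} [CommRing S] [Field K] [Algebra S K] {p : ℕ} (hp : p.Prime)
    (t : K) (ht : IsIntegral S t) (h a : S)
    (he : (t + algebraMap S K h) ^ p = algebraMap S K (h ^ p + a * p)) :
    ∃ τ, IsIntegral S τ ∧ t ^ p = p * τ := by
  obtain ⟨q, hq, hq2⟩ := add_pow_expand_int hp t _ ht (isIntegral_algebraMap (x := h))
  refine ⟨algebraMap S K a - t * (algebraMap S K h ^ (p - 1) + t * q),
    isIntegral_algebraMap.sub (ht.mul ((isIntegral_algebraMap.pow _).add (ht.mul hq))), ?_⟩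
  rw [hq2] at he
  simp only [map_add, map_mul, map_pow, map_natCast] at he
  linear_combination he

theorem k2_arith {p i j : ℕ} (hp3 : 3 ≤ p) (hi : i < p) (hj : j < p) :
    (p * i + (p - 1) * j) / (p * (p - 1)) ≤ 1 ∧
    (i = 0 → (p * i + (p - 1) * j) / (p * (p - 1)) = 0) ∧
    (i = 1 → (p * i + (p - 1) * j) / (p * (p - 1)) = 1 → j = p - 1) := by
  obtain ⟨q, rfl⟩ : ∃ q, p = q + 1 := ⟨p - 1, by omega⟩
  simp only [Nat.add_sub_cancel]
  have hi' : i ≤ q := by omega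
  have hj' : j ≤ q := by omega
  refine ⟨?_, ?_, ?_⟩
  · apply Nat.le_of_lt_succ
    apply Nat.div_lt_of_lt_mul
    nlinarith
  · rintro rfl
    apply Nat.div_eq_of_lt
    nlinarith
  · rintro rfl h
    have h1 : (q + 1) * q ≤ (q + 1) * 1 + q * j := by
      have := Nat.div_mul_le_self ((q + 1) * 1 + q * j) ((q + 1) * q)
      rw [h] at this
      linarith
    by_contra hcon
    have : j + 1 ≤ q := by omega
    nlinarith

theorem e2_inj {p i j i' j' : ℕ} (hp3 : 3 ≤ p) (hi : i < p) (hj : j < p) (hi' : i' < p) (hj' : j' < p)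
    (h1 : 1 ≤ i) (h1' : 1 ≤ i')
    (h : (p * i + (p - 1) * j) % (p * (p - 1)) = (p * i' + (p - 1) * j') % (p * (p - 1))) :
    i = i' ∧ j = j' := by
  obtain ⟨q, rfl⟩ : ∃ q, p = q + 1 := ⟨p - 1, by omega⟩
  simp only [Nat.add_sub_cancel] at h
  have hm : (q + 1) * i + q * j ≡ (q + 1) * i' + q * j' [MOD (q + 1) * q] := h
  have a1 : (q + 1) * i + q * j ≡ (q + 1) * i' + q * j' [MOD q] := hm.of_mul_left _
  have a2 : (q + 1) * i + q * j ≡ (q + 1) * i' + q * j' [MOD q + 1] := hm.of_mul_right _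
  have b1 : i ≡ i' [MOD q] := by
    have e : ∀ i j, (q + 1) * i + q * j ≡ i [MOD q] := by
      intro i j
      have : (q + 1) * i + q * j = i + q * (i + j) := by ring
      rw [this]
      exact Nat.modEq_iff_dvd.2 ⟨-(i + j), by push_cast; ring⟩
    exact ((e i j).symm.trans a1).trans (e i' j')
  have b2 : j ≡ j' [MOD q + 1] := by
    have e : ∀ i j, (q + 1) * i + q * j + j ≡ 0 [MOD q + 1] := by
      intro i j
      have : (q + 1) * i + q * j + j = (q + 1) * (i + j) := by ring
      rw [this]
      exact (Nat.modEq_zero_iff_dvd.2 ⟨_, rfl⟩)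
    have h3 := (e i j).trans (e i' j').symm
    exact Nat.ModEq.add_left_cancel a2 h3
  constructor
  · have := Nat.modEq_iff_dvd.1 b1
    have hq : (0 : ℤ) < q := by omega
    have h5 := Int.eq_zero_of_abs_lt_dvd this (by rw [abs_lt]; constructor <;> omega)
    omega
  · exact Nat.ModEq.eq_of_lt_of_lt b2 hj hj'

theorem case2_val {S Ω Γ : Type*} [CommRing S] [Field Ω] [Algebra S Ω]
    [LinearOrderedCommGroupWithZero Γ] (v : Valuation Ω Γ) {p : ℕ} (hp3 : 3 ≤ p)
    (hvS : ∀ c : S, v (algebraMap S Ω c) ≤ 1)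
    (hvπ : ∀ c : S, v (algebraMap S Ω c) < 1 ↔ (p : S) ∣ c)
    (c : Fin p × Fin p → S) (β₁ β₂ : Fin p × Fin p → Ω)
    (T₁ S₁ T₂ S₂ : Γ) (hP0 : 0 < v (p : Ω)) (hP1 : v (p : Ω) < 1)
    (hT₁ : T₁ ≤ v (p : Ω)) (hS₁ : S₁ ^ p = v (p : Ω))
    (hT₂ : T₂ ^ (p - 1) = v (p : Ω)) (hS₂ : S₂ ^ p = v (p : Ω))
    (hs₁ : v (∑ i, algebraMap S Ω (c i) * β₁ i) ≤ v (p : Ω))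
    (hs₂ : v (∑ i, algebraMap S Ω (c i) * β₂ i) ≤ v (p : Ω))
    (hb₁ : ∀ i, v (β₁ i) ≤ 1) (hb₂ : ∀ i, v (β₂ i) ≤ 1)
    (h₁ : ∀ i : Fin p × Fin p, v (β₁ i) *
      v (p : Ω) ^ ((p * (i.1 : ℕ) + (p - 1) * (i.2 : ℕ)) / (p * (p - 1))) =
        T₁ ^ (i.1 : ℕ) * S₁ ^ (i.2 : ℕ))
    (h₂ : ∀ i : Fin p × Fin p, v (β₂ i) *
      v (p : Ω) ^ ((p * (i.1 : ℕ) + (p - 1) * (i.2 : ℕ)) / (p * (p - 1))) =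
        T₂ ^ (i.1 : ℕ) * S₂ ^ (i.2 : ℕ)) : ∀ i, (p : S) ∣ c i := by
  have lt1 : ∀ (x : Γ) (n : ℕ), x ^ n = v (p : Ω) → x < 1 := by
    intro x n hx
    by_contra hcon
    exact absurd (one_le_pow_of_one_le' (not_lt.1 hcon) n) (not_le.2 (hx ▸ hP1))
  have gt0 : ∀ (x : Γ) (n : ℕ), n ≠ 0 → x ^ n = v (p : Ω) → 0 < x := by
    intro x n hn hx
    refine zero_lt_iff.2 fun h => ?_
    rw [h, zero_pow hn] at hx
    exact hP0.ne hx
  have hpow : ∀ (x : Γ), 0 < x → x < 1 → ∀ m n : ℕ, m ≤ n → x ^ n ≤ x ^ m :=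
    fun x h0 h1 m n h => pow_le_pow_of_le_one h0.le h1.le h
  have hS₁l := lt1 _ _ hS₁
  have hS₁0 := gt0 _ _ (by omega) hS₁
  have hp1 : p - 1 + 1 = p := by omega
  -- values for σ₁
  have val0 : ∀ i : Fin p × Fin p, (i.1 : ℕ) = 0 → v (β₁ i) = S₁ ^ (i.2 : ℕ) := by
    intro i hi
    have h := h₁ i
    rw [(k2_arith hp3 i.1.2 i.2.2).2.1 hi, hi] at h
    simpa using h
  have val1 : ∀ i : Fin p × Fin p, (i.1 : ℕ) ≠ 0 → ∀ N, N ≤ p →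
      (N < p ∨ ¬ ((i.1 : ℕ) = 1 ∧ (i.2 : ℕ) = p - 1)) → v (β₁ i) ≤ S₁ ^ N := by
    intro i hi N hN hN2
    obtain ⟨k1, -, k2⟩ := k2_arith hp3 i.1.2 i.2.2
    have h := h₁ i
    generalize (p * (i.1 : ℕ) + (p - 1) * (i.2 : ℕ)) / (p * (p - 1)) = k at h k1 k2
    have hpk : 0 < S₁ ^ (p * k) := pow_pos hS₁0 _
    rw [← mul_le_mul_iff_left₀ hpk, ← pow_add]
    rw [← hS₁, ← pow_mul] at h
    rw [h]
    calc T₁ ^ (i.1 : ℕ) * S₁ ^ (i.2 : ℕ) ≤ (S₁ ^ p) ^ (i.1 : ℕ) * S₁ ^ (i.2 : ℕ) := by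
          gcongr
          rw [hS₁]; exact hT₁
      _ = S₁ ^ (p * (i.1 : ℕ) + (i.2 : ℕ)) := by rw [← pow_mul, ← pow_add]
      _ ≤ S₁ ^ (N + p * k) := by
          apply hpow _ hS₁0 hS₁l
          have hk01 : k = 0 ∨ k = 1 := by omega
          by_cases hi1 : (i.1 : ℕ) = 1
          · have k2' := k2 hi1
            rw [hi1]
            rcases hk01 with h0 | h0
            · rw [h0]; omega
            · have := k2' h0
              rw [h0]
              omega
          · have : 2 ≤ (i.1 : ℕ) := by omega
            have h3 : p * 2 ≤ p * (i.1 : ℕ) := Nat.mul_le_mul_left _ this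
            have h4 : p * k ≤ p * 1 := Nat.mul_le_mul_left _ k1
            omega
  have step1 : ∀ i : Fin p × Fin p, (i.1 : ℕ) = 0 → (i.2 : ℕ) < p - 1 → (p : S) ∣ c i := by
    intro i hi hi2
    refine dvl v (p : S) hvS hvπ c β₁ {i | (i.1 : ℕ) = 0 ∧ (i.2 : ℕ) < p - 1} S₁ (p - 1)
      (fun i => (i.2 : ℕ)) hS₁0 hS₁l ?_ ?_ hb₁ ?_ ?_ ?_ i ⟨hi, hi2⟩
    · refine hs₁.trans ?_
      rw [← hS₁]; exact hpow _ hS₁0 hS₁l _ _ (by omega)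
    · rw [map_natCast, ← hS₁]; exact hpow _ hS₁0 hS₁l _ _ (by omega)
    · rintro i ⟨hi, hi2⟩
      exact ⟨val0 i hi, hi2⟩
    · rintro i ⟨hi, hi2⟩ j ⟨hj, hj2⟩ hij
      exact Prod.ext (Fin.ext (by omega)) (Fin.ext hij)
    · intro i hi
      right
      by_cases h0 : (i.1 : ℕ) = 0
      · have : ¬ (i.2 : ℕ) < p - 1 := fun h => hi ⟨h0, h⟩
        rw [val0 i h0]
        exact hpow _ hS₁0 hS₁l _ _ (by omega)
      · exact val1 i h0 _ (by omega) (Or.inl (by omega))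
  -- values for σ₂
  have hT₂0 := gt0 _ _ (by omega) hT₂
  have hS₂0 := gt0 _ _ (by omega) hS₂
  set ρ := T₂ / S₂ with hρ
  have hρ0 : 0 < ρ := div_pos hT₂0 hS₂0
  have r1 : ρ ^ p = T₂ := by
    rw [hρ, div_pow, hS₂, ← hT₂, div_eq_iff (pow_pos hT₂0 _).ne', ← pow_succ', hp1]
  have r2 : ρ ^ (p - 1) = S₂ := by
    rw [hρ, div_pow, hT₂, ← hS₂, div_eq_iff (pow_pos hS₂0 _).ne', ← pow_succ', hp1]
  have r3 : ρ ^ (p * (p - 1)) = v (p : Ω) := by rw [pow_mul, r1, hT₂]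
  have hρ1 : ρ < 1 := lt1 _ _ r3
  have val2 : ∀ i : Fin p × Fin p,
      v (β₂ i) = ρ ^ ((p * (i.1 : ℕ) + (p - 1) * (i.2 : ℕ)) % (p * (p - 1))) := by
    intro i
    have h := h₂ i
    rw [← r3, ← pow_mul, ← r1, ← r2, ← pow_mul, ← pow_mul, ← pow_add] at h
    apply mul_right_cancel₀ (pow_pos hρ0 _).ne' (h.trans _)
    rw [← pow_add, Nat.mod_add_div]
  have hmodlt : ∀ i : Fin p × Fin p,
      (p * (i.1 : ℕ) + (p - 1) * (i.2 : ℕ)) % (p * (p - 1)) < p * (p - 1) := fun i =>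
    Nat.mod_lt _ (Nat.mul_pos (by omega) (by omega))
  have hle : (p - 1) * (p - 1) ≤ p * (p - 1) := Nat.mul_le_mul_right _ (by omega)
  have step2 : ∀ i : Fin p × Fin p, (i.1 : ℕ) ≠ 0 →
      (p * (i.1 : ℕ) + (p - 1) * (i.2 : ℕ)) % (p * (p - 1)) < (p - 1) * (p - 1) →
      (p : S) ∣ c i := by
    intro i hi hi2
    refine dvl v (p : S) hvS hvπ c β₂ {i | (i.1 : ℕ) ≠ 0 ∧
      (p * (i.1 : ℕ) + (p - 1) * (i.2 : ℕ)) % (p * (p - 1)) < (p - 1) * (p - 1)} ρ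
      ((p - 1) * (p - 1))
      (fun i => (p * (i.1 : ℕ) + (p - 1) * (i.2 : ℕ)) % (p * (p - 1)))
      hρ0 hρ1 ?_ ?_ hb₂ ?_ ?_ ?_ i ⟨hi, hi2⟩
    · refine hs₂.trans ?_
      rw [← r3]; exact hpow _ hρ0 hρ1 _ _ hle
    · rw [map_natCast, ← r3]; exact hpow _ hρ0 hρ1 _ _ hle
    · rintro i ⟨hi, hi2⟩
      exact ⟨val2 i, hi2⟩
    · rintro i ⟨hi, hi2⟩ j ⟨hj, hj2⟩ hij
      obtain ⟨e1, e2⟩ := e2_inj hp3 i.1.2 i.2.2 j.1.2 j.2.2 (by omega) (by omega) hij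
      exact Prod.ext (Fin.ext e1) (Fin.ext e2)
    · intro i hi
      by_cases h0 : (i.1 : ℕ) = 0
      · by_cases hj : (i.2 : ℕ) < p - 1
        · exact Or.inl (step1 i h0 hj)
        · right
          have hj' : (i.2 : ℕ) = p - 1 := by omega
          rw [val2 i]
          apply hpow _ hρ0 hρ1
          rw [h0, hj', mul_zero, zero_add, Nat.mod_eq_of_lt]
          exact Nat.mul_lt_mul_of_pos_right (by omega) (by omega)
      · right
        rw [val2 i]
        apply hpow _ hρ0 hρ1
        by_contra hcon
        exact hi ⟨h0, by omega⟩
  have step3 : ∀ i : Fin p × Fin p, (i.1 : ℕ) = 0 → (p : S) ∣ c i := by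
    intro i hi
    by_cases hi2 : (i.2 : ℕ) < p - 1
    · exact step1 i hi hi2
    refine dvl v (p : S) hvS hvπ c β₁ {i | (i.1 : ℕ) = 0 ∧ (i.2 : ℕ) = p - 1} S₁ p
      (fun i => (i.2 : ℕ)) hS₁0 hS₁l (hs₁.trans_eq hS₁.symm) ?_ hb₁ ?_ ?_ ?_ i ⟨hi, by omega⟩
    · rw [map_natCast, ← hS₁]
    · rintro i ⟨hi, hi2⟩
      exact ⟨val0 i hi, i.2.2⟩
    · rintro i ⟨hi, hi2⟩ j ⟨hj, hj2⟩ hij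
      exact Prod.ext (Fin.ext (by omega)) (Fin.ext hij)
    · intro i hi
      by_cases h0 : (i.1 : ℕ) = 0
      · have : ¬ (i.2 : ℕ) = p - 1 := fun h => hi ⟨h0, h⟩
        exact Or.inl (step1 i h0 (by omega))
      · by_cases h1 : (i.1 : ℕ) = 1 ∧ (i.2 : ℕ) = p - 1
        · left
          apply step2 i h0
          have : (p * (i.1 : ℕ) + (p - 1) * (i.2 : ℕ)) % (p * (p - 1)) = 1 := by
            rw [h1.1, h1.2]
            have e : p * 1 + (p - 1) * (p - 1) = 1 + p * (p - 1) := by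
              obtain ⟨q, rfl⟩ : ∃ q, p = q + 1 := ⟨p - 1, by omega⟩
              simp only [Nat.add_sub_cancel]; ring
            rw [e, Nat.add_mod_right, Nat.mod_eq_of_lt]
            nlinarith
          rw [this]
          have : 2 ≤ p - 1 := by omega
          nlinarith
        · right
          exact val1 i h0 _ le_rfl (Or.inr h1)
  intro i
  by_cases hi : (i.1 : ℕ) = 0
  · exact step3 i hi
  refine dvl v (p : S) hvS hvπ c β₂ {i | (i.1 : ℕ) ≠ 0} ρ (p * (p - 1))
      (fun i => (p * (i.1 : ℕ) + (p - 1) * (i.2 : ℕ)) % (p * (p - 1)))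
      hρ0 hρ1 (hs₂.trans_eq r3.symm) ?_ hb₂ ?_ ?_ ?_ i hi
  · rw [map_natCast, r3]
  · rintro i hi
    exact ⟨val2 i, hmodlt i⟩
  · rintro i hi j hj hij
    rw [Set.mem_setOf_eq] at hi hj
    obtain ⟨e1, e2⟩ := e2_inj hp3 i.1.2 i.2.2 j.1.2 j.2.2 (by omega) (by omega) hij
    exact Prod.ext (Fin.ext e1) (Fin.ext e2)
  · intro i hi
    left
    apply step3 i
    by_contra h
    exact hi h

theorem univ_grid {Ω : Type*} [Field Ω] (O : ValuationSubring Ω) {p : ℕ} (d x : Fin p → Ω)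
    (hd : ∀ k, O.valuation (d k) ≤ 1) (hx : ∀ k, O.valuation (x k) ≤ 1)
    (hxx : ∀ i j, i ≠ j → O.valuation (x i - x j) = 1)
    (h : ∀ i, O.valuation (∑ k, d k * x i ^ (k : ℕ)) < 1) : ∀ k, O.valuation (d k) < 1 := by
  classical
  let d' : Fin p → O := fun k => ⟨d k, (O.valuation_le_one_iff _).1 (hd k)⟩
  let x' : Fin p → O := fun k => ⟨x k, (O.valuation_le_one_iff _).1 (hx k)⟩
  have hres : ∀ z : O, IsLocalRing.residue O z = 0 ↔ O.valuation (z : Ω) < 1 := by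
    intro z
    rw [IsLocalRing.residue_eq_zero_iff, ValuationSubring.valuation_lt_one_iff]
  let q : Polynomial (IsLocalRing.ResidueField O) :=
    ∑ k : Fin p, Polynomial.C (IsLocalRing.residue O (d' k)) * Polynomial.X ^ (k : ℕ)
  have hq : q = 0 := by
    rcases Nat.eq_zero_or_pos p with hp | hp
    · subst hp; simp [q]
    refine Polynomial.eq_zero_of_natDegree_lt_card_of_eval_eq_zero q
      (f := fun i : Fin p => IsLocalRing.residue O (x' i)) ?_ ?_ ?_
    · intro i j hij
      by_contra hne
      have : IsLocalRing.residue O (x' i - x' j) = 0 := by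
        rw [map_sub, sub_eq_zero]; exact hij
      rw [hres] at this
      exact absurd (hxx i j hne) this.ne
    · intro i
      have h1 := (hres (∑ k, d' k * x' i ^ (k : ℕ))).2 (by
        push_cast
        exact h i)
      simp only [q, Polynomial.eval_finset_sum, Polynomial.eval_mul, Polynomial.eval_C,
        Polynomial.eval_pow, Polynomial.eval_X]
      simpa using h1
    · rw [Fintype.card_fin]
      refine lt_of_le_of_lt (Polynomial.natDegree_sum_le_of_forall_le (n := p - 1) _ _ ?_) (by omega)
      intro k _
      exact (Polynomial.natDegree_C_mul_X_pow_le _ _).trans (by have := k.2; omega)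
  intro k
  rw [← hres (d' k)]
  have h2 : q.coeff k = 0 := by rw [hq]; simp
  simp only [q, Polynomial.finset_sum_coeff, Polynomial.coeff_C_mul_X_pow] at h2
  rw [Finset.sum_eq_single k] at h2
  · simpa using h2
  · intro j _ hj
    rw [if_neg]
    intro h; exact hj (Fin.ext h.symm)
  · simp

theorem biv_grid {Ω : Type*} [Field Ω] (O : ValuationSubring Ω) {p : ℕ} (d : Fin p × Fin p → Ω)
    (x y : Fin p → Ω)
    (hd : ∀ k, O.valuation (d k) ≤ 1) (hx : ∀ k, O.valuation (x k) ≤ 1)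
    (hy : ∀ k, O.valuation (y k) ≤ 1)
    (hxx : ∀ i j, i ≠ j → O.valuation (x i - x j) = 1)
    (hyy : ∀ i j, i ≠ j → O.valuation (y i - y j) = 1)
    (h : ∀ i j, O.valuation (∑ kl, d kl * (x i ^ (kl.1 : ℕ) * y j ^ (kl.2 : ℕ))) < 1) :
    ∀ kl, O.valuation (d kl) < 1 := by
  have h1 : ∀ j k, O.valuation (∑ l, d (k, l) * y j ^ (l : ℕ)) < 1 := by
    intro j
    refine univ_grid O _ x (fun k => ?_) hx hxx fun i => ?_
    · refine Valuation.map_sum_le _ fun l _ => ?_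
      rw [map_mul, map_pow]
      exact mul_le_one' (hd _) (pow_le_one' (hy _) _)
    · have := h i j
      rw [Fintype.sum_prod_type] at this
      convert this using 3 with k
      rw [Finset.sum_mul]
      refine Finset.sum_congr rfl fun l _ => ?_
      ring
  rintro ⟨k, l⟩
  exact univ_grid O (fun l => d (k, l)) y (fun l => hd _) hy hyy (fun j => h1 j k) l

theorem case1_val {S Ω : Type*} [CommRing S] [Field Ω] [Algebra S Ω]
    (O : ValuationSubring Ω) {p : ℕ} (hp3 : 3 ≤ p)
    (hvS : ∀ c : S, O.valuation (algebraMap S Ω c) ≤ 1)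
    (hvπ : ∀ c : S, O.valuation (algebraMap S Ω c) < 1 ↔ (p : S) ∣ c)
    (c : Fin p × Fin p → S) (β : Fin p → Fin p → Fin p × Fin p → Ω)
    (lam : Ω) (hlam : O.valuation lam ^ (p - 1) = O.valuation (p : Ω))
    (hP0 : (p : Ω) ≠ 0) (hP1 : O.valuation (p : Ω) < 1)
    (x y : Fin p → Ω)
    (hx : ∀ k, O.valuation (x k) ≤ 1)
    (hy : ∀ k, O.valuation (y k) ≤ 1)
    (hxx : ∀ i j, i ≠ j → O.valuation (x i - x j) = 1)
    (hyy : ∀ i j, i ≠ j → O.valuation (y i - y j) = 1)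
    (hs : ∀ i j, O.valuation (∑ kl, algebraMap S Ω (c kl) * β i j kl) ≤ O.valuation (p : Ω))
    (hβ : ∀ i j kl, β i j kl * (p : Ω) ^ (((kl.1 : ℕ) + (kl.2 : ℕ)) / (p - 1)) =
      (lam * x i) ^ (kl.1 : ℕ) * (lam * y j) ^ (kl.2 : ℕ)) : ∀ kl, (p : S) ∣ c kl := by
  have hlam0 : lam ≠ 0 := by
    rintro rfl
    rw [map_zero, zero_pow (by omega)] at hlam
    exact hP0 ((Valuation.zero_iff _).1 hlam.symm)
  have hvl0 : 0 < O.valuation lam := zero_lt_iff.2 ((Valuation.ne_zero_iff _).2 hlam0)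
  have hvl1 : O.valuation lam < 1 := by
    by_contra hcon
    exact absurd (one_le_pow_of_one_le' (not_lt.1 hcon) (p - 1)) (not_le.2 (hlam ▸ hP1))
  have hpw : ∀ m n : ℕ, m < n → O.valuation lam ^ n < O.valuation lam ^ m :=
    fun m n h => pow_lt_pow_right_of_lt_one₀ hvl0 hvl1 h
  set u := (p : Ω) / lam ^ (p - 1) with hu
  have hpu : (p : Ω) = lam ^ (p - 1) * u := by rw [hu]; field_simp
  have hu0 : u ≠ 0 := by rw [hu]; exact div_ne_zero hP0 (pow_ne_zero _ hlam0)
  have hvu : O.valuation u = 1 := by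
    rw [hu, map_div₀, map_pow, hlam, div_self ((Valuation.ne_zero_iff _).2 hP0)]
  have hβ' : ∀ i j kl, β i j kl = lam ^ (((kl.1 : ℕ) + (kl.2 : ℕ)) % (p - 1)) *
      (u⁻¹ ^ (((kl.1 : ℕ) + (kl.2 : ℕ)) / (p - 1)) * (x i ^ (kl.1 : ℕ) * y j ^ (kl.2 : ℕ))) := by
    intro i j kl
    have h := hβ i j kl
    have e : (lam * x i) ^ (kl.1 : ℕ) * (lam * y j) ^ (kl.2 : ℕ) =
      lam ^ (((kl.1 : ℕ) + (kl.2 : ℕ)) % (p - 1) +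
        (p - 1) * (((kl.1 : ℕ) + (kl.2 : ℕ)) / (p - 1))) * (x i ^ (kl.1 : ℕ) * y j ^ (kl.2 : ℕ)) := by
      rw [Nat.mod_add_div, pow_add]; ring
    rw [e, pow_add, pow_mul] at h
    apply mul_right_cancel₀ (pow_ne_zero _ hP0) (h.trans _)
    rw [hpu, mul_pow, inv_pow]
    field_simp
  have main : ∀ r, r < p - 1 → ∀ kl : Fin p × Fin p, ((kl.1 : ℕ) + (kl.2 : ℕ)) % (p - 1) = r →
      (p : S) ∣ c kl := by
    intro r
    induction r using Nat.strong_induction_on with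
    | _ r ih =>
      intro hr
      have hPr : O.valuation (p : Ω) < O.valuation lam ^ r := hlam ▸ hpw _ _ hr
      have hvr : 0 < O.valuation lam ^ r := pow_pos hvl0 _
      have hb1 : ∀ i j kl, O.valuation (β i j kl) ≤
          O.valuation lam ^ (((kl.1 : ℕ) + (kl.2 : ℕ)) % (p - 1)) := by
        intro i j kl
        rw [hβ' i j kl, map_mul, map_pow, map_mul, map_pow, map_mul, map_pow, map_pow, map_inv₀, hvu,
          inv_one, one_pow, one_mul]
        exact mul_le_of_le_one_right' (mul_le_one' (pow_le_one' (hx _) _) (pow_le_one' (hy _) _))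
      have hgrid := biv_grid O (fun kl => if ((kl.1 : ℕ) + (kl.2 : ℕ)) % (p - 1) = r then
        algebraMap S Ω (c kl) * u⁻¹ ^ (((kl.1 : ℕ) + (kl.2 : ℕ)) / (p - 1)) else 0) x y ?_ hx hy
        hxx hyy ?_
      · intro kl hkl
        have h := hgrid kl
        simp only [if_pos hkl] at h
        rw [map_mul, map_pow, map_inv₀, hvu, inv_one, one_pow, mul_one] at h
        exact (hvπ _).1 h
      · intro kl
        split_ifs
        · rw [map_mul, map_pow, map_inv₀, hvu, inv_one, one_pow, mul_one]
          exact hvS _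
        · simp
      · intro i j
        have e : lam ^ r * (∑ kl : Fin p × Fin p,
            (if ((kl.1 : ℕ) + (kl.2 : ℕ)) % (p - 1) = r then
              algebraMap S Ω (c kl) * u⁻¹ ^ (((kl.1 : ℕ) + (kl.2 : ℕ)) / (p - 1)) else 0) *
              (x i ^ (kl.1 : ℕ) * y j ^ (kl.2 : ℕ))) =
            (∑ kl, algebraMap S Ω (c kl) * β i j kl) -
            ∑ kl : Fin p × Fin p, (if ((kl.1 : ℕ) + (kl.2 : ℕ)) % (p - 1) = r then 0 else
              algebraMap S Ω (c kl) * β i j kl) := by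
          rw [Finset.mul_sum, ← Finset.sum_sub_distrib]
          refine Finset.sum_congr rfl fun kl _ => ?_
          split_ifs with hkl
          · rw [hβ' i j kl, hkl]; ring
          · ring
        rw [← mul_lt_mul_iff_right₀ hvr, mul_one, ← map_pow, ← map_mul, e]
        refine lt_of_le_of_lt (Valuation.map_sub _ _ _) (max_lt ?_ ?_)
        · rw [map_pow]
          exact (hs i j).trans_lt hPr
        · rw [map_pow]
          refine Valuation.map_sum_lt _ hvr.ne' fun kl _ => ?_
          split_ifs with hkl
          · rwa [map_zero]
          rw [map_mul]
          rcases lt_or_gt_of_ne hkl with hlt | hgt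
          · obtain ⟨c', hc'⟩ := ih _ hlt (hlt.trans hr) kl rfl
            rw [hc', map_mul, map_mul, map_natCast]
            have h1 : O.valuation (β i j kl) ≤ 1 :=
              (hb1 i j kl).trans (pow_le_one' hvl1.le _)
            calc O.valuation (p : Ω) * O.valuation (algebraMap S Ω c') * O.valuation (β i j kl)
                ≤ O.valuation (p : Ω) * 1 * 1 := by
                  gcongr
                  exact hvS _
              _ < _ := by rw [mul_one, mul_one]; exact hPr
          · calc O.valuation (algebraMap S Ω (c kl)) * O.valuation (β i j kl)
                ≤ 1 * O.valuation lam ^ (((kl.1 : ℕ) + (kl.2 : ℕ)) % (p - 1)) := by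
                  gcongr
                  · exact hvS _
                  · exact hb1 i j kl
              _ < _ := by rw [one_mul]; exact hpw _ _ hgt
  intro kl
  exact main _ (Nat.mod_lt _ (by omega)) kl rfl

section Main

variable {S : Type*} [CommRing S] [IsDomain S] [IsNoetherianRing S] [IsIntegrallyClosed S]
    {L : Type*} [Field L] [CharZero L] [Algebra S L] [IsFractionRing S L]
    {K : Type*} [Field K] [Algebra L K] [Algebra S K] [IsScalarTower S L K]

theorem exists_embedding' {Ω : Type*} [Field Ω] [Algebra L Ω] [Algebra S Ω] [IsScalarTower S L Ω]
    [IsAlgClosed Ω] {p : ℕ} (hp : 0 < p) {ω μ : K} {f g : S}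
    (hω : ω ^ p = algebraMap S K f) (hμ : μ ^ p = algebraMap S K g)
    (hgen : Algebra.adjoin L ({ω, μ} : Set K) = ⊤) (hdeg : Module.finrank L K = p ^ 2)
    (x y : Ω) (hx : x ^ p = algebraMap S Ω f) (hy : y ^ p = algebraMap S Ω g) :
    ∃ σ : K →ₐ[S] Ω, σ ω = x ∧ σ μ = y := by
  rw [IsScalarTower.algebraMap_apply S L] at hω hμ hx hy
  obtain ⟨σ, h1, h2⟩ := exists_embedding hp hω hμ hgen hdeg x y hx hy
  exact ⟨σ.restrictScalars S, h1, h2⟩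

theorem case2 {p : ℕ} (hp : p.Prime) (hp3 : 3 ≤ p) (hpS : Prime ((p : ℕ) : S))
    {f g h₁ h₂ a b : S} (hf : f = h₁ ^ p + a * (p : S) ^ 2) (hg : g = h₂ ^ p + b * (p : S))
    (hh₁ : ¬ (p : S) ∣ h₁) (hb : ¬ (p : S) ∣ b)
    (hfg : (¬IsUnit f ∧ ¬IsUnit g ∧ PaperSquarefree f ∧ PaperSquarefree g ∧ SatisfiesA1 f g) ∨
      (IsUnit f ∧ IsUnit g ∧ (∀ x : S, x ^ p ≠ f) ∧ (∀ x : S, x ^ p ≠ g)))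
    {ω μ : K} (hω : ω ^ p = algebraMap S K f) (hμ : μ ^ p = algebraMap S K g)
    (hKgen : Algebra.adjoin L ({ω, μ} : Set K) = ⊤)
    (hdeg : Module.finrank L K = p ^ 2) :
    Module.Free S (integralClosure S K) ∧
      Module.finrank S (integralClosure S K) = p ^ 2 := by
  have hinj := inj_SK S L K
  have hpK' : algebraMap S K p ≠ 0 := by
    rw [Ne, map_eq_zero_iff _ hinj]; exact hpS.ne_zero
  have hpK : (p : K) ≠ 0 := by rwa [map_natCast] at hpK'
  have hωi : IsIntegral S ω := IsIntegral.of_pow hp.pos (hω ▸ isIntegral_algebraMap)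
  have hμi : IsIntegral S μ := IsIntegral.of_pow hp.pos (hμ ▸ isIntegral_algebraMap)
  set t := ω - algebraMap S K h₁ with ht
  set s := μ - algebraMap S K h₂ with hs
  have hti : IsIntegral S t := hωi.sub isIntegral_algebraMap
  have hsi : IsIntegral S s := hμi.sub isIntegral_algebraMap
  obtain ⟨τ, hτ, hτ'⟩ := tau_int hp hpK t hti h₁ a (by rw [ht, sub_add_cancel, hω, hf])
  obtain ⟨υ, hυ, hυ'⟩ := sig_int hp s hsi h₂ b (by rw [hs, sub_add_cancel, hμ, hg])
  let k : Fin p × Fin p → ℕ := fun ij =>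
    (p * (ij.1 : ℕ) + (p - 1) * (ij.2 : ℕ)) / (p * (p - 1))
  let bb : Fin p × Fin p → K := fun ij => t ^ (ij.1 : ℕ) * s ^ (ij.2 : ℕ) / (p : K) ^ k ij
  have hbb : ∀ ij, bb ij * (p : K) ^ k ij = t ^ (ij.1 : ℕ) * s ^ (ij.2 : ℕ) := by
    intro ij
    exact div_mul_cancel₀ _ (pow_ne_zero _ hpK)
  have hint : ∀ ij, IsIntegral S (bb ij) := by
    intro ij
    refine int_of_pow (p : K) (τ ^ (p * (ij.1 : ℕ)) * υ ^ ((p - 1) * (ij.2 : ℕ))) (bb ij)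
      (by simpa using isIntegral_algebraMap (R := S) (A := K) (x := (p : S))) hpK
      ((hτ.pow _).mul (hυ.pow _)) (n := p * (p - 1)) (m := p * (p - 1) * k ij)
      (N := p * (ij.1 : ℕ) + (p - 1) * (ij.2 : ℕ)) (Nat.mul_pos hp.pos (by omega))
      (Nat.mul_div_le _ _) ?_
    have h := congrArg (· ^ (p * (p - 1))) (hbb ij)
    simp only [mul_pow, ← pow_mul] at h
    rw [mul_comm (p * (p - 1)) (k ij), h]
    have e1 : t ^ ((ij.1 : ℕ) * (p * (p - 1))) = (t ^ (p - 1)) ^ (p * (ij.1 : ℕ)) := by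
      rw [← pow_mul]; congr 1; ring
    have e2 : s ^ ((ij.2 : ℕ) * (p * (p - 1))) = (s ^ p) ^ ((p - 1) * (ij.2 : ℕ)) := by
      rw [← pow_mul]; congr 1; ring
    rw [e1, e2, hτ', hυ', mul_pow, mul_pow, pow_add]
    ring
  refine final_of_key hp.two_le hpS h₁ h₂ hfg hω hμ hKgen hdeg k bb (by simpa using hbb) hint ?_
  intro c y hy hsum
  let Ω := AlgebraicClosure K
  have hinjΩ : Function.Injective (algebraMap S Ω) := by
    rw [IsScalarTower.algebraMap_eq S K Ω]
    exact (algebraMap K Ω).injective.comp hinj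
  obtain ⟨O, hvi, hvp⟩ := exists_val hinjΩ (p : S) hpS
  have hpΩ : (p : Ω) ≠ 0 := by
    intro h
    apply hpS.ne_zero
    apply hinjΩ
    rw [map_natCast, h, map_zero]
  have : NeZero (p : Ω) := ⟨hpΩ⟩
  obtain ⟨ζ, hζ⟩ := HasEnoughRootsOfUnity.exists_primitiveRoot Ω p
  obtain ⟨w₁, hw₁, hw₁'⟩ := exists_root hp hp3 hpΩ O.valuation hvi hvp hζ h₁ a hh₁
  obtain ⟨w₂, hw₂, hw₂'⟩ := exists_root' hp hp3 hpΩ O.valuation hvi hvp hζ h₁ a hh₁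
  obtain ⟨m, hm⟩ := IsAlgClosed.exists_pow_nat_eq (algebraMap S Ω g) hp.pos
  obtain ⟨σ₁, hσ₁, hσ₁'⟩ := exists_embedding' (L := L) hp.pos hω hμ hKgen hdeg w₁ m (by rw [hw₁, hf]) hm
  obtain ⟨σ₂, hσ₂, hσ₂'⟩ := exists_embedding' (L := L) hp.pos hω hμ hKgen hdeg w₂ m (by rw [hw₂, hf]) hm
  have hπ := v_p_lt hp hpΩ O.valuation hvi hvp
  have hπ0 : 0 < O.valuation (p : Ω) := zero_lt_iff.2 ((Valuation.ne_zero_iff _).2 hpΩ)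
  have hSv : O.valuation (m - algebraMap S Ω h₂) ^ p = O.valuation (p : Ω) := by
    refine root1 hp hpΩ O.valuation hvi hvp _ ?_ h₂ b hb (by rw [sub_add_cancel, hm, hg])
    refine IsIntegral.sub (IsIntegral.of_pow hp.pos ?_) isIntegral_algebraMap
    rw [hm]; exact isIntegral_algebraMap
  have hsumσ : ∀ σ : K →ₐ[S] Ω,
      O.valuation (∑ i, algebraMap S Ω (c i) * σ (bb i)) ≤ O.valuation (p : Ω) := by
    intro σ
    have := congrArg σ hsum
    simp only [map_sum, map_mul, AlgHom.commutes] at this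
    rw [this, map_mul, map_natCast]
    exact mul_le_of_le_one_right' (hvi _ (hy.map σ))
  have hval : ∀ σ : K →ₐ[S] Ω, ∀ i, O.valuation (σ (bb i)) * O.valuation (p : Ω) ^ k i =
      O.valuation (σ ω - algebraMap S Ω h₁) ^ (i.1 : ℕ) *
      O.valuation (σ μ - algebraMap S Ω h₂) ^ (i.2 : ℕ) := by
    intro σ i
    have := congrArg (fun z => O.valuation (σ z)) (hbb i)
    simpa only [map_mul, map_pow, map_natCast, ht, hs, map_sub, AlgHom.commutes] using this
  refine case2_val O.valuation hp3 (fun c => hvi _ isIntegral_algebraMap) hvp c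
    (fun i => σ₁ (bb i)) (fun i => σ₂ (bb i)) _ _ _ _ hπ0 hπ hw₁' hSv hw₂' hSv
    (hsumσ σ₁) (hsumσ σ₂) (fun i => hvi _ ((hint i).map σ₁)) (fun i => hvi _ ((hint i).map σ₂))
    (fun i => ?_) (fun i => ?_)
  · rw [← hσ₁, ← hσ₁']; exact hval σ₁ i
  · rw [← hσ₂, ← hσ₂']; exact hval σ₂ i

/-- the points used in case 1 -/
theorem points {S Ω : Type*} [CommRing S] [IsDomain S] [Field Ω] [Algebra S Ω] [IsAlgClosed Ω]
    (O : ValuationSubring Ω) {p : ℕ} (hp : p.Prime) (hp3 : 3 ≤ p) (hpΩ : (p : Ω) ≠ 0)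
    (hvi : ∀ x, IsIntegral S x → O.valuation x ≤ 1)
    (hvp : ∀ c : S, O.valuation (algebraMap S Ω c) < 1 ↔ (p : S) ∣ c)
    {ζ : Ω} (hζ : IsPrimitiveRoot ζ p) (h a : S) (hh : ¬ (p : S) ∣ h) :
    ∃ x : Fin p → Ω, (∀ i, O.valuation (x i) ≤ 1) ∧
      (∀ i j, i ≠ j → O.valuation (x i - x j) = 1) ∧
      ∀ i, (algebraMap S Ω h + (ζ - 1) * x i) ^ p = algebraMap S Ω (h ^ p + a * p ^ 2) := by
  obtain ⟨w, hw, hw'⟩ := exists_root hp hp3 hpΩ O.valuation hvi hvp hζ h a hh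
  have hζ1 : ζ ≠ 1 := hζ.ne_one (by omega)
  have hlt := p_lt_lam hp hp3 hpΩ O.valuation hvi hvp hζ.pow_eq_one hζ1
  have hl0 : ζ - 1 ≠ 0 := sub_ne_zero.2 hζ1
  have hvl0 : 0 < O.valuation (ζ - 1) := zero_lt_iff.2 ((Valuation.ne_zero_iff _).2 hl0)
  have hπ := v_p_lt hp hpΩ O.valuation hvi hvp
  have hvw : O.valuation w = 1 := by
    have h1 := v_eq_one hp hpΩ O.valuation hvi hvp h hh
    have : w = (w - algebraMap S Ω h) + algebraMap S Ω h := by ring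
    rw [this, Valuation.map_add_eq_of_lt_right, h1]
    rw [h1]
    exact hw'.trans_lt hπ
  have hpz : ∀ n : ℕ, (ζ ^ n) ^ p = 1 := by
    intro n; rw [← pow_mul, mul_comm, pow_mul, hζ.pow_eq_one, one_pow]
  have hveq : ∀ η : Ω, η ^ p = 1 → η ≠ 1 → O.valuation (η - 1) = O.valuation (ζ - 1) := by
    intro η hη hη1
    have e1 := root_one hp hpΩ O.valuation hvi hvp η hη hη1
    have e2 := root_one hp hpΩ O.valuation hvi hvp ζ hζ.pow_eq_one hζ1
    exact (pow_left_inj₀ zero_le zero_le (by omega : p - 1 ≠ 0)).1 (e1.trans e2.symm)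
  have hvζ : ∀ n : ℕ, O.valuation (ζ ^ n) = 1 := by
    intro n
    have : O.valuation (ζ ^ n) ^ p = 1 := by rw [← map_pow, hpz, map_one]
    exact (pow_eq_one_iff.1 this).resolve_right hp.ne_zero
  refine ⟨fun i => (ζ ^ (i : ℕ) * w - algebraMap S Ω h) / (ζ - 1), ?_, ?_, ?_⟩
  · intro i
    rw [map_div₀, div_le_one₀ hvl0]
    have e : ζ ^ (i : ℕ) * w - algebraMap S Ω h =
      (ζ ^ (i : ℕ) - 1) * w + (w - algebraMap S Ω h) := by ring
    rw [e]
    refine Valuation.map_add_le _ ?_ (hw'.trans hlt.le)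
    rw [map_mul, hvw, mul_one]
    by_cases h1 : ζ ^ (i : ℕ) = 1
    · rw [h1, sub_self, map_zero]; exact zero_le
    · exact (hveq _ (hpz _) h1).le
  · have aux : ∀ i j : Fin p, (i : ℕ) < j →
        O.valuation (ζ ^ (i : ℕ) - ζ ^ (j : ℕ)) = O.valuation (ζ - 1) := by
      intro i j hij
      have e : ζ ^ (i : ℕ) - ζ ^ (j : ℕ) = -(ζ ^ (i : ℕ) * (ζ ^ ((j : ℕ) - i) - 1)) := by
        rw [mul_sub, ← pow_add, Nat.add_sub_cancel' hij.le]; ring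
      rw [e, Valuation.map_neg, map_mul, hvζ, one_mul]
      refine hveq _ (hpz _) (hζ.pow_ne_one_of_pos_of_lt (by omega) (by have := j.2; omega))
    intro i j hij
    rw [← sub_div, map_div₀, div_eq_one_iff_eq hvl0.ne']
    have e : ζ ^ (i : ℕ) * w - algebraMap S Ω h - (ζ ^ (j : ℕ) * w - algebraMap S Ω h) =
      (ζ ^ (i : ℕ) - ζ ^ (j : ℕ)) * w := by ring
    rw [e, map_mul, hvw, mul_one]
    rcases lt_or_gt_of_ne (fun h => hij (Fin.ext h) : (i : ℕ) ≠ j) with h | h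
    · exact aux i j h
    · rw [Valuation.map_sub_swap]; exact aux j i h
  · intro i
    rw [mul_div_cancel₀ _ hl0, add_sub_cancel, mul_pow, hpz, one_mul, hw]

theorem case1 {p : ℕ} (hp : p.Prime) (hp3 : 3 ≤ p) (hpS : Prime ((p : ℕ) : S))
    {f g h₁ h₂ a b : S} (hf : f = h₁ ^ p + a * (p : S) ^ 2) (hg : g = h₂ ^ p + b * (p : S) ^ 2)
    (hh₁ : ¬ (p : S) ∣ h₁) (hh₂ : ¬ (p : S) ∣ h₂)
    (hfg : (¬IsUnit f ∧ ¬IsUnit g ∧ PaperSquarefree f ∧ PaperSquarefree g ∧ SatisfiesA1 f g) ∨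
      (IsUnit f ∧ IsUnit g ∧ (∀ x : S, x ^ p ≠ f) ∧ (∀ x : S, x ^ p ≠ g)))
    {ω μ : K} (hω : ω ^ p = algebraMap S K f) (hμ : μ ^ p = algebraMap S K g)
    (hKgen : Algebra.adjoin L ({ω, μ} : Set K) = ⊤)
    (hdeg : Module.finrank L K = p ^ 2) :
    Module.Free S (integralClosure S K) ∧
      Module.finrank S (integralClosure S K) = p ^ 2 := by
  have hinj := inj_SK S L K
  have hpK' : algebraMap S K p ≠ 0 := by
    rw [Ne, map_eq_zero_iff _ hinj]; exact hpS.ne_zero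
  have hpK : (p : K) ≠ 0 := by rwa [map_natCast] at hpK'
  have hωi : IsIntegral S ω := IsIntegral.of_pow hp.pos (hω ▸ isIntegral_algebraMap)
  have hμi : IsIntegral S μ := IsIntegral.of_pow hp.pos (hμ ▸ isIntegral_algebraMap)
  set t := ω - algebraMap S K h₁ with ht
  set s := μ - algebraMap S K h₂ with hs
  have hti : IsIntegral S t := hωi.sub isIntegral_algebraMap
  have hsi : IsIntegral S s := hμi.sub isIntegral_algebraMap
  obtain ⟨τ, hτ, hτ'⟩ := tau_int hp hpK t hti h₁ a (by rw [ht, sub_add_cancel, hω, hf])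
  obtain ⟨υ, hυ, hυ'⟩ := tau_int hp hpK s hsi h₂ b (by rw [hs, sub_add_cancel, hμ, hg])
  let k : Fin p × Fin p → ℕ := fun ij => ((ij.1 : ℕ) + (ij.2 : ℕ)) / (p - 1)
  let bb : Fin p × Fin p → K := fun ij => t ^ (ij.1 : ℕ) * s ^ (ij.2 : ℕ) / (p : K) ^ k ij
  have hbb : ∀ ij, bb ij * (p : K) ^ k ij = t ^ (ij.1 : ℕ) * s ^ (ij.2 : ℕ) := by
    intro ij
    exact div_mul_cancel₀ _ (pow_ne_zero _ hpK)
  have hint : ∀ ij, IsIntegral S (bb ij) := by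
    intro ij
    refine int_of_pow (p : K) (τ ^ (ij.1 : ℕ) * υ ^ (ij.2 : ℕ)) (bb ij)
      (by simpa using isIntegral_algebraMap (R := S) (A := K) (x := (p : S))) hpK
      ((hτ.pow _).mul (hυ.pow _)) (n := p - 1) (m := (p - 1) * k ij)
      (N := (ij.1 : ℕ) + (ij.2 : ℕ)) (by omega)
      (Nat.mul_div_le _ _) ?_
    have h := congrArg (· ^ (p - 1)) (hbb ij)
    simp only [mul_pow, ← pow_mul] at h
    rw [mul_comm (p - 1) (k ij), h, mul_comm _ (p - 1), mul_comm _ (p - 1), pow_mul, pow_mul, hτ', hυ',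
      mul_pow, mul_pow, pow_add]
    ring
  refine final_of_key hp.two_le hpS h₁ h₂ hfg hω hμ hKgen hdeg k bb (by simpa using hbb) hint ?_
  intro c y hy hsum
  let Ω := AlgebraicClosure K
  have hinjΩ : Function.Injective (algebraMap S Ω) := by
    rw [IsScalarTower.algebraMap_eq S K Ω]
    exact (algebraMap K Ω).injective.comp hinj
  obtain ⟨O, hvi, hvp⟩ := exists_val hinjΩ (p : S) hpS
  have hpΩ : (p : Ω) ≠ 0 := by
    intro h
    apply hpS.ne_zero
    apply hinjΩ
    rw [map_natCast, h, map_zero]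
  have : NeZero (p : Ω) := ⟨hpΩ⟩
  obtain ⟨ζ, hζ⟩ := HasEnoughRootsOfUnity.exists_primitiveRoot Ω p
  obtain ⟨x, hx1, hx2, hx3⟩ := points O hp hp3 hpΩ hvi hvp hζ h₁ a hh₁
  obtain ⟨z, hz1, hz2, hz3⟩ := points O hp hp3 hpΩ hvi hvp hζ h₂ b hh₂
  rw [← hf] at hx3
  rw [← hg] at hz3
  choose σ hσ hσ' using fun i j =>
    exists_embedding' (L := L) hp.pos hω hμ hKgen hdeg _ _ (hx3 i) (hz3 j)
  refine case1_val O hp3 (fun c => hvi _ isIntegral_algebraMap) hvp c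
    (fun i j kl => σ i j (bb kl)) (ζ - 1)
    (root_one hp hpΩ O.valuation hvi hvp ζ hζ.pow_eq_one (hζ.ne_one (by omega))) hpΩ
    (v_p_lt hp hpΩ O.valuation hvi hvp) x z hx1 hz1 hx2 hz2 (fun i j => ?_) (fun i j kl => ?_)
  · have := congrArg (σ i j) hsum
    simp only [map_sum, map_mul, AlgHom.commutes] at this
    rw [this, map_mul, map_natCast]
    exact mul_le_of_le_one_right' (hvi _ (hy.map (σ i j)))
  · have := congrArg (σ i j) (hbb kl)
    simp only [map_mul, map_pow, map_natCast, ht, hs, map_sub, AlgHom.commutes, hσ, hσ',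
      add_sub_cancel_left] at this
    exact this

theorem half {p : ℕ} (hp : p.Prime) (hp3 : 3 ≤ p) (hpS : Prime ((p : ℕ) : S))
    {f g h₁ h₂ a b : S} (hf : f = h₁ ^ p + a * (p : S)) (hg : g = h₂ ^ p + b * (p : S))
    (hfg : (¬IsUnit f ∧ ¬IsUnit g ∧ PaperSquarefree f ∧ PaperSquarefree g ∧ SatisfiesA1 f g) ∨
      (IsUnit f ∧ IsUnit g ∧ (∀ x : S, x ^ p ≠ f) ∧ (∀ x : S, x ^ p ≠ g)))
    {ω μ : K} (hω : ω ^ p = algebraMap S K f) (hμ : μ ^ p = algebraMap S K g)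
    (hKgen : Algebra.adjoin L ({ω, μ} : Set K) = ⊤)
    (hdeg : Module.finrank L K = p ^ 2)
    (hnic : ¬IsIntegrallyClosed (Algebra.adjoin S ({ω} : Set K))) :
    Module.Free S (integralClosure S K) ∧
      Module.finrank S (integralClosure S K) = p ^ 2 := by
  have ha : (p : S) ∣ a := by
    by_contra ha
    exact hnic (intClosed_of_not_dvd hp hp3 hpS hf ha hfg hω hμ hKgen hdeg)
  have aux : ∀ f h a : S, (IsUnit f ∨ PaperSquarefree f) → f = h ^ p + a * (p : S) ^ 2 →
      ¬ (p : S) ∣ h := by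
    intro f h a hf he hd
    refine not_sq_dvd hpS hf ?_
    rw [he]
    refine dvd_add ?_ (dvd_mul_left _ _)
    exact (pow_dvd_pow _ hp.two_le).trans (pow_dvd_pow_of_dvd hd p)
  have hf' : IsUnit f ∨ PaperSquarefree f := by
    rcases hfg with h | h
    · exact Or.inr h.2.2.1
    · exact Or.inl h.1
  have hg' : IsUnit g ∨ PaperSquarefree g := by
    rcases hfg with h | h
    · exact Or.inr h.2.2.2.1
    · exact Or.inl h.2.1
  obtain ⟨a', rfl⟩ := ha
  have hf2 : f = h₁ ^ p + a' * (p : S) ^ 2 := by rw [hf]; ring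
  by_cases hb : (p : S) ∣ b
  · obtain ⟨b', rfl⟩ := hb
    have hg2 : g = h₂ ^ p + b' * (p : S) ^ 2 := by rw [hg]; ring
    exact case1 hp hp3 hpS hf2 hg2 (aux _ _ _ hf' hf2) (aux _ _ _ hg' hg2) hfg hω hμ hKgen hdeg
  · exact case2 hp hp3 hpS hf2 hg (aux _ _ _ hf' hf2) hb hfg hω hμ hKgen hdeg

end Main

end Stmt0Aux

theorem stmt0
    {S : Type*} [CommRing S] [IsDomain S] [IsNoetherianRing S] [IsIntegrallyClosed S]
    {L : Type*} [Field L] [CharZero L] [Algebra S L] [IsFractionRing S L]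
    {K : Type*} [Field K] [Algebra L K] [Algebra S K] [IsScalarTower S L K]
    {p : ℕ} (hp : p.Prime) (hp3 : 3 ≤ p) (hpS : Prime ((p : ℕ) : S))
    (hSmodp : IsIntegrallyClosed (S ⧸ Ideal.span {((p : ℕ) : S)}))
    {f g h₁ h₂ a b : S} (hf : f = h₁ ^ p + a * (p : S)) (hg : g = h₂ ^ p + b * (p : S))
    (hfg : (¬IsUnit f ∧ ¬IsUnit g ∧ PaperSquarefree f ∧ PaperSquarefree g ∧ SatisfiesA1 f g) ∨
      (IsUnit f ∧ IsUnit g ∧ (∀ x : S, x ^ p ≠ f) ∧ (∀ x : S, x ^ p ≠ g)))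
    {ω μ : K} (hω : ω ^ p = algebraMap S K f) (hμ : μ ^ p = algebraMap S K g)
    (hKgen : Algebra.adjoin L ({ω, μ} : Set K) = ⊤)
    (hdeg : Module.finrank L K = p ^ 2)
    (hnic : ¬IsIntegrallyClosed (Algebra.adjoin S ({ω} : Set K)) ∨
      ¬IsIntegrallyClosed (Algebra.adjoin S ({μ} : Set K))) :
    Module.Free S (integralClosure S K) ∧
      Module.finrank S (integralClosure S K) = p ^ 2 := by
  rcases hnic with h | h
  · exact Stmt0Aux.half hp hp3 hpS hf hg hfg hω hμ hKgen hdeg h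
  · refine Stmt0Aux.half hp hp3 hpS hg hf ?_ hμ hω (by rw [Set.pair_comm]; exact hKgen) hdeg h
    rcases hfg with ⟨h1, h2, h3, h4, h5⟩ | ⟨h1, h2, h3, h4⟩
    · exact Or.inl ⟨h2, h1, h4, h3, fun P hP hh => h5 P hP ⟨hh.2, hh.1⟩⟩
    · exact Or.inr ⟨h2, h1, h4, h3⟩
end

section
/- If both S[ω] and S[μ] are integrally closed and fg^i ∉ S^{p∧p²} for every integer 1 ≤ i ≤ p−1, then the integral closure R of S in K is a free S-module (of rank p²). -/
open Polynomial in
theorem aux_valuation {S K : Type*} [CommRing S] [IsDomain S] [Field K] [Algebra S K]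
    (hinj : Function.Injective (algebraMap S K)) {q : S} (hq : Prime q) :
    ∃ O : ValuationSubring K, (∀ s : S, algebraMap S K s ∈ O) ∧
      O.valuation (algebraMap S K q) < 1 ∧
      (∀ s : S, ¬ q ∣ s → O.valuation (algebraMap S K s) = 1) := by
  have hP : (Ideal.span {q}).IsPrime := (Ideal.span_singleton_prime hq.ne_zero).2 hq
  let P := Ideal.span {q}
  have hu : ∀ y : P.primeCompl, IsUnit (algebraMap S K y) := by
    intro y
    rw [isUnit_iff_ne_zero]
    intro h
    have : (y : S) = 0 := hinj (by simpa using h)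
    apply y.2
    rw [this]
    exact zero_mem _
  let φ : Localization.AtPrime P →+* K := IsLocalization.lift (M := P.primeCompl) hu
  have hφ : ∀ s, φ (algebraMap S _ s) = algebraMap S K s := fun s => IsLocalization.lift_eq hu s
  obtain ⟨O, hO⟩ := LocalSubring.exists_le_valuationSubring (LocalSubring.range φ)
  obtain ⟨hle, hloc⟩ := hO
  have hmem : ∀ x, φ x ∈ O := fun x => hle ⟨x, rfl⟩
  refine ⟨O, fun s => by rw [← hφ]; exact hmem _, ?_, ?_⟩
  · by_contra hlt
    have h1 : O.valuation (algebraMap S K q) = 1 := by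
      apply le_antisymm _ (not_lt.1 hlt)
      rw [ValuationSubring.valuation_le_one_iff, ← hφ]; exact hmem _
    have hm : φ (algebraMap S _ q) ∈ (LocalSubring.range φ).toSubring := ⟨_, rfl⟩
    have h2 : IsUnit (⟨φ (algebraMap S _ q), hm⟩ : (LocalSubring.range φ).toSubring) := by
      apply hloc.map_nonunit
      have := (O.valuation_eq_one_iff ⟨φ (algebraMap S _ q), hmem _⟩).2 (by simpa [hφ] using h1)
      exact this
    obtain ⟨⟨_, ⟨z, rfl⟩⟩, hz⟩ := isUnit_iff_exists_inv.1 h2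
    have hz' : φ (algebraMap S _ q) * φ z = 1 := congrArg Subtype.val hz
    have hqm : algebraMap S (Localization.AtPrime P) q ∈ IsLocalRing.maximalIdeal _ := by
      rw [IsLocalization.AtPrime.to_map_mem_maximal_iff _ P]
      exact Ideal.mem_span_singleton_self q
    rw [← map_mul] at hz'
    have hφi : Function.Injective φ := by
      rw [IsLocalization.lift_injective_iff]
      intro x y
      rw [(IsLocalization.injective _ P.primeCompl_le_nonZeroDivisors).eq_iff, hinj.eq_iff]
    have := hφi (hz'.trans (map_one φ).symm)
    exact hqm (IsUnit.of_mul_eq_one _ this)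
  · intro s hs
    have hsu : IsUnit (algebraMap S (Localization.AtPrime P) s) :=
      IsLocalization.map_units _ (⟨s, fun h => hs (Ideal.mem_span_singleton.1 h)⟩ : P.primeCompl)
    obtain ⟨z, hz⟩ := isUnit_iff_exists_inv.1 hsu
    have h3 : O.valuation (φ (algebraMap S _ s)) * O.valuation (φ z) = 1 := by
      rw [← map_mul, ← map_mul, hz, map_one, map_one]
    have h4 := (O.valuation_le_one_iff _).2 (hmem (algebraMap S _ s))
    have h5 := (O.valuation_le_one_iff _).2 (hmem z)
    rw [← hφ]
    apply le_antisymm h4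
    calc 1 = _ := h3.symm
      _ ≤ O.valuation (φ (algebraMap S _ s)) * 1 := by gcongr
      _ = _ := mul_one _

theorem aux_A1 {S L : Type*} [CommRing S] [IsDomain S] [IsNoetherianRing S] [IsIntegrallyClosed S]
    [Field L] [Algebra S L] [IsFractionRing S L] {f g : S} (hf0 : f ≠ 0)
    (h : SatisfiesA1 f g) (y : L) (hfy : ∃ s, algebraMap S L s = algebraMap S L f * y)
    (hgy : ∃ s, algebraMap S L s = algebraMap S L g * y) :
    ∃ s, algebraMap S L s = y := by
  by_contra hy
  let N : Submodule S L := LinearMap.range (Algebra.linearMap S L)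
  have hinj : Function.Injective (algebraMap S L) := IsFractionRing.injective S L
  have hN : ∀ x, x ∈ N ↔ ∃ s, algebraMap S L s = x := fun x => Iff.rfl
  have hyN : (Submodule.Quotient.mk y : L ⧸ N) ≠ 0 := by
    rw [Ne, Submodule.Quotient.mk_eq_zero]; exact hy
  obtain ⟨P, hass, hle⟩ := exists_le_isAssociatedPrime_of_isNoetherianRing S _ hyN
  obtain ⟨hP, zb, hz⟩ := isAssociatedPrime_iff.1 hass
  obtain ⟨z, rfl⟩ := Submodule.Quotient.mk_surjective N zb
  have hmem : ∀ x : S, x ∈ P ↔ ∃ s, algebraMap S L s = algebraMap S L x * z := by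
    intro x
    rw [hz, Submodule.mem_colon_singleton, ← Submodule.Quotient.mk_smul, Submodule.mem_bot,
      Submodule.Quotient.mk_eq_zero, hN, Algebra.smul_def]
  have hle' : ∀ x : S, (∃ s, algebraMap S L s = algebraMap S L x * y) → x ∈ P := by
    intro x hx
    apply hle
    rw [Submodule.mem_colon_singleton, ← Submodule.Quotient.mk_smul, Submodule.mem_bot,
      Submodule.Quotient.mk_eq_zero, hN, Algebra.smul_def]
    exact hx
  have hfP := hle' f hfy
  have hgP := hle' g hgy
  have hzS : ¬ ∃ s, algebraMap S L s = z := by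
    intro hs
    apply hP.ne_top
    rw [Ideal.eq_top_iff_one, hmem]
    simpa using hs
  -- exists q in P with qz not in P
  have hq : ∃ q u : S, q ∈ P ∧ u ∉ P ∧ algebraMap S L u = algebraMap S L q * z := by
    by_contra hcon
    push Not at hcon
    apply hzS
    have hint : IsIntegral S z := by
      refine isIntegral_of_smul_mem_submodule (A := L) (M := L)
        (Submodule.map (Algebra.linearMap S L) P) ?_ ?_ z ?_
      · intro hb
        apply hf0
        have : algebraMap S L f ∈ Submodule.map (Algebra.linearMap S L) P := ⟨f, hfP, rfl⟩
        rw [hb] at this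
        exact hinj (by simpa using this)
      · exact (IsNoetherian.noetherian P).map _
      · rintro _ ⟨q, hqP, rfl⟩
        obtain ⟨u, hu⟩ := (hmem q).1 hqP
        refine ⟨u, ?_, ?_⟩
        · by_contra hc
          exact hcon q u hqP hc hu
        · simp only [Algebra.linearMap_apply, smul_eq_mul]
          rw [hu, mul_comm]
    exact IsIntegrallyClosed.isIntegral_iff.1 hint
  obtain ⟨q, u, hqP, hu, huq⟩ := hq
  have hmin : P ∈ (Ideal.span {q}).minimalPrimes := by
    refine ⟨⟨hP, by simpa [Ideal.span_le] using hqP⟩, ?_⟩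
    rintro J ⟨hJ, hqJ⟩ hJP x hx
    obtain ⟨w, hw⟩ := (hmem x).1 hx
    have hxu : x * u = w * q := by
      apply hinj
      rw [map_mul, map_mul, huq, hw]; ring
    have hqJ' : q ∈ J := hqJ (Ideal.mem_span_singleton_self q)
    have : x * u ∈ J := by rw [hxu]; exact J.mul_mem_left _ hqJ'
    exact (hJ.mem_or_mem this).resolve_right (fun h => hu (hJP h))
  have hh1 : P.height ≤ 1 := Ideal.height_le_one_of_isPrincipal_of_mem_minimalPrimes _ _ hmin
  apply h P ⟨hP, ?_⟩ ⟨hfP, hgP⟩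
  rw [← PrimeSpectrum.height_eq_orderHeight]
  apply le_antisymm hh1
  rw [Order.one_le_iff_pos, pos_iff_ne_zero, Ne, Ideal.height_eq_zero_iff_eq_bot]
  intro hm
  change P = ⊥ at hm
  rw [hm] at hfP
  exact hf0 (by simpa using hfP)

open Polynomial in
theorem aux_span {T K : Type*} [CommRing T] [Field K] [Algebra T K] {p : ℕ} (x y : K)
    (P Q : T[X]) (hP : P.Monic) (hQ : Q.Monic) (hPd : P.natDegree = p) (hQd : Q.natDegree = p)
    (hx : aeval x P = 0) (hy : aeval y Q = 0) :
    Subalgebra.toSubmodule (Algebra.adjoin T {x, y}) =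
      Submodule.span T (Set.range fun ij : Fin p × Fin p => x ^ (ij.1 : ℕ) * y ^ (ij.2 : ℕ)) := by
  have h1 := Submodule.span_range_natDegree_eq_adjoin hP hx
  have h2 := Submodule.span_range_natDegree_eq_adjoin hQ hy
  rw [Set.insert_eq, Algebra.adjoin_union_coe_submodule, ← h1, ← h2, Submodule.span_mul_span,
    hPd, hQd]
  congr 1
  ext z
  simp only [Set.mem_mul, Finset.coe_image, Finset.coe_range, Set.mem_image, Set.mem_Iio,
    Set.mem_range, Prod.exists]
  constructor
  · rintro ⟨_, ⟨i, hi, rfl⟩, _, ⟨j, hj, rfl⟩, rfl⟩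
    exact ⟨⟨i, hi⟩, ⟨j, hj⟩, rfl⟩
  · rintro ⟨i, j, rfl⟩
    exact ⟨_, ⟨i, i.2, rfl⟩, _, ⟨j, j.2, rfl⟩, rfl⟩

/-- integrally closed subalgebra -/
theorem aux_ic {S K : Type*} [CommRing S] [Field K] [Algebra S K] (B : Subalgebra S K)
    (hB : IsIntegrallyClosed B) (x : K) (hx : IsIntegral B x) (s : B) (hs : s ≠ 0)
    (hsx : (s : K) * x ∈ B) : x ∈ B := by
  have hinj : Function.Injective (algebraMap B K) := Subtype.val_injective
  let φ : FractionRing B →ₐ[B] K := IsFractionRing.liftAlgHom (g := Algebra.ofId B K) hinj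
  let z : FractionRing B := algebraMap B _ ⟨_, hsx⟩ / algebraMap B _ s
  have hz : φ z = x := by
    have hs' : (s : K) ≠ 0 := fun h => hs (Subtype.ext h)
    simp only [z, map_div₀, AlgHom.commutes]
    change ((s : K) * x) / (s : K) = x
    field_simp
  have hzi : IsIntegral B z := by
    rw [← isIntegral_algHom_iff φ (RingHom.injective _), hz]; exact hx
  obtain ⟨w, hw⟩ := IsIntegrallyClosed.isIntegral_iff.1 hzi
  rw [← hz, ← hw, AlgHom.commutes]
  exact w.2

/-- trace lemma -/
theorem aux_trace {M K : Type*} [Field M] [Field K] [Algebra M K] {p : ℕ} (hp : p.Prime)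
    (μ : K) (g : M) (hμ : μ ^ p = algebraMap M K g) (hd : Module.finrank M K = p)
    (htop : Algebra.adjoin M {μ} = ⊤) (x : K) :
    algebraMap M K ((p : M) * g) * x =
      ∑ j ∈ Finset.range p, algebraMap M K (Algebra.trace M K (x * μ ^ (p - j))) * μ ^ j := by
  have hfd : FiniteDimensional M K := Module.finite_of_finrank_pos (by rw [hd]; exact hp.pos)
  have hspan := Submodule.span_range_natDegree_eq_adjoin
    (Polynomial.monic_X_pow_sub_C g hp.ne_zero) (x := μ) (by simp [hμ])
  rw [htop, Polynomial.natDegree_X_pow_sub_C] at hspan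
  have hspan' : ⊤ ≤ Submodule.span M (Set.range fun i : Fin p => μ ^ (i : ℕ)) := by
    rw [← Algebra.top_toSubmodule, ← hspan]
    apply Submodule.span_mono
    intro z hz
    simp only [Finset.coe_image, Finset.coe_range, Set.mem_image, Set.mem_Iio] at hz
    obtain ⟨i, hi, rfl⟩ := hz
    exact ⟨⟨i, hi⟩, rfl⟩
  let b : Module.Basis (Fin p) M K := basisOfTopLeSpanOfCardEqFinrank _ hspan' (by simp [hd])
  have hb : ∀ i, b i = μ ^ (i : ℕ) := fun i => by simp [b]
  have hμk : ∀ k, μ ^ k = (g ^ (k / p)) • b ⟨k % p, Nat.mod_lt _ hp.pos⟩ := by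
    intro k
    rw [hb, Algebra.smul_def, map_pow, ← hμ, ← pow_mul, ← pow_add, Nat.div_add_mod]
  have htr : ∀ k, ¬ p ∣ k → Algebra.trace M K (μ ^ k) = 0 := by
    intro k hk
    rw [Algebra.trace_eq_matrix_trace b, Matrix.trace]
    apply Finset.sum_eq_zero
    intro i _
    rw [Matrix.diag_apply, Algebra.leftMulMatrix_eq_repr_mul, hb, ← pow_add, hμk, map_smul,
      Module.Basis.repr_self, Finsupp.smul_apply, Finsupp.single_apply, if_neg, smul_zero]
    intro h
    apply hk
    have h1 : (k + i) % p = (0 + (i : ℕ)) % p := by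
      have := congrArg Fin.val h
      simp only at this
      rw [this, zero_add, Nat.mod_eq_of_lt i.2]
    exact (Nat.modEq_zero_iff_dvd).1 (Nat.ModEq.add_right_cancel' _ h1)
  have htrp : Algebra.trace M K (μ ^ p) = p * g := by
    rw [hμ, Algebra.trace_algebraMap, hd, nsmul_eq_mul]
  have hx := b.sum_repr x
  have key : ∀ j : Fin p, Algebra.trace M K (x * μ ^ (p - (j : ℕ))) = p * g * b.repr x j := by
    intro j
    conv_lhs => rw [← hx]
    rw [Finset.sum_mul, map_sum, Finset.sum_eq_single j]
    · rw [hb, smul_mul_assoc, ← pow_add, Nat.add_sub_cancel' j.2.le, map_smul, htrp, smul_eq_mul]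
      ring
    · intro i _ hij
      rw [hb, smul_mul_assoc, ← pow_add, map_smul, htr, smul_zero]
      rintro ⟨c, hc⟩
      have hi := i.2
      have hj := j.2
      have hne : (i : ℕ) ≠ j := fun h => hij (Fin.ext h)
      rcases c with _ | _ | c
      · omega
      · omega
      · have : p * (c + 1 + 1) = p * c + 2 * p := by ring
        have := Nat.zero_le (p * c)
        omega
    · simp
  rw [Finset.sum_range]
  conv_lhs => rw [← hx]
  rw [Finset.mul_sum]
  refine Finset.sum_congr rfl fun j _ => ?_
  rw [key, hb, Algebra.smul_def]
  simp only [map_mul]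
  ring

open Polynomial in
theorem aux_insep {k κ : Type*} [Field k] [Field κ] [Algebra k κ] {p : ℕ} (hp : p.Prime)
    [CharP κ p] (t : κ) (d : k) (ht : t ^ p = algebraMap k κ d) (Q : k[X]) (hQ : Q ≠ 0)
    (hQd : Q.natDegree < p) (hQt : aeval t Q = 0) : ∃ c : k, algebraMap k κ c = t := by
  have := Fact.mk hp
  by_cases hd : ∃ c : k, c ^ p = d
  · obtain ⟨c, rfl⟩ := hd
    refine ⟨c, ?_⟩
    rw [map_pow] at ht
    exact (frobenius_inj κ p ht).symm
  · push Not at hd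
    exfalso
    have hirr := X_pow_sub_C_irreducible_of_prime hp hd
    have h0 : aeval t (X ^ p - C d) = 0 := by simp [ht]
    have hmin := minpoly.eq_of_irreducible_of_monic hirr h0 (monic_X_pow_sub_C d hp.ne_zero)
    have hdvd := minpoly.dvd k t hQt
    rw [← hmin] at hdvd
    have := natDegree_le_of_dvd hdvd hQ
    rw [natDegree_X_pow_sub_C] at this
    omega

open Polynomial in
theorem aux_poly {S K Γ : Type*} [CommRing S] [Field K] [Algebra S K]
    [LinearOrderedCommGroupWithZero Γ] (v : Valuation K Γ) {p : ℕ} (hp : p.Prime) (q : S)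
    (hv1 : ∀ s : S, v (algebraMap S K s) ≤ 1)
    (hvu : ∀ s : S, ¬ q ∣ s → v (algebraMap S K s) = 1)
    (γ : Γ) (hγ0 : 0 < γ) (hγ1 : γ < 1) (hγq : v (algebraMap S K q) ≤ γ)
    (z : K) (hz : v z ^ p = γ) (W : S[X]) (hWd : W.natDegree < p)
    (hW : ∃ r, ¬ q ∣ W.coeff r) : γ < v (aeval z W) := by
  classical
  set ε := v z with hε
  have hε1 : ε < 1 := by
    by_contra h
    have := one_le_pow_of_one_le' (not_lt.1 h) p
    rw [hz] at this
    exact absurd hγ1 (not_lt.2 this)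
  have hε0 : 0 < ε := by
    rw [pos_iff_ne_zero]
    intro h
    rw [h, zero_pow hp.ne_zero] at hz
    exact hγ0.ne hz
  let r := Nat.find hW
  have hr : ¬ q ∣ W.coeff r := Nat.find_spec hW
  have hrmin : ∀ i < r, q ∣ W.coeff i := fun i hi => not_not.1 (Nat.find_min hW hi)
  have hrd : r ≤ W.natDegree := by
    by_contra h
    apply hr
    rw [coeff_eq_zero_of_natDegree_lt (not_le.1 h)]
    exact dvd_zero _
  have hanti : ∀ i j : ℕ, i < j → ε ^ j < ε ^ i := fun i j h => pow_lt_pow_right_of_lt_one₀ hε0 hε1 h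
  have hrp : γ < ε ^ r := by rw [← hz]; exact hanti _ _ (by omega)
  rw [aeval_eq_sum_range, ← Finset.add_sum_erase _ _ (Finset.mem_range.2 (Nat.lt_succ_of_le hrd)),
    Valuation.map_add_eq_of_lt_left]
  · rw [Algebra.smul_def, map_mul, map_pow, hvu _ hr, one_mul]; exact hrp
  · have h1 : v (W.coeff r • z ^ r) = ε ^ r := by
      rw [Algebra.smul_def, map_mul, map_pow, hvu _ hr, one_mul]
    rw [h1]
    apply Valuation.map_sum_lt
    · exact (pow_pos hε0 r).ne'
    · intro i hi
      rw [Algebra.smul_def, map_mul, map_pow]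
      rcases lt_or_gt_of_ne (Finset.ne_of_mem_erase hi) with h | h
      · obtain ⟨c, hc⟩ := hrmin i h
        rw [hc, map_mul, map_mul]
        calc v (algebraMap S K q) * v (algebraMap S K c) * v z ^ i
            ≤ γ * 1 * 1 := by
              gcongr
              · exact hv1 c
              · exact pow_le_one' hε1.le i
          _ = γ := by simp
          _ < _ := hrp
      · calc v (algebraMap S K (W.coeff i)) * v z ^ i ≤ 1 * v z ^ i := by
              gcongr; exact hv1 _
          _ = ε ^ i := one_mul _
          _ < _ := hanti _ _ h

theorem aux_eta {S K : Type*} [CommRing S] [Field K] [Algebra S K]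
    (O : ValuationSubring K) {p : ℕ} (hp : p.Prime) (hp3 : 3 ≤ p)
    (hv1 : ∀ s : S, O.valuation (algebraMap S K s) ≤ 1)
    (hvu : ∀ s : S, ¬ (p : S) ∣ s → O.valuation (algebraMap S K s) = 1)
    {h₁ h₂ a b : S} {π t u w A B : K} (hu : O.valuation u ≤ 1) (hw : O.valuation w ≤ 1)
    (ht : O.valuation t ≤ 1)
    (hπ0 : 0 < O.valuation π) (hπ1 : O.valuation π < 1)
    (hπp : O.valuation (p : K) = O.valuation π ^ p)
    (hA : A = algebraMap S K a - algebraMap S K h₁ ^ (p - 1) * π - π ^ 2 * u)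
    (hB : B = algebraMap S K b - algebraMap S K h₂ ^ (p - 1) * (t * π) - (t * π) ^ 2 * w)
    (hvA : O.valuation A = 1)
    (htAB : A * t ^ p = B)
    (C D : S) (hz : O.valuation (algebraMap S K D * t - algebraMap S K C) < 1)
    (hCD : (p : S) ∣ D ^ p * b - C ^ p * a)
    (hE : ¬ (p : S) ∣ C * ((C * h₁) ^ (p - 1) - (D * h₂) ^ (p - 1))) :
    O.valuation (algebraMap S K D * t - algebraMap S K C) ^ p = O.valuation π := by
  set v := O.valuation with hv
  set z := algebraMap S K D * t - algebraMap S K C with hzdef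
  set ι := algebraMap S K with hι
  have hodd : Odd p := hp.odd_of_ne_two (by omega)
  have hlt : v (p : K) < v π := by
    rw [hπp]
    calc v π ^ p < v π ^ 1 := pow_lt_pow_right_of_lt_one₀ hπ0 hπ1 (by omega)
      _ = _ := pow_one _
  -- freshman
  obtain ⟨X, hX, hzp⟩ : ∃ X : K, v X ≤ 1 ∧ z ^ p = ι D ^ p * t ^ p - ι C ^ p + p * X := by
    let x' : O := ⟨ι D * t, (O.valuation_le_one_iff _).1 (by
      rw [map_mul]; exact mul_le_one' (hv1 D) ht)⟩
    let y' : O := ⟨ι C, (O.valuation_le_one_iff _).1 (hv1 C)⟩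
    obtain ⟨r, hr⟩ := exists_add_pow_prime_eq hp x' (-y')
    refine ⟨(x' * -y' * r : O), (O.valuation_le_one_iff _).2 (x' * -y' * r).2, ?_⟩
    have := congrArg (Subtype.val) hr
    rw [hodd.neg_pow] at this
    push_cast at this
    simp only [x', y'] at this
    rw [hzdef, sub_eq_add_neg, this]; push_cast; simp only [x', y']; ring
  obtain ⟨e, he⟩ := hCD
  have he' : ι D ^ p * ι b - ι C ^ p * ι a = p * ι e := by
    rw [← map_pow, ← map_pow, ← map_mul, ← map_mul, ← map_sub, he, map_mul, map_natCast]
  obtain ⟨n, hn⟩ : ∃ n, p = n + 1 := ⟨p - 1, by omega⟩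
  have hn' : p - 1 = n := by omega
  have hmain : A * z ^ p = ι (C * ((C * h₁) ^ (p - 1) - (D * h₂) ^ (p - 1))) * π +
      (p * (ι e + A * X) + π * (z * (-(ι (D * h₂) ^ n)) + π * (ι C ^ p * u - ι D ^ p * t ^ 2 * w))) := by
    have h1 : A * z ^ p = ι D ^ p * B - ι C ^ p * A + p * (A * X) := by
      rw [hzp, ← htAB]; ring
    have h2 : ι D ^ p * B - ι C ^ p * A = p * ι e - ι D ^ n * ι h₂ ^ n * ((ι D * t) * π) +
        ι C ^ (n+1) * ι h₁ ^ n * π + π ^ 2 * (ι C ^ p * u - ι D ^ p * t ^ 2 * w) := by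
      rw [← he', hA, hB, hn', hn]; ring
    have h3 : ι D * t = z + ι C := by rw [hzdef]; ring
    rw [h1, h2, h3, hn']
    simp only [map_mul, map_sub, map_pow]
    ring
  have hle1 : v A ≤ 1 := hvA.le
  have hs : v (A * z ^ p) = v π := by
    rw [hmain, Valuation.map_add_eq_of_lt_left]
    · rw [map_mul, hvu _ hE, one_mul]
    · have hR : v (ι (C * ((C * h₁) ^ (p - 1) - (D * h₂) ^ (p - 1))) * π) = v π := by
        rw [map_mul, hvu _ hE, one_mul]
      rw [hR]
      apply Valuation.map_add_lt
      · rw [map_mul]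
        refine lt_of_le_of_lt (mul_le_of_le_one_right' ?_) hlt
        apply Valuation.map_add_le _ (hv1 e)
        rw [map_mul]; exact mul_le_one' hle1 hX
      · rw [map_mul]
        have : v (z * (-(ι (D * h₂) ^ n)) + π * (ι C ^ p * u - ι D ^ p * t ^ 2 * w)) < 1 := by
          apply Valuation.map_add_lt
          · rw [map_mul, Valuation.map_neg, map_pow]
            exact lt_of_le_of_lt (mul_le_of_le_one_right' (pow_le_one' (hv1 _) _)) hz
          · rw [map_mul]
            refine lt_of_le_of_lt (mul_le_of_le_one_right' ?_) hπ1
            apply Valuation.map_sub_le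
            · rw [map_mul, map_pow]
              exact mul_le_one' (pow_le_one' (hv1 _) _) hu
            · rw [map_mul, map_mul, map_pow, map_pow]
              exact mul_le_one' (mul_le_one' (pow_le_one' (hv1 _) _) (pow_le_one' ht _)) hw
        calc _ < v π * 1 := by gcongr
          _ = _ := mul_one _
  rw [map_mul, hvA, one_mul, map_pow] at hs
  exact hs

open Polynomial in
theorem aux_Qt {S K : Type*} [CommRing S] [IsDomain S] [Field K] [Algebra S K]
    (O : ValuationSubring K) {p : ℕ} (hp : p.Prime) (hp3 : 3 ≤ p) (hpS : Prime (p : S))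
    (hv1 : ∀ s : S, O.valuation (algebraMap S K s) ≤ 1)
    (hvu : ∀ s : S, ¬ (p : S) ∣ s → O.valuation (algebraMap S K s) = 1)
    {h₁ h₂ a b : S} {π t u w A B : K} (hu : O.valuation u ≤ 1) (hw : O.valuation w ≤ 1)
    (ht : O.valuation t ≤ 1) (ha : ¬ (p : S) ∣ a) (hb : ¬ (p : S) ∣ b)
    (hπ0 : 0 < O.valuation π) (hπ1 : O.valuation π < 1)
    (hπp : O.valuation (p : K) = O.valuation π ^ p)
    (hA : A = algebraMap S K a - algebraMap S K h₁ ^ (p - 1) * π - π ^ 2 * u)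
    (hB : B = algebraMap S K b - algebraMap S K h₂ ^ (p - 1) * (t * π) - (t * π) ^ 2 * w)
    (hvA : O.valuation A = 1)
    (htAB : A * t ^ p = B)
    (hE : ∀ C D : S, ¬ (p : S) ∣ C → ¬ (p : S) ∣ D → (p : S) ∣ D ^ p * b - C ^ p * a →
      ¬ (p : S) ∣ C * ((C * h₁) ^ (p - 1) - (D * h₂) ^ (p - 1)))
    (Q : S[X]) (hQd : Q.natDegree < p) (hQ : ∃ r, ¬ (p : S) ∣ Q.coeff r) :
    O.valuation π < O.valuation (aeval t Q) := by
  by_contra hcon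
  have hcon := not_lt.1 hcon
  have hlt : O.valuation (p : K) < O.valuation π := by
    rw [hπp]
    calc O.valuation π ^ p < O.valuation π ^ 1 :=
        pow_lt_pow_right_of_lt_one₀ hπ0 hπ1 (by omega)
      _ = _ := pow_one _
  let κ := IsLocalRing.ResidueField O
  let j : S →+* O := (algebraMap S K).codRestrict O.toSubring
    (fun s => (O.valuation_le_one_iff _).1 (hv1 s))
  have hj : ∀ s, ((j s : O) : K) = algebraMap S K s := fun s => rfl
  let res : O →+* κ := IsLocalRing.residue O
  have hres : ∀ x : O, res x = 0 ↔ O.valuation (x : K) < 1 := by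
    intro x
    rw [IsLocalRing.residue_eq_zero_iff, ValuationSubring.valuation_lt_one_iff]
  have hjp : ∀ s, res (j s) = 0 ↔ (p : S) ∣ s := by
    intro s
    rw [hres, hj]
    constructor
    · intro h
      by_contra hs
      rw [hvu s hs] at h
      exact lt_irrefl _ h
    · rintro ⟨c, rfl⟩
      rw [map_mul, map_mul, map_natCast]
      exact lt_of_le_of_lt (mul_le_of_le_one_right' (hv1 c)) (hlt.trans hπ1)
  let I : Ideal S := Ideal.span {(p : S)}
  have hI : I.IsPrime := (Ideal.span_singleton_prime hpS.ne_zero).2 hpS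
  let k := FractionRing (S ⧸ I)
  have hIker : ∀ s ∈ I, (res.comp j) s = 0 := fun s hs =>
    (hjp s).2 (Ideal.mem_span_singleton.1 hs)
  let ψ : S ⧸ I →+* κ := Ideal.Quotient.lift I (res.comp j) hIker
  have hψ : ∀ s, ψ (Ideal.Quotient.mk I s) = res (j s) := fun s => rfl
  have hmk : ∀ s, Ideal.Quotient.mk I s = 0 ↔ (p : S) ∣ s := fun s => by
    rw [Ideal.Quotient.eq_zero_iff_mem, Ideal.mem_span_singleton]
  have hψi : Function.Injective ψ := by
    rw [injective_iff_map_eq_zero]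
    intro x hx
    obtain ⟨s, rfl⟩ := Ideal.Quotient.mk_surjective x
    rw [hmk, ← hjp]
    exact hx
  let Φ : k →+* κ := IsFractionRing.lift hψi
  have hΦ : ∀ s, Φ (algebraMap (S ⧸ I) k (Ideal.Quotient.mk I s)) = res (j s) := fun s => by
    rw [← hψ]; exact IsFractionRing.lift_algebraMap hψi _
  let _ : Algebra k κ := Φ.toAlgebra
  have hp0 : ((p : ℕ) : κ) = 0 := by
    have := (hjp (p : S)).2 dvd_rfl
    simpa using this
  have : CharP κ p := (CharP.charP_iff_prime_eq_zero hp).2 hp0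
  let t' : O := ⟨t, (O.valuation_le_one_iff _).1 ht⟩
  -- relation
  have hrel : res (j a) * res t' ^ p = res (j b) := by
    rw [← map_pow, ← map_mul, ← sub_eq_zero, ← map_sub, hres]
    have : (((j a) * t' ^ p - j b : O) : K) =
        π * ((algebraMap S K h₁ ^ (p - 1) + π * u) * t ^ p
          - (algebraMap S K h₂ ^ (p - 1) * t + π * (t ^ 2 * w))) := by
      push_cast
      rw [hj, hj]
      have e1 : algebraMap S K a = A + algebraMap S K h₁ ^ (p - 1) * π + π ^ 2 * u := by
        rw [hA]; ring
      have e2 : algebraMap S K b = B + algebraMap S K h₂ ^ (p - 1) * (t * π) + (t * π) ^ 2 * w := by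
        rw [hB]; ring
      rw [e1, e2, ← htAB]
      ring
    rw [this, map_mul]
    refine lt_of_le_of_lt (mul_le_of_le_one_right' ?_) hπ1
    apply Valuation.map_sub_le
    · rw [map_mul, map_pow]
      refine mul_le_one' (Valuation.map_add_le _ ?_ ?_) (pow_le_one' ht _)
      · rw [map_pow]; exact pow_le_one' (hv1 _) _
      · rw [map_mul]; exact mul_le_one' hπ1.le hu
    · apply Valuation.map_add_le
      · rw [map_mul, map_pow]; exact mul_le_one' (pow_le_one' (hv1 _) _) ht
      · rw [map_mul, map_mul, map_pow]
        exact mul_le_one' hπ1.le (mul_le_one' (pow_le_one' ht _) hw)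
  have ha0 : res (j a) ≠ 0 := fun h => ha ((hjp a).1 h)
  have hQres : (Q.map (res.comp j)).eval (res t') = 0 := by
    rw [eval_map, ← hom_eval₂, hres]
    have : ((eval₂ j t' Q : O) : K) = aeval t Q := by
      have := hom_eval₂ Q j O.subtype t'
      rw [aeval_def]
      exact this
    rw [this]
    exact hcon.trans_lt hπ1
  let Qk : k[X] := Q.map ((algebraMap (S ⧸ I) k).comp (Ideal.Quotient.mk I))
  have hQk : Qk ≠ 0 := by
    obtain ⟨r, hr⟩ := hQ
    intro h
    apply hr
    have := congrArg (fun P => coeff P r) h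
    simp only [Qk, coeff_map, coeff_zero, RingHom.comp_apply] at this
    rw [← hmk]
    exact (IsFractionRing.injective (S ⧸ I) k) (by rw [this, map_zero])
  obtain ⟨c, hc⟩ := aux_insep (k := k) hp (res t')
    (algebraMap (S ⧸ I) k (Ideal.Quotient.mk I b) / algebraMap (S ⧸ I) k (Ideal.Quotient.mk I a))
    (by
      change _ = Φ _
      rw [map_div₀, hΦ, hΦ, eq_div_iff ha0, ← hrel, mul_comm])
    Qk hQk (lt_of_le_of_lt natDegree_map_le hQd)
    (by
      rw [← hQres, aeval_def, eval₂_map, eval_map]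
      congr 1
      exact RingHom.ext hΦ)
  obtain ⟨Cb, Db, hD0, rfl⟩ := IsFractionRing.div_surjective (S ⧸ I) c
  obtain ⟨C, rfl⟩ := Ideal.Quotient.mk_surjective Cb
  obtain ⟨D, rfl⟩ := Ideal.Quotient.mk_surjective Db
  have hD : ¬ (p : S) ∣ D := by
    rw [← hmk]; exact nonZeroDivisors.ne_zero hD0
  have hD' : res (j D) ≠ 0 := fun h => hD ((hjp D).1 h)
  change Φ _ = _ at hc
  rw [map_div₀, hΦ, hΦ, div_eq_iff hD'] at hc
  have hz : O.valuation (algebraMap S K D * t - algebraMap S K C) < 1 := by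
    have := (hres (j D * t' - j C)).1 (by rw [map_sub, map_mul, hc]; ring)
    simpa [hj, t'] using this
  have hCD : (p : S) ∣ D ^ p * b - C ^ p * a := by
    rw [← hjp]
    simp only [map_sub, map_mul, map_pow]
    rw [hc, ← hrel]; ring
  have hC : ¬ (p : S) ∣ C := by
    intro h
    have h1 : (p : S) ∣ D ^ p * b := by
      have := dvd_add hCD ((h.trans (dvd_pow_self C hp.ne_zero)).mul_right a)
      simpa using this
    rcases hpS.dvd_or_dvd h1 with h2 | h2
    · exact hD (hpS.dvd_of_dvd_pow h2)
    · exact hb h2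
  have heta := aux_eta O hp hp3 hv1 hvu hu hw ht hπ0 hπ1 hπp hA hB hvA htAB C D hz hCD
    (hE C D hC hD hCD)
  have hW := aux_poly O.valuation hp (p : S) hv1 hvu (O.valuation π) hπ0 hπ1
    (by rw [map_natCast]; exact hlt.le) _ heta (taylor C (Q.scaleRoots D))
    (by rw [natDegree_taylor, natDegree_scaleRoots]; exact hQd)
    (by
      by_contra hno
      push Not at hno
      have h0 : (taylor C (Q.scaleRoots D)).map (Ideal.Quotient.mk I) = 0 := by
        ext r
        rw [coeff_map, coeff_zero, hmk]; exact hno r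
      rw [map_taylor, taylor_eq_zero] at h0
      obtain ⟨r, hr⟩ := hQ
      have h1 := congrArg (fun P => coeff P r) h0
      simp only [coeff_map, coeff_zero, coeff_scaleRoots, hmk] at h1
      rcases hpS.dvd_or_dvd h1 with h2 | h2
      · exact hr h2
      · exact hD (hpS.dvd_of_dvd_pow h2))
  apply not_lt.2 hcon
  have he : aeval (algebraMap S K D * t - algebraMap S K C) (taylor C (Q.scaleRoots D)) =
      algebraMap S K D ^ Q.natDegree * aeval t Q := by
    rw [taylor_apply, aeval_comp]
    simp only [map_add, aeval_X, aeval_C, sub_add_cancel]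
    rw [aeval_def, scaleRoots_eval₂_mul, aeval_def]
  rw [he, map_mul, map_pow, hvu D hD, one_pow, one_mul] at hW
  exact hW

theorem aux_fp {F : Type*} [Field F] {p : ℕ} (hp : p.Prime) [CharP F p] (x : F) (hx : x ≠ 0)
    (h : x ^ (p - 1) = 1) : ∃ j : ℕ, 1 ≤ j ∧ j ≤ p - 1 ∧ x = j := by
  have := Fact.mk hp
  have h1 : x ^ p = x := by
    have : p = p - 1 + 1 := by have := hp.pos; omega
    rw [this, pow_succ, h, one_mul]
  have h2 := (Subfield.mem_bot_iff_pow_eq_self F p).2 h1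
  have h3 : x ∈ (ZMod.castHom dvd_rfl F : ZMod p →+* F).fieldRange :=
    (bot_le : (⊥ : Subfield F) ≤ _) h2
  obtain ⟨n, hn⟩ := h3
  refine ⟨n.val, ?_, ?_, ?_⟩
  · rw [Nat.one_le_iff_ne_zero]
    intro h0
    apply hx
    rw [← hn, (ZMod.val_eq_zero n).1 h0, map_zero]
  · have := ZMod.val_lt n; omega
  · rw [← hn]; simp

theorem aux_hE {S : Type*} [CommRing S] [IsDomain S] {p : ℕ} (hp : p.Prime) (hp3 : 3 ≤ p)
    (hpS : Prime (p : S)) {f g h₁ h₂ a b : S}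
    (hf : f = h₁ ^ p + a * (p : S)) (hg : g = h₂ ^ p + b * (p : S))
    (hnotin : ∀ i : ℕ, 1 ≤ i → i ≤ p - 1 → ¬∃ x y : S, f * g ^ i = x ^ p + y * (p : S) ^ 2)
    (C D : S) (hC : ¬ (p : S) ∣ C) (hD : ¬ (p : S) ∣ D)
    (hCD : (p : S) ∣ D ^ p * b - C ^ p * a) :
      ¬ (p : S) ∣ C * ((C * h₁) ^ (p - 1) - (D * h₂) ^ (p - 1)) := by
  -- general expansion
  have hexp : ∀ n : ℕ, n + 1 ≤ p - 1 →
      ¬ (p : S) ∣ h₂ ^ (p * n) * (a * h₂ ^ p + (n + 1) * b * h₁ ^ p) := by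
    rintro n hn ⟨c, hc⟩
    apply hnotin (n + 1) (by omega) hn
    have h1 : ∀ m : ℕ, ∃ r, g ^ (m + 1) =
        h₂ ^ (p * (m + 1)) + (m + 1) * b * p * h₂ ^ (p * m) + r * (p : S) ^ 2 := by
      intro m
      induction m with
      | zero => exact ⟨0, by rw [hg]; simp⟩
      | succ m ih =>
        obtain ⟨r, hr⟩ := ih
        refine ⟨r * g + (m + 1) * b ^ 2 * h₂ ^ (p * m), ?_⟩
        rw [pow_succ, hr, hg]
        push_cast
        ring
    obtain ⟨r, hr⟩ := h1 n
    refine ⟨h₁ * h₂ ^ (n + 1), c + a * (n + 1) * b * h₂ ^ (p * n) + f * r, ?_⟩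
    have : f * g ^ (n + 1) = (h₁ * h₂ ^ (n + 1)) ^ p
        + p * (h₂ ^ (p * n) * (a * h₂ ^ p + (n + 1) * b * h₁ ^ p))
        + p ^ 2 * (a * (n + 1) * b * h₂ ^ (p * n)) + f * r * (p : S) ^ 2 := by
      rw [hr, mul_add, hf]
      ring
    rw [this, hc]; ring
  have hh2 : ¬ (p : S) ∣ h₂ := by
    intro h
    apply hexp 1 (by omega)
    exact (h.trans (dvd_pow_self h₂ (by simp [hp.ne_zero]))).mul_right _
  intro hdvd
  let I : Ideal S := Ideal.span {(p : S)}
  have hI : I.IsPrime := (Ideal.span_singleton_prime hpS.ne_zero).2 hpS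
  let k := FractionRing (S ⧸ I)
  let φ : S →+* k := (algebraMap (S ⧸ I) k).comp (Ideal.Quotient.mk I)
  have hφ : ∀ s, φ s = 0 ↔ (p : S) ∣ s := fun s => by
    rw [← Ideal.mem_span_singleton, ← Ideal.Quotient.eq_zero_iff_mem (I := I)]
    simp only [φ, RingHom.comp_apply]
    exact map_eq_zero_iff _ (IsFractionRing.injective (S ⧸ I) k)
  have hp0 : ((p : ℕ) : k) = 0 := by
    have := (hφ (p : S)).2 dvd_rfl
    rwa [map_natCast] at this
  have : CharP k p := (CharP.charP_iff_prime_eq_zero hp).2 hp0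
  have hF := Fact.mk hp
  have hC' : φ C ≠ 0 := fun h => hC ((hφ _).1 h)
  have hD' : φ D ≠ 0 := fun h => hD ((hφ _).1 h)
  have hh2' : φ h₂ ≠ 0 := fun h => hh2 ((hφ _).1 h)
  have h1 := (hφ _).2 hdvd
  simp only [map_mul, map_sub, map_pow] at h1
  have h2 : (φ C * φ h₁) ^ (p - 1) = (φ D * φ h₂) ^ (p - 1) :=
    sub_eq_zero.1 ((mul_eq_zero.1 h1).resolve_left hC')
  have hne : φ C * φ h₁ ≠ 0 := by
    intro h
    rw [h, zero_pow (by omega)] at h2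
    exact pow_ne_zero _ (mul_ne_zero hD' hh2') h2.symm
  obtain ⟨j, hj1, hj2, hj⟩ := aux_fp hp ((φ D * φ h₂) / (φ C * φ h₁))
    (div_ne_zero (mul_ne_zero hD' hh2') hne)
    (by rw [div_pow, h2, div_self (pow_ne_zero _ (mul_ne_zero hD' hh2'))])
  rw [div_eq_iff hne] at hj
  have h3 := congrArg (· ^ p) hj
  have hjp : (j : k) ^ p = j := by
    have := map_natCast (frobenius k p) j
    rwa [frobenius_def] at this
  simp only [mul_pow, hjp] at h3
  have h4 := (hφ _).2 hCD
  simp only [map_mul, map_sub, map_pow] at h4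
  have h5 : φ a * φ h₂ ^ p = j * φ b * φ h₁ ^ p := by
    apply mul_left_cancel₀ (pow_ne_zero p hD')
    linear_combination φ a * h3 - j * φ h₁ ^ p * h4
  obtain ⟨n, hn⟩ : ∃ n, p = n + 1 + j := ⟨p - j - 1, by omega⟩
  apply hexp n (by omega)
  rw [← hφ]
  have hnj : (n : k) + 1 + j = 0 := by
    have := hp0
    rw [hn] at this
    exact_mod_cast this
  simp only [map_mul, map_add, map_pow, map_natCast, map_one]
  rw [h5]
  linear_combination (φ h₂ ^ (p * n)) * φ b * φ h₁ ^ p * hnj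

theorem aux_binom {R : Type*} [CommRing R] {p : ℕ} (hp : p.Prime) (hp3 : 3 ≤ p) (x y : R) :
    ∃ r, (x + y) ^ p = x ^ p + y ^ p + p * (x * y ^ (p - 1) + x ^ 2 * r) := by
  obtain ⟨n, rfl⟩ : ∃ n, p = n + 3 := ⟨p - 3, by omega⟩
  have hd : ∀ i ∈ Finset.range (n + 1), ∃ c, (n + 3).choose (i + 2) = (n + 3) * c := by
    intro i hi
    have := Finset.mem_range.1 hi
    exact hp.dvd_choose_self (by omega) (by omega)
  choose! c hc using hd
  refine ⟨∑ i ∈ Finset.range (n + 1), x ^ i * y ^ (n + 3 - (i + 2)) * c i, ?_⟩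
  rw [add_pow, Finset.sum_range_succ, Finset.sum_range_succ', Finset.sum_range_succ']
  have : ∑ i ∈ Finset.range (n + 1), x ^ (i + 1 + 1) * y ^ (n + 3 - (i + 1 + 1)) *
      ((n + 3).choose (i + 1 + 1) : R) = ((n + 3 : ℕ) : R) * (x ^ 2 *
      ∑ i ∈ Finset.range (n + 1), x ^ i * y ^ (n + 3 - (i + 2)) * c i) := by
    rw [Finset.mul_sum, Finset.mul_sum]
    refine Finset.sum_congr rfl fun i hi => ?_
    rw [show i + 1 + 1 = i + 2 from rfl, hc i hi]
    push_cast
    ring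
  rw [this]
  simp
  ring

theorem aux_denom {S L K : Type*} [CommRing S] [IsDomain S] [Field L] [Algebra S L]
    [IsFractionRing S L] [Field K] [Algebra L K] [Algebra S K] [IsScalarTower S L K]
    (ω : K) (x : K) (hx : x ∈ Algebra.adjoin L ({ω} : Set K)) :
    ∃ s : S, s ≠ 0 ∧ algebraMap S K s * x ∈ Algebra.adjoin S ({ω} : Set K) := by
  induction hx using Algebra.adjoin_induction with
  | mem x hx =>
    refine ⟨1, one_ne_zero, ?_⟩
    rw [map_one, one_mul]
    exact Algebra.subset_adjoin hx
  | algebraMap l =>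
    obtain ⟨a, s, hs, rfl⟩ := IsFractionRing.div_surjective S l
    have hs0 := nonZeroDivisors.ne_zero hs
    refine ⟨s, hs0, ?_⟩
    have hsL : algebraMap S L s ≠ 0 := fun h =>
      hs0 (IsFractionRing.injective S L (by rw [h, map_zero]))
    rw [IsScalarTower.algebraMap_apply S L K, ← map_mul, mul_div_cancel₀ _ hsL,
      ← IsScalarTower.algebraMap_apply]
    exact Subalgebra.algebraMap_mem _ _
  | add x y _ _ hx hy =>
    obtain ⟨s, hs, hsx⟩ := hx
    obtain ⟨t, ht, hty⟩ := hy
    refine ⟨s * t, mul_ne_zero hs ht, ?_⟩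
    have : algebraMap S K (s * t) * (x + y) = algebraMap S K t * (algebraMap S K s * x) +
      algebraMap S K s * (algebraMap S K t * y) := by rw [map_mul]; ring
    rw [this]
    exact add_mem (mul_mem (Subalgebra.algebraMap_mem _ _) hsx)
      (mul_mem (Subalgebra.algebraMap_mem _ _) hty)
  | mul x y _ _ hx hy =>
    obtain ⟨s, hs, hsx⟩ := hx
    obtain ⟨t, ht, hty⟩ := hy
    refine ⟨s * t, mul_ne_zero hs ht, ?_⟩
    have : algebraMap S K (s * t) * (x * y) = (algebraMap S K s * x) *
      (algebraMap S K t * y) := by rw [map_mul]; ring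
    rw [this]
    exact mul_mem hsx hty

open Polynomial IntermediateField in
theorem aux_pg {S L K : Type*} [CommRing S] [IsDomain S] [Field L] [Algebra S L]
    [IsFractionRing S L] [Field K] [Algebra L K] [Algebra S K] [IsScalarTower S L K]
    {p : ℕ} (hp : p.Prime) {f g : S} {ω μ : K} (hω : ω ^ p = algebraMap S K f)
    (hμ : μ ^ p = algebraMap S K g)
    (hKgen : Algebra.adjoin L ({ω, μ} : Set K) = ⊤)
    (hdeg : Module.finrank L K = p ^ 2)
    (hicω : IsIntegrallyClosed (Algebra.adjoin S ({ω} : Set K)))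
    (x : K) (hx : IsIntegral S x) :
    (p : K) * algebraMap S K g * x ∈ Algebra.adjoin S ({ω, μ} : Set K) := by
  classical
  have hfin : FiniteDimensional L K :=
    Module.finite_of_finrank_pos (by rw [hdeg]; exact pow_pos hp.pos 2)
  let M : IntermediateField L K := L⟮ω⟯
  have htower : IsScalarTower S M K := .of_algebraMap_eq (fun _ => rfl)
  have hωM : ω ∈ M := mem_adjoin_simple_self L ω
  have hMle : Module.finrank L M ≤ p := by
    rw [adjoin.finrank (Algebra.IsIntegral.isIntegral ω)]
    have h0 : aeval ω (X ^ p - C (algebraMap S L f)) = 0 := by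
      simp [hω, ← IsScalarTower.algebraMap_apply]
    have := natDegree_le_of_dvd (minpoly.dvd L ω h0) (X_pow_sub_C_ne_zero hp.pos _)
    rwa [natDegree_X_pow_sub_C] at this
  have htop : Algebra.adjoin M ({μ} : Set K) = ⊤ := by
    rw [eq_top_iff]
    intro y _
    have hy : y ∈ Algebra.adjoin L ({ω, μ} : Set K) := by rw [hKgen]; trivial
    have hle : Algebra.adjoin L ({ω, μ} : Set K) ≤
        (Algebra.adjoin M ({μ} : Set K)).restrictScalars L := by
      rw [Algebra.adjoin_le_iff]
      rintro z (rfl | rfl)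
      · exact Subalgebra.algebraMap_mem (Algebra.adjoin M ({μ} : Set K)) (⟨z, hωM⟩ : M)
      · exact Algebra.subset_adjoin (R := M) rfl
    exact hle hy
  have hgM : algebraMap M K (algebraMap S M g) = algebraMap S K g := rfl
  have hKle : Module.finrank M K ≤ p := by
    have hspan := Submodule.span_range_natDegree_eq_adjoin
      (monic_X_pow_sub_C (algebraMap S M g) hp.ne_zero) (x := μ) (by simp [hμ, hgM])
    rw [htop, natDegree_X_pow_sub_C] at hspan
    have h1 := finrank_span_finset_le_card (R := M) (Finset.image (μ ^ ·) (Finset.range p))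
    rw [Set.finrank, hspan, Algebra.top_toSubmodule, finrank_top] at h1
    exact h1.trans (Finset.card_image_le.trans (by simp))
  have hmul := Module.finrank_mul_finrank L M K
  rw [hdeg] at hmul
  have hKeq : Module.finrank M K = p := by
    apply le_antisymm hKle
    by_contra h
    have h := not_le.1 h
    have : Module.finrank L M * Module.finrank M K ≤ p * Module.finrank M K :=
      Nat.mul_le_mul_right _ hMle
    have h2 : p * Module.finrank M K < p * p := Nat.mul_lt_mul_of_pos_left h hp.pos
    rw [hmul, pow_two] at this
    omega
  have key := aux_trace hp μ (algebraMap S M g) (by rw [hμ, hgM]) hKeq htop x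
  rw [map_mul, hgM, map_natCast] at key
  rw [key]
  have hfinM : FiniteDimensional M K := Module.Finite.right L M K
  have hμi : IsIntegral S μ := IsIntegral.of_pow hp.pos (by rw [hμ]; exact isIntegral_algebraMap)
  have hle1 : Algebra.adjoin S ({ω} : Set K) ≤ Algebra.adjoin S ({ω, μ} : Set K) :=
    Algebra.adjoin_mono (by simp)
  refine sum_mem fun j _ => mul_mem (hle1 ?_) (pow_mem (Algebra.subset_adjoin (by simp)) _)
  set c := Algebra.trace M K (x * μ ^ (p - j)) with hc
  have hci : IsIntegral S c := Algebra.isIntegral_trace (hx.mul (hμi.pow _))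
  have hci' : IsIntegral S (algebraMap M K c) := hci.algebraMap
  have hcm : algebraMap M K c ∈ Algebra.adjoin L ({ω} : Set K) := by
    have h2 : M.toSubalgebra = Algebra.adjoin L ({ω} : Set K) :=
      adjoin_simple_toSubalgebra_of_isAlgebraic (Algebra.IsIntegral.isIntegral ω).isAlgebraic
    rw [← h2]
    exact c.2
  obtain ⟨s, hs, hsc⟩ := aux_denom (S := S) ω _ hcm
  refine aux_ic _ hicω _ hci'.tower_top (algebraMap S _ s) ?_ hsc
  intro h0
  apply hs
  have h1 := congrArg Subtype.val h0
  have hinj : Function.Injective (algebraMap S K) := by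
    rw [IsScalarTower.algebraMap_eq S L K]
    exact (algebraMap L K).injective.comp (IsFractionRing.injective S L)
  apply hinj
  rw [map_zero]
  exact h1

theorem aux_pa {S K : Type*} [CommRing S] [Field K] [Algebra S K] (B : Subalgebra S K)
    (hB : IsIntegrallyClosed B) {p : ℕ} (hp : p.Prime) (hp3 : 3 ≤ p) (hpK : (p : K) ≠ 0)
    {a h : S} {π u : K} (hπB : π ∈ B) (huB : u ∈ B)
    (hπ : π ^ p = p * (algebraMap S K a - algebraMap S K h ^ (p - 1) * π - π ^ 2 * u))
    (hπ0 : π ≠ 0) (hpa : (p : S) ∣ a) : π ^ (p - 1) / p ∈ B := by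
  obtain ⟨a', rfl⟩ := hpa
  obtain ⟨n, rfl⟩ : ∃ n, p = n + 2 := ⟨p - 2, by omega⟩
  simp only [show n + 2 - 1 = n + 1 from rfl] at *
  set q : K := ((n + 2 : ℕ) : K) with hq
  have hqB : ((((n + 2 : ℕ) : B)) : K) = q := map_natCast B.val (n + 2)
  set τ : K := π ^ (n + 1) / q with hτ
  let w : B := algebraMap S B h ^ (n + 1) + ⟨π, hπB⟩ * ⟨u, huB⟩
  have hw : (w : K) = algebraMap S K h ^ (n + 1) + π * u := rfl
  have hπτ : π ^ (n + 1) = q * τ := by rw [hτ]; field_simp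
  have h1 : π * (τ + w) = q * algebraMap S K a' := by
    apply mul_left_cancel₀ hpK
    rw [hw]
    rw [map_mul, map_natCast, ← hq] at hπ
    have : π * (q * τ) = q * (q * algebraMap S K a' - algebraMap S K h ^ (n + 1) * π - π ^ 2 * u) := by
      rw [← hπ, ← hπτ]; ring
    linear_combination this
  have h2 : τ * (τ + w) ^ (n + 1) = q ^ n * algebraMap S K a' ^ (n + 1) := by
    apply mul_left_cancel₀ hpK
    have := congrArg (· ^ (n + 1)) h1
    simp only [mul_pow, hπτ] at this
    linear_combination this
  refine aux_ic B hB τ ?_ (((n + 2 : ℕ) : B)) ?_ ?_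
  · let c : B := ((n + 2 : ℕ) : B) ^ n * algebraMap S B a' ^ (n + 1)
    have hc : (c : K) = q ^ n * algebraMap S K a' ^ (n + 1) := by
      rw [← hqB]; rfl
    refine ⟨Polynomial.X * (Polynomial.X + Polynomial.C w) ^ (n + 1) - Polynomial.C c, ?_, ?_⟩
    · apply Polynomial.Monic.sub_of_left
      · exact Polynomial.monic_X.mul ((Polynomial.monic_X_add_C w).pow _)
      · rw [Polynomial.degree_mul, Polynomial.degree_X, Polynomial.degree_pow,
          Polynomial.degree_X_add_C]
        refine lt_of_le_of_lt Polynomial.degree_C_le ?_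
        rw [nsmul_eq_mul, mul_one]
        exact_mod_cast (by omega : 0 < 1 + (n + 1))
    · rw [← Polynomial.aeval_def]
      simp only [map_sub, map_mul, map_pow, map_add, Polynomial.aeval_X, Polynomial.aeval_C]
      change τ * (τ + (w : K)) ^ (n + 1) - (c : K) = 0
      rw [h2, hc, sub_self]
  · intro h0
    apply hpK
    rw [← hqB, h0]; rfl
  · have : ((((n + 2 : ℕ) : B)) : K) * τ = π ^ (n + 1) := by
      rw [hπτ, hqB]
    rw [this]
    exact pow_mem hπB _

open Polynomial in
theorem aux_val_main {S K : Type*} [CommRing S] [IsDomain S] [Field K] [Algebra S K]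
    (hinj : Function.Injective (algebraMap S K))
    {p : ℕ} (hp : p.Prime) (hp3 : 3 ≤ p) (hpS : Prime (p : S))
    {h₁ h₂ a b : S} {π ρ u w : K} (hπi : IsIntegral S π) (hρi : IsIntegral S ρ)
    (hui : IsIntegral S u) (hwi : IsIntegral S w)
    (hπ : π ^ p = p * (algebraMap S K a - algebraMap S K h₁ ^ (p - 1) * π - π ^ 2 * u))
    (hρ : ρ ^ p = p * (algebraMap S K b - algebraMap S K h₂ ^ (p - 1) * ρ - ρ ^ 2 * w))
    (ha : ¬ (p : S) ∣ a) (hb : ¬ (p : S) ∣ b)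
    (hE : ∀ C D : S, ¬ (p : S) ∣ C → ¬ (p : S) ∣ D → (p : S) ∣ D ^ p * b - C ^ p * a →
      ¬ (p : S) ∣ C * ((C * h₁) ^ (p - 1) - (D * h₂) ^ (p - 1)))
    (s : Fin p × Fin p → S) (x : K) (hx : IsIntegral S x)
    (heq : p * x = ∑ ij : Fin p × Fin p with (ij.1 : ℕ) + ij.2 < p,
      algebraMap S K (s ij) * (π ^ (ij.1 : ℕ) * ρ ^ (ij.2 : ℕ)))
    (ij : Fin p × Fin p) (hij : (ij.1 : ℕ) + ij.2 < p) : (p : S) ∣ s ij := by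
  classical
  obtain ⟨O, hO, hlt, hvu⟩ := aux_valuation hinj hpS
  rw [map_natCast] at hlt
  set v := O.valuation with hv
  have hv1 : ∀ s : S, v (algebraMap S K s) ≤ 1 := fun s => (O.valuation_le_one_iff _).2 (hO s)
  have hvi : ∀ y : K, IsIntegral S y → v y ≤ 1 := by
    intro y hy
    let j : S →+* O := (algebraMap S K).codRestrict O.toSubring hO
    have hy' : IsIntegral O y := hy.map_of_comp_eq j (RingHom.id K) rfl
    obtain ⟨z, rfl⟩ := IsIntegrallyClosed.isIntegral_iff.1 hy'
    exact (O.valuation_le_one_iff _).2 z.2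
  have hpK : (p : K) ≠ 0 := by
    rw [← map_natCast (algebraMap S K), Ne, map_eq_zero_iff _ hinj]
    exact hpS.ne_zero
  -- valuation of roots
  have hroot : ∀ (y z : K) (c h : S), IsIntegral S y → IsIntegral S z → ¬ (p : S) ∣ c →
      y ^ p = p * (algebraMap S K c - algebraMap S K h ^ (p - 1) * y - y ^ 2 * z) →
      v y < 1 ∧ v (algebraMap S K c - algebraMap S K h ^ (p - 1) * y - y ^ 2 * z) = 1 ∧
      v (p : K) = v y ^ p := by
    intro y z c h hy hz hc hyz
    have hlt1 : v y < 1 := by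
      by_contra hcon
      have h1 : 1 ≤ v y ^ p := one_le_pow_of_one_le' (not_lt.1 hcon) p
      rw [← map_pow, hyz, map_mul] at h1
      refine absurd (lt_of_le_of_lt (mul_le_of_le_one_right' ?_) hlt) (not_lt.2 h1)
      apply Valuation.map_sub_le
      · apply Valuation.map_sub_le _ (hv1 c)
        rw [map_mul, map_pow]
        exact mul_le_one' (pow_le_one' (hv1 h) _) (hvi y hy)
      · rw [map_mul, map_pow]
        exact mul_le_one' (pow_le_one' (hvi y hy) _) (hvi z hz)
    have hA : v (algebraMap S K c - algebraMap S K h ^ (p - 1) * y - y ^ 2 * z) = 1 := by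
      rw [sub_sub, Valuation.map_sub_eq_of_lt_left]
      · exact hvu c hc
      · rw [hvu c hc, show algebraMap S K h ^ (p - 1) * y + y ^ 2 * z =
          y * (algebraMap S K h ^ (p - 1) + y * z) by ring, map_mul]
        refine lt_of_le_of_lt (mul_le_of_le_one_right' ?_) hlt1
        apply Valuation.map_add_le
        · rw [map_pow]; exact pow_le_one' (hv1 h) _
        · rw [map_mul]; exact mul_le_one' hlt1.le (hvi z hz)
    refine ⟨hlt1, hA, ?_⟩
    rw [← map_pow, hyz, map_mul, hA, mul_one]
  obtain ⟨hπ1, hvA, hπp⟩ := hroot π u a h₁ hπi hui ha hπ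
  obtain ⟨hρ1, hvB, hρp⟩ := hroot ρ w b h₂ hρi hwi hb hρ
  have hπne : π ≠ 0 := by
    rintro rfl
    rw [map_zero, zero_pow hp.ne_zero, map_eq_zero] at hπp
    exact hpK hπp
  have hπ0 : 0 < v π := (Valuation.pos_iff _).2 hπne
  have hρπ : v ρ = v π := (pow_left_inj₀ zero_le zero_le hp.ne_zero).1 (hρp.symm.trans hπp)
  set t := ρ / π with ht
  have htπ : t * π = ρ := by rw [ht]; field_simp
  have hvt : v t = 1 := by rw [ht, map_div₀, hρπ, div_self hπ0.ne']
  by_contra hcon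
  have hex : ∃ m, ∃ ij : Fin p × Fin p, (ij.1 : ℕ) + ij.2 = m ∧ m < p ∧ ¬ (p : S) ∣ s ij :=
    ⟨_, ij, rfl, hij, hcon⟩
  let m := Nat.find hex
  obtain ⟨ij0, h0m, hmp, h0⟩ : ∃ ij : Fin p × Fin p, (ij.1 : ℕ) + ij.2 = m ∧ m < p ∧
    ¬ (p : S) ∣ s ij := Nat.find_spec hex
  have hmin : ∀ ij : Fin p × Fin p, (ij.1 : ℕ) + ij.2 < m → (p : S) ∣ s ij := by
    intro ij h
    by_contra hc
    exact Nat.find_min hex h ⟨ij, rfl, by omega, hc⟩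
  let Q : S[X] := ∑ ij : Fin p × Fin p with (ij.1 : ℕ) + ij.2 = m, monomial (ij.2 : ℕ) (s ij)
  have hQd : Q.natDegree < p := by
    refine lt_of_le_of_lt (natDegree_sum_le_of_forall_le _ _ (n := m) ?_) hmp
    intro ij h
    rw [Finset.mem_filter] at h
    exact (natDegree_monomial_le _).trans (by omega)
  have hQc : Q.coeff (ij0.2 : ℕ) = s ij0 := by
    simp only [Q, finsetSum_coeff, coeff_monomial]
    rw [Finset.sum_eq_single ij0]
    · simp
    · intro ij h hne
      rw [if_neg]
      intro h2
      apply hne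
      rw [Finset.mem_filter] at h
      ext
      · omega
      · exact h2
    · intro h
      exact (h (by rw [Finset.mem_filter]; exact ⟨Finset.mem_univ _, h0m⟩)).elim
  have hQt := aux_Qt O hp hp3 hpS hv1 hvu (hvi u hui) (hvi w hwi) hvt.le ha hb hπ0 hπ1 hπp
    (A := algebraMap S K a - algebraMap S K h₁ ^ (p - 1) * π - π ^ 2 * u)
    (B := algebraMap S K b - algebraMap S K h₂ ^ (p - 1) * ρ - ρ ^ 2 * w)
    rfl (by rw [htπ]) hvA (by
      apply mul_left_cancel₀ hpK
      rw [← mul_assoc, ← hπ, ← hρ, ← mul_pow, mul_comm, htπ]) hE Q hQd ⟨_, by rw [hQc]; exact h0⟩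
  have hQe : aeval t Q * π ^ m = ∑ ij : Fin p × Fin p with (ij.1 : ℕ) + ij.2 = m,
      algebraMap S K (s ij) * (π ^ (ij.1 : ℕ) * ρ ^ (ij.2 : ℕ)) := by
    simp only [Q, map_sum, aeval_monomial, Finset.sum_mul]
    refine Finset.sum_congr rfl fun ij h => ?_
    rw [Finset.mem_filter] at h
    rw [← h.2, ← htπ]
    ring
  have hsplit := Finset.sum_filter_add_sum_filter_not
    (Finset.univ.filter fun ij : Fin p × Fin p => (ij.1 : ℕ) + ij.2 < p)
    (fun ij => (ij.1 : ℕ) + ij.2 = m)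
    (fun ij => algebraMap S K (s ij) * (π ^ (ij.1 : ℕ) * ρ ^ (ij.2 : ℕ)))
  have hff : (Finset.univ.filter fun ij : Fin p × Fin p => (ij.1 : ℕ) + ij.2 < p).filter
      (fun ij => (ij.1 : ℕ) + ij.2 = m) =
      Finset.univ.filter fun ij : Fin p × Fin p => (ij.1 : ℕ) + ij.2 = m := by
    ext ij
    simp only [Finset.mem_filter, Finset.mem_univ, true_and]
    constructor
    · exact fun h => h.2
    · exact fun h => ⟨by omega, h⟩
  rw [hff, ← hQe, ← heq] at hsplit
  have hanti : ∀ i j : ℕ, i ≤ j → v π ^ j ≤ v π ^ i := fun i j h =>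
    pow_le_pow_right_of_le_one' hπ1.le h
  have hbound : v (aeval t Q * π ^ m) ≤ v π ^ (m + 1) := by
    rw [eq_sub_of_add_eq hsplit]
    apply Valuation.map_sub_le
    · rw [map_mul, hπp]
      exact (mul_le_of_le_one_right' (hvi x hx)).trans (hanti _ _ hmp)
    · apply Valuation.map_sum_le
      intro ij h
      simp only [Finset.mem_filter, Finset.mem_univ, true_and] at h
      rw [map_mul, map_mul, map_pow, map_pow, hρπ, ← pow_add]
      rcases lt_or_gt_of_ne h.2 with h2 | h2
      · obtain ⟨c, hc⟩ := hmin ij h2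
        rw [hc, map_mul, map_mul, map_natCast, hπp]
        refine (mul_le_of_le_one_right' (pow_le_one' hπ1.le _)).trans ?_
        exact (mul_le_of_le_one_right' (hv1 c)).trans (hanti _ _ hmp)
      · exact (mul_le_of_le_one_left' (hv1 _)).trans (hanti _ _ h2)
  rw [map_mul, map_pow, pow_succ, mul_comm] at hbound
  have := le_of_mul_le_mul_left hbound (pow_pos hπ0 m)
  exact absurd hQt (not_lt.2 this)

theorem aux_shift {T K : Type*} [CommRing T] [Field K] [Algebra T K] (x y : K) (c d : T) :
    Algebra.adjoin T ({x - algebraMap T K c, y - algebraMap T K d} : Set K) =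
      Algebra.adjoin T {x, y} := by
  apply le_antisymm
  · rw [Algebra.adjoin_le_iff]
    rintro z (rfl | rfl)
    · exact sub_mem (Algebra.subset_adjoin (by simp)) (Subalgebra.algebraMap_mem _ _)
    · exact sub_mem (Algebra.subset_adjoin (by simp)) (Subalgebra.algebraMap_mem _ _)
  · rw [Algebra.adjoin_le_iff]
    have h : ∀ (z : K) (e : T), z - algebraMap T K e ∈
        Algebra.adjoin T ({x - algebraMap T K c, y - algebraMap T K d} : Set K) →
        z ∈ Algebra.adjoin T ({x - algebraMap T K c, y - algebraMap T K d} : Set K) := by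
      intro z e hz
      have := add_mem hz (Subalgebra.algebraMap_mem _ e)
      rwa [sub_add_cancel] at this
    rintro z (rfl | rfl)
    · exact h _ c (Algebra.subset_adjoin (by simp))
    · exact h _ d (Algebra.subset_adjoin (by simp))

open Polynomial in
theorem aux_P {T K : Type*} [CommRing T] [Nontrivial T] [Field K] [Algebra T K] {p : ℕ}
    (hp : p ≠ 0) (x : K) (f h : T) (hx : x ^ p = algebraMap T K f) :
    ∃ P : T[X], P.Monic ∧ P.natDegree = p ∧ aeval (x - algebraMap T K h) P = 0 := by
  have hm : ((X + C h : T[X]) ^ p).Monic := (monic_X_add_C h).pow p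
  have hd : ((X + C h : T[X]) ^ p).natDegree = p := by
    rw [(monic_X_add_C h).natDegree_pow, natDegree_X_add_C, mul_one]
  refine ⟨(X + C h) ^ p - C f, ?_, ?_, ?_⟩
  · apply hm.sub_of_left
    rw [degree_eq_natDegree hm.ne_zero, hd]
    exact lt_of_le_of_lt degree_C_le (by exact_mod_cast Nat.pos_of_ne_zero hp)
  · rw [natDegree_sub_C, hd]
  · simp [hx]

theorem aux_step {S K : Type*} [CommRing S] [Field K] [Algebra S K] {p : ℕ} (hp : p.Prime)
    (hp3 : 3 ≤ p) {f h a : S} {ω : K} (hω : ω ^ p = algebraMap S K f)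
    (hf : f = h ^ p + a * (p : S)) :
    ∃ u ∈ Algebra.adjoin S ({ω} : Set K), (ω - algebraMap S K h) ^ p =
      p * (algebraMap S K a - algebraMap S K h ^ (p - 1) * (ω - algebraMap S K h) -
        (ω - algebraMap S K h) ^ 2 * u) := by
  have hm : ω - algebraMap S K h ∈ Algebra.adjoin S ({ω} : Set K) :=
    sub_mem (Algebra.subset_adjoin rfl) (Subalgebra.algebraMap_mem _ _)
  obtain ⟨r, hr⟩ := aux_binom hp hp3 (⟨_, hm⟩ : Algebra.adjoin S ({ω} : Set K))
    (algebraMap S _ h)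
  refine ⟨r, r.2, ?_⟩
  have h1 := congrArg (Algebra.adjoin S ({ω} : Set K)).val hr
  simp only [map_add, map_mul, map_pow, map_natCast, AlgHom.commutes] at h1
  change (ω - algebraMap S K h + algebraMap S K h) ^ p = (ω - algebraMap S K h) ^ p + _ +
    _ * ((ω - algebraMap S K h) * _ + (ω - algebraMap S K h) ^ 2 * (r : K)) at h1
  rw [sub_add_cancel, hω, hf, map_add, map_pow, map_mul, map_natCast] at h1
  linear_combination -h1

theorem stmt1
    {S : Type*} [CommRing S] [IsDomain S] [IsNoetherianRing S] [IsIntegrallyClosed S]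
    {L : Type*} [Field L] [CharZero L] [Algebra S L] [IsFractionRing S L]
    {K : Type*} [Field K] [Algebra L K] [Algebra S K] [IsScalarTower S L K]
    {p : ℕ} (hp : p.Prime) (hp3 : 3 ≤ p) (hpS : Prime ((p : ℕ) : S))
    (hSmodp : IsIntegrallyClosed (S ⧸ Ideal.span {((p : ℕ) : S)}))
    {f g h₁ h₂ a b : S} (hf : f = h₁ ^ p + a * (p : S)) (hg : g = h₂ ^ p + b * (p : S))
    (hfg : (¬IsUnit f ∧ ¬IsUnit g ∧ PaperSquarefree f ∧ PaperSquarefree g ∧ SatisfiesA1 f g) ∨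
      (IsUnit f ∧ IsUnit g ∧ (∀ x : S, x ^ p ≠ f) ∧ (∀ x : S, x ^ p ≠ g)))
    {ω μ : K} (hω : ω ^ p = algebraMap S K f) (hμ : μ ^ p = algebraMap S K g)
    (hKgen : Algebra.adjoin L ({ω, μ} : Set K) = ⊤)
    (hdeg : Module.finrank L K = p ^ 2)
    (hicω : IsIntegrallyClosed (Algebra.adjoin S ({ω} : Set K)))
    (hicμ : IsIntegrallyClosed (Algebra.adjoin S ({μ} : Set K)))
    (hnotin : ∀ i : ℕ, 1 ≤ i → i ≤ p - 1 → ¬∃ x y : S, f * g ^ i = x ^ p + y * (p : S) ^ 2) :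
    Module.Free S (integralClosure S K) ∧
      Module.finrank S (integralClosure S K) = p ^ 2 := by
  classical
  have hinj : Function.Injective (algebraMap S K) := by
    rw [IsScalarTower.algebraMap_eq S L K]
    exact (algebraMap L K).injective.comp (IsFractionRing.injective S L)
  have hinjL : Function.Injective (algebraMap S L) := IsFractionRing.injective S L
  have hpL : (p : L) ≠ 0 := Nat.cast_ne_zero.2 hp.ne_zero
  have hpK : (p : K) ≠ 0 := by
    rw [← map_natCast (algebraMap L K), Ne, map_eq_zero]; exact hpL
  obtain ⟨u, huB, hπ⟩ := aux_step hp hp3 hω hf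
  obtain ⟨w, hwB, hρ⟩ := aux_step hp hp3 hμ hg
  have hωi : IsIntegral S ω := IsIntegral.of_pow hp.pos (by rw [hω]; exact isIntegral_algebraMap)
  have hμi : IsIntegral S μ := IsIntegral.of_pow hp.pos (by rw [hμ]; exact isIntegral_algebraMap)
  have hadi : ∀ z : K, IsIntegral S z → ∀ y ∈ Algebra.adjoin S ({z} : Set K), IsIntegral S y := by
    intro z hz y hy
    have : Algebra.adjoin S ({z} : Set K) ≤ integralClosure S K := by
      rw [Algebra.adjoin_le_iff]
      rintro _ rfl
      exact hz
    exact this hy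
  have hui := hadi ω hωi u huB
  have hwi := hadi μ hμi w hwB
  have hπi : IsIntegral S (ω - algebraMap S K h₁) := hωi.sub isIntegral_algebraMap
  have hρi : IsIntegral S (μ - algebraMap S K h₂) := hμi.sub isIntegral_algebraMap
  -- the basis over L
  have hspanT : Subalgebra.toSubmodule (Algebra.adjoin S ({ω, μ} : Set K)) =
      Submodule.span S (Set.range fun ij : Fin p × Fin p =>
        (ω - algebraMap S K h₁) ^ (ij.1 : ℕ) * (μ - algebraMap S K h₂) ^ (ij.2 : ℕ)) := by
    obtain ⟨P, hPm, hPd, hP⟩ := aux_P hp.ne_zero ω f h₁ hω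
    obtain ⟨Q, hQm, hQd, hQ⟩ := aux_P hp.ne_zero μ g h₂ hμ
    rw [← aux_span _ _ P Q hPm hQm hPd hQd hP hQ, aux_shift]
  have hspanL : ⊤ ≤ Submodule.span L (Set.range fun ij : Fin p × Fin p =>
        (ω - algebraMap S K h₁) ^ (ij.1 : ℕ) * (μ - algebraMap S K h₂) ^ (ij.2 : ℕ)) := by
    obtain ⟨P, hPm, hPd, hP⟩ := aux_P hp.ne_zero ω (algebraMap S L f) (algebraMap S L h₁)
      (by rw [hω, ← IsScalarTower.algebraMap_apply])
    obtain ⟨Q, hQm, hQd, hQ⟩ := aux_P hp.ne_zero μ (algebraMap S L g) (algebraMap S L h₂)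
      (by rw [hμ, ← IsScalarTower.algebraMap_apply])
    have h := aux_span _ _ P Q hPm hQm hPd hQd hP hQ
    rw [aux_shift, hKgen, ← IsScalarTower.algebraMap_apply, ← IsScalarTower.algebraMap_apply] at h
    rw [← h]
    exact le_of_eq Algebra.top_toSubmodule.symm
  have hpBω : ω - algebraMap S K h₁ ∈ Algebra.adjoin S ({ω} : Set K) :=
    sub_mem (Algebra.subset_adjoin rfl) (Subalgebra.algebraMap_mem _ _)
  have hpBμ : μ - algebraMap S K h₂ ∈ Algebra.adjoin S ({μ} : Set K) :=
    sub_mem (Algebra.subset_adjoin rfl) (Subalgebra.algebraMap_mem _ _)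
  generalize ω - algebraMap S K h₁ = π at *
  generalize μ - algebraMap S K h₂ = ρ at *
  let bas : Module.Basis (Fin p × Fin p) L K :=
    basisOfTopLeSpanOfCardEqFinrank _ hspanL (by rw [hdeg]; simp [pow_two])
  have hbas : ∀ ij : Fin p × Fin p, bas ij = π ^ (ij.1 : ℕ) * ρ ^ (ij.2 : ℕ) := by
    intro ij
    simp [bas]
  have hrange : (fun ij : Fin p × Fin p => π ^ (ij.1 : ℕ) * ρ ^ (ij.2 : ℕ)) = bas :=
    funext fun ij => (hbas ij).symm
  rw [hrange] at hspanT
  have hcoord : ∀ x ∈ Algebra.adjoin S ({ω, μ} : Set K), ∀ ij,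
      bas.repr x ij ∈ Set.range (algebraMap S L) := by
    intro x hx
    rw [← Subalgebra.mem_toSubmodule, hspanT] at hx
    exact (bas.mem_span_iff_repr_mem S x).1 hx
  have hpinv : ∀ ij, (p : L)⁻¹ • bas ij ∉ Algebra.adjoin S ({ω, μ} : Set K) := by
    intro ij h
    obtain ⟨s, hs⟩ := hcoord _ h ij
    rw [map_smul, Module.Basis.repr_self, Finsupp.smul_apply, Finsupp.single_eq_same,
      smul_eq_mul, mul_one] at hs
    apply hpS.not_unit
    refine IsUnit.of_mul_eq_one s (hinjL ?_)
    rw [map_mul, hs, map_natCast, map_one, mul_inv_cancel₀ hpL]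
  have hsm : ∀ z : K, (p : L)⁻¹ • z = z / p := by
    intro z
    rw [Algebra.smul_def, map_inv₀, map_natCast, div_eq_mul_inv, mul_comm]
  have hπne : π ≠ 0 := by
    have h := bas.ne_zero (⟨1, by omega⟩, ⟨0, by omega⟩)
    rw [hbas] at h
    simpa using h
  have hρne : ρ ≠ 0 := by
    have h := bas.ne_zero (⟨0, by omega⟩, ⟨1, by omega⟩)
    rw [hbas] at h
    simpa using h
  have ha : ¬ (p : S) ∣ a := by
    intro h
    have h1 := aux_pa _ hicω hp hp3 hpK hpBω huB hπ hπne h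
    apply hpinv (⟨p - 1, by omega⟩, ⟨0, by omega⟩)
    rw [hsm, hbas]
    simp only [pow_zero, mul_one]
    exact Algebra.adjoin_mono (by simp) h1
  have hb : ¬ (p : S) ∣ b := by
    intro h
    have h1 := aux_pa _ hicμ hp hp3 hpK hpBμ hwB hρ hρne h
    apply hpinv (⟨0, by omega⟩, ⟨p - 1, by omega⟩)
    rw [hsm, hbas]
    simp only [pow_zero, one_mul]
    exact Algebra.adjoin_mono (by simp) h1
  have hf0 : f ≠ 0 := by
    rintro rfl
    have h1 : (p : S) ∣ h₁ ^ p := ⟨-a, by linear_combination -hf⟩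
    obtain ⟨c, rfl⟩ := hpS.dvd_of_dvd_pow h1
    apply ha
    obtain ⟨n, hn⟩ : ∃ n, p = n + 2 := ⟨p - 2, by omega⟩
    refine ⟨- (p : S) ^ n * c ^ p, ?_⟩
    apply mul_left_cancel₀ hpS.ne_zero
    have h2 : ((p : S) * c) ^ p = (p : S) ^ n * p ^ 2 * c ^ p := by
      rw [mul_pow, ← pow_add, ← hn]
    rw [h2] at hf
    linear_combination -hf
  -- p times the coordinates of an integral element lie in S
  have hpc : ∀ x : K, IsIntegral S x → ∀ ij, ∃ s, algebraMap S L s = p * bas.repr x ij := by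
    intro x hx ij
    have hgx := aux_pg hp hω hμ hKgen hdeg hicω x hx
    have hfx := aux_pg hp hμ hω (by rw [Set.pair_comm]; exact hKgen) hdeg hicμ x hx
    rw [Set.pair_comm] at hfx
    have hgc := hcoord _ hgx ij
    have hfc := hcoord _ hfx ij
    have hrw : ∀ e : S, (p : K) * algebraMap S K e * x = ((p : L) * algebraMap S L e) • x := by
      intro e
      rw [Algebra.smul_def, map_mul, map_natCast, ← IsScalarTower.algebraMap_apply]
    rw [hrw, map_smul, Finsupp.smul_apply, smul_eq_mul] at hgc hfc
    rcases hfg with ⟨-, -, -, -, h⟩ | ⟨hfu, -⟩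
    · refine aux_A1 hf0 h _ ?_ ?_
      · obtain ⟨s, hs⟩ := hfc
        exact ⟨s, by rw [hs]; ring⟩
      · obtain ⟨s, hs⟩ := hgc
        exact ⟨s, by rw [hs]; ring⟩
    · obtain ⟨s, hs⟩ := hfc
      obtain ⟨e, he⟩ := hfu.exists_right_inv
      have he' := congrArg (algebraMap S L) he
      rw [map_mul, map_one] at he'
      refine ⟨s * e, ?_⟩
      rw [map_mul, hs]
      linear_combination (p : L) * bas.repr x ij * he'
  -- the new basis
  let c : Fin p × Fin p → L := fun ij => if (ij.1 : ℕ) + ij.2 < p then 1 else (p : L)⁻¹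
  have hcu : ∀ ij, IsUnit (c ij) := by
    intro ij
    simp only [c]
    split_ifs
    · exact isUnit_one
    · exact (inv_ne_zero hpL).isUnit
  let e : Module.Basis (Fin p × Fin p) L K := bas.isUnitSMul hcu
  have he : ∀ ij, e ij = c ij • bas ij := fun ij => Module.Basis.isUnitSMul_apply hcu ij
  have hXi : IsIntegral S (π ^ p / p) := by
    rw [hπ, mul_div_cancel_left₀ _ hpK]
    exact (isIntegral_algebraMap.sub ((isIntegral_algebraMap.pow _).mul hπi)).sub
      ((hπi.pow 2).mul hui)
  have hYi : IsIntegral S (ρ ^ p / p) := by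
    rw [hρ, mul_div_cancel_left₀ _ hpK]
    exact (isIntegral_algebraMap.sub ((isIntegral_algebraMap.pow _).mul hρi)).sub
      ((hρi.pow 2).mul hwi)
  have hei : ∀ ij, IsIntegral S (e ij) := by
    intro ij
    rw [he, hbas]
    simp only [c]
    split_ifs with h
    · rw [one_smul]
      exact (hπi.pow _).mul (hρi.pow _)
    · rw [hsm]
      obtain ⟨⟨i, hi⟩, ⟨j, hj⟩⟩ := ij
      simp only at h ⊢
      obtain ⟨k, hk⟩ : ∃ k, i + j = p + k := ⟨i + j - p, by omega⟩
      obtain ⟨l, hl⟩ : ∃ l, p = i + l := ⟨p - i, by omega⟩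
      have hjl : j = l + k := by omega
      refine IsIntegral.of_pow hp.pos ?_
      have h2 : (π ^ i * ρ ^ j / p) ^ p = (π ^ p / p) ^ i * (ρ ^ p / p) ^ l * (ρ ^ p) ^ k := by
        have h3 : (p : K) ^ p = (p : K) ^ i * (p : K) ^ l := by rw [← pow_add, ← hl]
        rw [div_pow, h3, div_pow, div_pow, mul_pow, hjl]
        field_simp
        ring
      rw [h2]
      exact ((hXi.pow _).mul (hYi.pow _)).mul ((hρi.pow _).pow _)
  have hE := aux_hE hp hp3 hpS hf hg hnotin
  have hmain : Subalgebra.toSubmodule (integralClosure S K) = Submodule.span S (Set.range e) := by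
    apply le_antisymm
    · intro x hx
      have hx : IsIntegral S x := hx
      choose s hs using hpc x hx
      have hsK : ∀ ij, algebraMap S K (s ij) * bas ij = (p : K) * (bas.repr x ij • bas ij) := by
        intro ij
        rw [IsScalarTower.algebraMap_apply S L K, hs, map_mul, map_natCast, Algebra.smul_def,
          mul_assoc]
      have hsum : (p : K) * x = ∑ ij, algebraMap S K (s ij) * bas ij := by
        conv_lhs => rw [← bas.sum_repr x, Finset.mul_sum]
        exact Finset.sum_congr rfl fun ij _ => (hsK ij).symm
      let y : K := ∑ ij : Fin p × Fin p with ¬ ((ij.1 : ℕ) + ij.2 < p),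
        algebraMap S K (s ij) * e ij
      have hyi : IsIntegral S y := IsIntegral.sum _ fun ij _ => isIntegral_algebraMap.mul (hei ij)
      have hpy : (p : K) * y = ∑ ij : Fin p × Fin p with ¬ ((ij.1 : ℕ) + ij.2 < p),
          algebraMap S K (s ij) * bas ij := by
        rw [Finset.mul_sum]
        refine Finset.sum_congr rfl fun ij h => ?_
        rw [Finset.mem_filter] at h
        rw [he]
        simp only [c]
        rw [if_neg h.2, hsm]
        field_simp
      have hdiv := aux_val_main hinj hp hp3 hpS hπi hρi hui hwi hπ hρ ha hb hE s (x - y)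
        (hx.sub hyi) (by
          rw [mul_sub, hsum, hpy, ← Finset.sum_filter_add_sum_filter_not Finset.univ
            (fun ij : Fin p × Fin p => (ij.1 : ℕ) + ij.2 < p), add_sub_cancel_right]
          exact Finset.sum_congr rfl fun ij _ => by rw [hbas])
      rw [← bas.sum_repr x]
      refine sum_mem fun ij _ => ?_
      by_cases h : (ij.1 : ℕ) + ij.2 < p
      · obtain ⟨d, hd⟩ := hdiv ij h
        have h1 : bas.repr x ij • bas ij = d • e ij := by
          apply mul_left_cancel₀ hpK
          rw [← hsK, hd, he]
          simp only [c]
          rw [if_pos h, one_smul, Algebra.smul_def, map_mul, map_natCast, mul_assoc]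
        rw [h1]
        exact Submodule.smul_mem _ _ (Submodule.subset_span ⟨ij, rfl⟩)
      · have h1 : bas.repr x ij • bas ij = s ij • e ij := by
          apply mul_left_cancel₀ hpK
          rw [← hsK, he]
          simp only [c]
          rw [if_neg h, hsm, Algebra.smul_def]
          field_simp
        rw [h1]
        exact Submodule.smul_mem _ _ (Submodule.subset_span ⟨ij, rfl⟩)
    · rw [Submodule.span_le]
      rintro _ ⟨ij, rfl⟩
      exact hei ij
  have hli : LinearIndependent S e := e.linearIndependent.restrict_scalars' S
  let fb : Module.Basis (Fin p × Fin p) S (integralClosure S K) :=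
    (Module.Basis.span hli).map (LinearEquiv.ofEq _ _ hmain.symm)
  have : Nontrivial S := inferInstance
  refine ⟨Module.Free.of_basis fb, ?_⟩
  rw [Module.finrank_eq_card_basis fb]
  simp [pow_two]
end
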